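/- arXiv:1711.00211 — 5 statements merged into one kernel-verified Lean document; each statement's English description precedes it below -/
import Mathlib

section
/- Let 0 ≤ ε < 10⁻¹⁴ and let x_1, …, x_k be unit vectors in ℝ⁴ with k ≥ 120 such that the spherical distance δ(x_i, x_j) ≥ π/5 − 2ε for all i ≠ j. Then k = 120, and there exist unit vectors w_1, …, w_120 in ℝ⁴ with δ(w_i, w_j) ≥ π/5 for all i ≠ j (these are the vertices of a regular 600-cell inscribed in the unit sphere) such that δ(x_i, w_i) ≤ c·ε for all i, where c = 90¹¹⁶ · 10⁴ · 10¹². -/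
open scoped RealInnerProductSpace
namespace SHC
open Polynomial

/-- Chebyshev polynomials of the second kind, as functions. -/
def chebU {R : Type*} [CommRing R] : ℕ → R → R
  | 0, _ => 1
  | 1, t => 2 * t
  | (n + 2), t => 2 * t * chebU (n + 1) t - chebU n t

/-- row polynomial of the symmetric power -/
noncomputable def rowP (l m : ℕ) (a b c d : ℂ) : ℂ[X] :=
  (C a * X + C b) ^ m * (C c * X + C d) ^ (l - m)

/-- homogenised evaluation -/
noncomputable def homE (l : ℕ) (p : ℂ[X]) (u v : ℂ[X]) : ℂ[X] :=
  ∑ n ∈ Finset.range (l + 1), C (p.coeff n) * u ^ n * v ^ (l - n)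

lemma homE_lin (l : ℕ) (p : ℂ[X]) (hp : p.natDegree ≤ l) (a b : ℂ) (u v : ℂ[X]) :
    homE (l + 1) ((C a * X + C b) * p) u v = (C a * u + C b * v) * homE l p u v := by
  have h1 : p.coeff (l + 1) = 0 := coeff_eq_zero_of_natDegree_lt (by omega)
  have key : ∀ n, ((C a * X + C b) * p).coeff (n + 1) = a * p.coeff n + b * p.coeff (n + 1) := by
    intro n
    rw [add_mul, coeff_add, mul_assoc, coeff_C_mul, coeff_C_mul, coeff_X_mul]
  have key0 : ((C a * X + C b) * p).coeff 0 = b * p.coeff 0 := by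
    rw [add_mul, coeff_add, mul_assoc, coeff_C_mul, coeff_C_mul, coeff_X_mul_zero]; simp
  unfold homE
  rw [Finset.sum_range_succ', key0]
  have h2 : ∑ n ∈ Finset.range (l + 1), C (p.coeff n) * u ^ n * v ^ (l + 1 - n)
      = v * ∑ n ∈ Finset.range (l + 1), C (p.coeff n) * u ^ n * v ^ (l - n) := by
    rw [Finset.mul_sum]
    refine Finset.sum_congr rfl fun n hn => ?_
    have : l + 1 - n = (l - n) + 1 := by
      have := Finset.mem_range.1 hn; omega
    rw [this, pow_succ]; ring
  have h3 : ∑ n ∈ Finset.range (l + 1), C (p.coeff (n+1)) * u ^ (n+1) * v ^ (l + 1 - (n+1))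
      + C (p.coeff 0) * u ^ 0 * v ^ (l + 1 - 0)
      = ∑ n ∈ Finset.range (l + 1), C (p.coeff n) * u ^ n * v ^ (l + 1 - n) := by
    rw [← Finset.sum_range_succ' (fun n => C (p.coeff n) * u ^ n * v ^ (l + 1 - n)) (l+1),
      Finset.sum_range_succ _ (l+1), h1]
    simp
  rw [add_mul (C a * u), mul_assoc (C b) v, ← h2, ← h3, mul_add, ← add_assoc, Finset.mul_sum, Finset.mul_sum,
    ← Finset.sum_add_distrib]
  refine congrArg₂ (· + ·) ?_ ?_
  · refine Finset.sum_congr rfl fun n hn => ?_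
    rw [key]
    have : l + 1 - (n + 1) = l - n := by omega
    rw [this, C_add, C_mul, C_mul, pow_succ]; ring
  · rw [C_mul]; ring

lemma natDegree_lin_pow (a b : ℂ) (m : ℕ) : ((C a * X + C b) ^ m).natDegree ≤ m := by
  refine natDegree_pow_le.trans ?_
  have := natDegree_linear_le (a := a) (b := b)
  nlinarith

lemma homE_pow (m : ℕ) (a b : ℂ) (u v : ℂ[X]) :
    homE m ((C a * X + C b) ^ m) u v = (C a * u + C b * v) ^ m := by
  induction m with
  | zero => simp [homE]
  | succ m ih => rw [pow_succ', homE_lin _ _ (natDegree_lin_pow _ _ _), ih, pow_succ']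

lemma homE_row (l m : ℕ) (h : m ≤ l) (a b c d : ℂ) (u v : ℂ[X]) :
    homE l (rowP l m a b c d) u v = (C a * u + C b * v) ^ m * (C c * u + C d * v) ^ (l - m) := by
  obtain ⟨k, rfl⟩ := Nat.exists_eq_add_of_le h
  unfold rowP
  simp only [Nat.add_sub_cancel_left]
  clear h
  induction m with
  | zero => simp only [zero_add, pow_zero, one_mul]; exact homE_pow k c d u v
  | succ m ih =>
    rw [show m + 1 + k = (m + k) + 1 by ring, pow_succ', mul_assoc, homE_lin, ih, pow_succ', mul_assoc]
    refine natDegree_mul_le.trans ?_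
    have := natDegree_lin_pow a b m
    have := natDegree_lin_pow c d k
    omega

/-- symmetric power representation -/
noncomputable def symD (l : ℕ) (B : Matrix (Fin 2) (Fin 2) ℂ) : Matrix (Fin (l+1)) (Fin (l+1)) ℂ :=
  Matrix.of fun m n => (rowP l m (B 0 0) (B 0 1) (B 1 0) (B 1 1)).coeff n

lemma rowP_natDegree (l m : ℕ) (h : m ≤ l) (a b c d : ℂ) : (rowP l m a b c d).natDegree ≤ l := by
  unfold rowP
  refine natDegree_mul_le.trans ?_
  have := natDegree_lin_pow a b m
  have := natDegree_lin_pow c d (l - m)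
  omega

lemma symD_mul (l : ℕ) (A B : Matrix (Fin 2) (Fin 2) ℂ) : symD l (A * B) = symD l A * symD l B := by
  ext m n
  have h := homE_row l m (by omega) (A 0 0) (A 0 1) (A 1 0) (A 1 1)
    (C (B 0 0) * X + C (B 0 1)) (C (B 1 0) * X + C (B 1 1))
  have e : (C (A 0 0) * (C (B 0 0) * X + C (B 0 1)) + C (A 0 1) * (C (B 1 0) * X + C (B 1 1))) ^ (m:ℕ)
     * (C (A 1 0) * (C (B 0 0) * X + C (B 0 1)) + C (A 1 1) * (C (B 1 0) * X + C (B 1 1))) ^ (l - (m:ℕ))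
     = rowP l m ((A * B) 0 0) ((A * B) 0 1) ((A * B) 1 0) ((A * B) 1 1) := by
    unfold rowP
    simp only [Matrix.mul_apply, Fin.sum_univ_two, C_add, C_mul]
    congr 2 <;> ring
  rw [e] at h
  unfold symD
  rw [Matrix.of_apply, ← h, homE, Matrix.mul_apply, finsetSum_coeff, Finset.sum_range]
  refine Finset.sum_congr rfl fun k _ => ?_
  simp only [Matrix.of_apply]
  rw [mul_assoc, coeff_C_mul]
  rfl

lemma symD_upper (l : ℕ) (z c d : ℂ) :
    (symD l !![z, c; 0, d]).trace = ∑ m ∈ Finset.range (l+1), z ^ m * d ^ (l - m) := by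
  rw [Matrix.trace, Finset.sum_range]
  refine Finset.sum_congr rfl fun m _ => ?_
  simp only [symD, Matrix.diag_apply, Matrix.of_apply, rowP]
  simp only [Matrix.cons_val', Matrix.cons_val_zero, Matrix.cons_val_one, map_zero, zero_mul,
    zero_add, Matrix.cons_val_fin_one]
  rw [← C_pow, coeff_mul_C]
  congr 1
  have := coeff_pow_of_natDegree_le (p := C z * X + C c) (n := 1) (m := (m:ℕ)) natDegree_linear_le
  simpa using this

lemma symD_one (l : ℕ) : symD l 1 = 1 := by
  ext m n
  simp only [symD, Matrix.of_apply, rowP, Matrix.one_apply]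
  simp [coeff_X_pow, eq_comm, Fin.ext_iff]

lemma chebU_sum (z d : ℂ) (h : z * d = 1) (l : ℕ) :
    ∑ m ∈ Finset.range (l+1), z ^ m * d ^ (l - m) = chebU l ((z + d) / 2) := by
  have rec1 : ∀ l, ∑ m ∈ Finset.range (l+2), z ^ m * d ^ (l + 1 - m)
      = d * (∑ m ∈ Finset.range (l+1), z ^ m * d ^ (l - m)) + z ^ (l+1) := by
    intro l
    rw [Finset.sum_range_succ, Finset.mul_sum]
    congr 1
    · refine Finset.sum_congr rfl fun n hn => ?_
      have : l + 1 - n = (l - n) + 1 := by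
        have := Finset.mem_range.1 hn; omega
      rw [this, pow_succ]; ring
    · simp
  induction l using Nat.strong_induction_on with
  | _ l ih =>
    match l with
    | 0 => simp [chebU]
    | 1 => simp [chebU, Finset.sum_range_succ]; ring
    | (k+2) =>
      rw [chebU, ← ih (k+1) (by omega), ← ih k (by omega), rec1 (k+1), rec1 k]
      linear_combination (-(∑ m ∈ Finset.range (k+1), z ^ m * d ^ (k - m))) * h

lemma symD_trace (l : ℕ) (B : Matrix (Fin 2) (Fin 2) ℂ) (hB : B.det = 1) :
    (symD l B).trace = chebU l (B.trace / 2) := by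
  obtain ⟨z, hz⟩ : ∃ z : ℂ, z ^ 2 - B.trace * z + 1 = 0 := by
    obtain ⟨s, hs⟩ := IsAlgClosed.exists_pow_nat_eq (B.trace ^ 2 - 4) (n := 2) (by norm_num)
    exact ⟨(B.trace + s) / 2, by linear_combination hs / 4⟩
  rw [Matrix.det_fin_two] at hB
  rw [Matrix.trace_fin_two] at hz ⊢
  -- reduce to conjugation
  have conj : ∀ g g' : Matrix (Fin 2) (Fin 2) ℂ, ∀ c d : ℂ, g * g' = 1 → B * g = g * !![z, c; 0, d] →
      z * d = 1 → z + d = B 0 0 + B 1 1 → (symD l B).trace = chebU l ((B 0 0 + B 1 1) / 2) := by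
    intro g g' c d hg hBg hzd hs
    have : B = g * !![z, c; 0, d] * g' := by rw [← hBg, mul_assoc, hg, mul_one]
    have hg' : g' * g = 1 := mul_eq_one_comm.1 hg
    rw [← hs, this, symD_mul, Matrix.trace_mul_comm, symD_mul, ← mul_assoc, ← symD_mul, hg', symD_one, one_mul,
      symD_upper, chebU_sum _ _ hzd]
  set a := B 0 0
  set b := B 0 1
  set c := B 1 0
  set d := B 1 1
  have hBe : B = !![a, b; c, d] := by ext i j; fin_cases i <;> fin_cases j <;> rfl
  by_cases hb : b = 0
  · by_cases hc : c = 0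
    · -- diagonal
      rw [hb, zero_mul, sub_zero] at hB
      have : symD l B = symD l !![a, 0; 0, d] := by rw [hBe, hb, hc]
      rw [this, symD_upper, chebU_sum _ _ hB]
    · -- eigenvector (z - d, c)
      refine conj !![z - d, 1; c, 0] !![0, 1/c; 1, -(z-d)/c] 1 (a + d - z) ?_ ?_ ?_ ?_
      · ext i j; fin_cases i <;> fin_cases j <;> simp [Matrix.mul_apply] <;> field_simp <;> ring
      · rw [hBe]; ext i j; fin_cases i <;> fin_cases j <;> simp [Matrix.mul_apply] <;>
          first | ring1 | linear_combination (-1 : ℂ) * hz + (-1:ℂ) * hB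
      · linear_combination -hz
      · ring
  · -- eigenvector (b, z - a)
    refine conj !![b, 0; z - a, 1] !![1/b, 0; -(z-a)/b, 1] 1 (a + d - z) ?_ ?_ ?_ ?_
    · ext i j; fin_cases i <;> fin_cases j <;> simp [Matrix.mul_apply] <;> field_simp <;> ring
    · rw [hBe]; ext i j; fin_cases i <;> fin_cases j <;> simp [Matrix.mul_apply] <;>
          first | ring1 | linear_combination (-1 : ℂ) * hz + (-1:ℂ) * hB
    · linear_combination -hz
    · ring


lemma coeff_sum_CX (l : ℕ) (c : ℕ → ℂ) (m : ℕ) (hm : m ≤ l) :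
    (∑ n ∈ Finset.range (l+1), C (c n) * X ^ n).coeff m = c m := by
  rw [finsetSum_coeff]
  simp only [coeff_C_mul_X_pow]
  rw [Finset.sum_ite_eq, if_pos (Finset.mem_range.2 (by omega))]

lemma row_gen (l : ℕ) (a b c d x y : ℂ) :
    ∑ m ∈ Finset.range (l+1), ((l.choose m : ℂ) * (rowP l m a b c d).eval x) * y ^ m
      = (a * x * y + b * y + c * x + d) ^ l := by
  rw [show a * x * y + b * y + c * x + d = (a * x + b) * y + (c * x + d) by ring, add_pow]
  refine Finset.sum_congr rfl fun m _ => ?_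
  simp only [rowP, eval_mul, eval_pow, eval_add, eval_C, eval_X, mul_pow]
  ring

lemma rowP_eval (l m : ℕ) (h : m ≤ l) (a b c d x : ℂ) :
    (rowP l m a b c d).eval x = ∑ n ∈ Finset.range (l+1), (rowP l m a b c d).coeff n * x ^ n :=
  eval_eq_sum_range' (Nat.lt_succ_of_le (rowP_natDegree l m h a b c d)) x

lemma row_symm (l m n : ℕ) (hm : m ≤ l) (hn : n ≤ l) (a b c d : ℂ) :
    (l.choose m : ℂ) * (rowP l m a b c d).coeff n = (l.choose n : ℂ) * (rowP l n a c b d).coeff m := by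
  have h1 : ∀ x : ℂ, (l.choose m : ℂ) * (rowP l m a b c d).eval x =
      ∑ n ∈ Finset.range (l+1), (l.choose n : ℂ) * (rowP l n a c b d).coeff m * x ^ n := by
    intro x
    have : ∑ k ∈ Finset.range (l+1), C ((l.choose k : ℂ) * (rowP l k a b c d).eval x) * X ^ k
        = ∑ k ∈ Finset.range (l+1), C (∑ n ∈ Finset.range (l+1),
          (l.choose n : ℂ) * (rowP l n a c b d).coeff k * x ^ n) * X ^ k := by
      apply Polynomial.funext
      intro y
      rw [eval_finsetSum, eval_finsetSum]
      simp only [eval_mul, eval_C, eval_pow, eval_X]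
      rw [row_gen]
      have h := row_gen l a c b d y x
      rw [show a * x * y + b * y + c * x + d = a * y * x + c * x + b * y + d by ring, ← h]
      simp only [Finset.sum_mul]
      rw [Finset.sum_comm]
      refine Finset.sum_congr rfl fun n hn => ?_
      rw [rowP_eval l n (by have := Finset.mem_range.1 hn; omega), Finset.mul_sum, Finset.sum_mul]
      refine Finset.sum_congr rfl fun k _ => ?_
      ring
    have h2 := congrArg (fun p => coeff p m) this
    rwa [coeff_sum_CX l _ m hm, coeff_sum_CX l _ m hm] at h2
  have h3 : C (l.choose m : ℂ) * rowP l m a b c d =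
      ∑ n ∈ Finset.range (l+1), C ((l.choose n : ℂ) * (rowP l n a c b d).coeff m) * X ^ n := by
    apply Polynomial.funext
    intro x
    rw [eval_finsetSum, eval_mul, eval_C, h1]
    simp only [eval_mul, eval_C, eval_pow, eval_X]
  have h4 := congrArg (fun p => coeff p n) h3
  rwa [coeff_sum_CX l _ n hn, coeff_C_mul] at h4

lemma row_conj (l m n : ℕ) (a b c d : ℂ) :
    (rowP l m (star a) (star b) (star c) (star d)).coeff n = star ((rowP l m a b c d).coeff n) := by
  have : rowP l m (star a) (star b) (star c) (star d) = (rowP l m a b c d).map (starRingEnd ℂ) := by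
    simp [rowP, Polynomial.map_mul, Polynomial.map_pow]
  rw [this, coeff_map]; rfl

lemma symD_conj (l : ℕ) (B : Matrix (Fin 2) (Fin 2) ℂ) (m n : Fin (l+1)) :
    symD l B.conjTranspose m n =
      ((l.choose n : ℂ) / (l.choose m : ℂ)) * star (symD l B n m) := by
  have hm : (l.choose m : ℂ) ≠ 0 := by
    exact_mod_cast (Nat.choose_pos (by omega)).ne'
  have h := row_symm l m n (by omega) (by omega) (star (B 0 0)) (star (B 1 0)) (star (B 0 1)) (star (B 1 1))
  rw [row_conj l n m] at h
  simp only [symD, Matrix.of_apply, Matrix.conjTranspose_apply]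
  field_simp
  linear_combination h

lemma chebU_cast (l : ℕ) (t : ℝ) : ((chebU l t : ℝ) : ℂ) = chebU l (t : ℂ) := by
  induction l using Nat.strong_induction_on with
  | _ l ih =>
    match l with
    | 0 => simp [chebU]
    | 1 => simp [chebU]
    | (k+2) => simp [chebU, ih (k+1) (by omega), ih k (by omega)]

abbrev E4 := EuclideanSpace ℝ (Fin 4)

/-- the quaternion matrix of a vector -/
noncomputable def qm (x : E4) : Matrix (Fin 2) (Fin 2) ℂ :=
  !![⟨x 0, x 1⟩, ⟨x 2, x 3⟩; ⟨-x 2, x 3⟩, ⟨x 0, -x 1⟩]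

lemma inner4 (x y : E4) : ⟪x, y⟫ = x 0 * y 0 + x 1 * y 1 + x 2 * y 2 + x 3 * y 3 := by
  simp [PiLp.inner_apply, Fin.sum_univ_four]; ring

lemma qm_det (x y : E4) (hx : ‖x‖ = 1) (hy : ‖y‖ = 1) : ((qm x).conjTranspose * qm y).det = 1 := by
  have h1 : ⟪x, x⟫ = 1 := by rw [real_inner_self_eq_norm_sq, hx]; norm_num
  have h2 : ⟪y, y⟫ = 1 := by rw [real_inner_self_eq_norm_sq, hy]; norm_num
  rw [inner4] at h1 h2
  have d1 : ∀ v : E4, (v 0 * v 0 + v 1 * v 1 + v 2 * v 2 + v 3 * v 3 = 1) → (qm v).det = 1 := by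
    intro v hv
    rw [Matrix.det_fin_two]
    apply Complex.ext
    · simp [qm]; linarith
    · simp [qm]; ring
  rw [Matrix.det_mul, Matrix.det_conjTranspose, d1 x h1, d1 y h2]; simp

lemma qm_trace (x y : E4) : ((qm x).conjTranspose * qm y).trace / 2 = ((⟪x, y⟫ : ℝ) : ℂ) := by
  rw [Matrix.trace_fin_two, inner4]
  simp only [Matrix.mul_apply, Fin.sum_univ_two, Matrix.conjTranspose_apply]
  apply Complex.ext
  · simp [qm]; ring
  · simp [qm]; ring

theorem chebU_psd {ι : Type*} [Fintype ι] (x : ι → E4) (hx : ∀ i, ‖x i‖ = 1) (l : ℕ) :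
    0 ≤ ∑ i, ∑ j, chebU l ⟪x i, x j⟫ := by
  have key : ((∑ i, ∑ j, chebU l ⟪x i, x j⟫ : ℝ) : ℂ) =
      ((∑ m : Fin (l+1), ∑ n : Fin (l+1), ((l.choose n : ℝ) / (l.choose m : ℝ)) *
        Complex.normSq (∑ i, symD l (qm (x i)) n m) : ℝ) : ℂ) := by
    have e1 : ∀ i j, ((chebU l ⟪x i, x j⟫ : ℝ) : ℂ) = ∑ m : Fin (l+1), ∑ n : Fin (l+1),
        ((l.choose n : ℂ) / (l.choose m : ℂ)) * star (symD l (qm (x i)) n m) * symD l (qm (x j)) n m := by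
      intro i j
      rw [chebU_cast, ← qm_trace, ← symD_trace l _ (qm_det _ _ (hx i) (hx j)), symD_mul, Matrix.trace]
      refine Finset.sum_congr rfl fun m _ => ?_
      rw [Matrix.diag_apply, Matrix.mul_apply]
      refine Finset.sum_congr rfl fun n _ => ?_
      rw [symD_conj]
    push_cast
    simp only [e1, Complex.normSq_eq_conj_mul_self, map_sum]
    rw [Finset.sum_congr rfl (fun i _ => Finset.sum_comm), Finset.sum_comm]
    refine Finset.sum_congr rfl fun m _ => ?_
    rw [Finset.sum_congr rfl (fun i _ => Finset.sum_comm), Finset.sum_comm]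
    refine Finset.sum_congr rfl fun n _ => ?_
    rw [Finset.sum_mul_sum, Finset.mul_sum]
    refine Finset.sum_congr rfl fun i _ => ?_
    rw [Finset.mul_sum]
    refine Finset.sum_congr rfl fun j _ => ?_
    simp only [Complex.star_def]; ring
  rw [Complex.ofReal_inj] at key
  rw [key]
  refine Finset.sum_nonneg fun m _ => Finset.sum_nonneg fun n _ => ?_
  exact mul_nonneg (by positivity) (Complex.normSq_nonneg _)

end SHC

open scoped RealInnerProductSpace
namespace SHC

lemma lp_general {ι : Type*} [Fintype ι] (x : ι → E4) (hx : ∀ i, ‖x i‖ = 1) (N : ℕ) (c : ℕ → ℝ)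
    (hc : ∀ l, l < N + 1 → 0 ≤ c l) (F : ℝ → ℝ)
    (hF : ∀ t, F t = ∑ l ∈ Finset.range (N + 1), c l * chebU l t) :
    c 0 * (Fintype.card ι : ℝ) ^ 2 ≤ ∑ i, ∑ j, F ⟪x i, x j⟫ := by
  have e : ∑ i, ∑ j, F ⟪x i, x j⟫ = ∑ l ∈ Finset.range (N + 1), c l * ∑ i, ∑ j, chebU l ⟪x i, x j⟫ := by
    simp only [hF]
    rw [Finset.sum_congr rfl (fun i _ => Finset.sum_comm), Finset.sum_comm]
    refine Finset.sum_congr rfl fun l _ => ?_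
    rw [Finset.mul_sum]
    refine Finset.sum_congr rfl fun i _ => ?_
    rw [Finset.mul_sum]
  rw [e, Finset.sum_range_succ']
  have h0 : c 0 * ∑ i, ∑ j, chebU 0 ⟪x i, x j⟫ = c 0 * (Fintype.card ι : ℝ) ^ 2 := by
    simp [chebU]; ring_nf; simp
  rw [h0]
  have : 0 ≤ ∑ l ∈ Finset.range N, c (l+1) * ∑ i, ∑ j, chebU (l+1) ⟪x i, x j⟫ :=
    Finset.sum_nonneg fun l hl => mul_nonneg (hc _ (by have := Finset.mem_range.1 hl; omega)) (chebU_psd x hx _)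
  linarith

section cheb
variable (t : ℝ)
lemma cU0 : chebU 0 t = 1 := rfl
lemma cU1 : chebU 1 t = 2 * t := rfl
lemma cU2 : chebU 2 t = (-1) * t ^ 0 + (4) * t ^ 2 := by
  rw [chebU, cU1, cU0]; ring
lemma cU3 : chebU 3 t = (-4) * t ^ 1 + (8) * t ^ 3 := by
  rw [chebU, cU2, cU1]; ring
lemma cU4 : chebU 4 t = (1) * t ^ 0 + (-12) * t ^ 2 + (16) * t ^ 4 := by
  rw [chebU, cU3, cU2]; ring
lemma cU5 : chebU 5 t = (6) * t ^ 1 + (-32) * t ^ 3 + (32) * t ^ 5 := by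
  rw [chebU, cU4, cU3]; ring
lemma cU6 : chebU 6 t = (-1) * t ^ 0 + (24) * t ^ 2 + (-80) * t ^ 4 + (64) * t ^ 6 := by
  rw [chebU, cU5, cU4]; ring
lemma cU7 : chebU 7 t = (-8) * t ^ 1 + (80) * t ^ 3 + (-192) * t ^ 5 + (128) * t ^ 7 := by
  rw [chebU, cU6, cU5]; ring
lemma cU8 : chebU 8 t = (1) * t ^ 0 + (-40) * t ^ 2 + (240) * t ^ 4 + (-448) * t ^ 6 + (256) * t ^ 8 := by
  rw [chebU, cU7, cU6]; ring
lemma cU9 : chebU 9 t = (10) * t ^ 1 + (-160) * t ^ 3 + (672) * t ^ 5 + (-1024) * t ^ 7 + (512) * t ^ 9 := by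
  rw [chebU, cU8, cU7]; ring
lemma cU10 : chebU 10 t = (-1) * t ^ 0 + (60) * t ^ 2 + (-560) * t ^ 4 + (1792) * t ^ 6 + (-2304) * t ^ 8 + (1024) * t ^ 10 := by
  rw [chebU, cU9, cU8]; ring
lemma cU11 : chebU 11 t = (-12) * t ^ 1 + (280) * t ^ 3 + (-1792) * t ^ 5 + (4608) * t ^ 7 + (-5120) * t ^ 9 + (2048) * t ^ 11 := by
  rw [chebU, cU10, cU9]; ring
lemma cU12 : chebU 12 t = (1) * t ^ 0 + (-84) * t ^ 2 + (1120) * t ^ 4 + (-5376) * t ^ 6 + (11520) * t ^ 8 + (-11264) * t ^ 10 + (4096) * t ^ 12 := by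
  rw [chebU, cU11, cU10]; ring
lemma cU13 : chebU 13 t = (14) * t ^ 1 + (-448) * t ^ 3 + (4032) * t ^ 5 + (-15360) * t ^ 7 + (28160) * t ^ 9 + (-24576) * t ^ 11 + (8192) * t ^ 13 := by
  rw [chebU, cU12, cU11]; ring
lemma cU14 : chebU 14 t = (-1) * t ^ 0 + (112) * t ^ 2 + (-2016) * t ^ 4 + (13440) * t ^ 6 + (-42240) * t ^ 8 + (67584) * t ^ 10 + (-53248) * t ^ 12 + (16384) * t ^ 14 := by
  rw [chebU, cU13, cU12]; ring
lemma cU15 : chebU 15 t = (-16) * t ^ 1 + (672) * t ^ 3 + (-8064) * t ^ 5 + (42240) * t ^ 7 + (-112640) * t ^ 9 + (159744) * t ^ 11 + (-114688) * t ^ 13 + (32768) * t ^ 15 := by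
  rw [chebU, cU14, cU13]; ring
lemma cU16 : chebU 16 t = (1) * t ^ 0 + (-144) * t ^ 2 + (3360) * t ^ 4 + (-29568) * t ^ 6 + (126720) * t ^ 8 + (-292864) * t ^ 10 + (372736) * t ^ 12 + (-245760) * t ^ 14 + (65536) * t ^ 16 := by
  rw [chebU, cU15, cU14]; ring
lemma cU17 : chebU 17 t = (18) * t ^ 1 + (-960) * t ^ 3 + (14784) * t ^ 5 + (-101376) * t ^ 7 + (366080) * t ^ 9 + (-745472) * t ^ 11 + (860160) * t ^ 13 + (-524288) * t ^ 15 + (131072) * t ^ 17 := by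
  rw [chebU, cU16, cU15]; ring
end cheb

/-- the nonnegative cofactor of `t - α` in the extremal polynomial; `r` is the square root of five -/
noncomputable def lpH (r t : ℝ) : ℝ :=
  (t + 1) * t ^ 2 * (t ^ 2 - 1 / 4) ^ 2 * (t ^ 2 - (3 - r) / 8) ^ 2 * (t + (1 + r) / 4) ^ 2 *
    ((1 - t ^ 2) * (53 / 50 - t) + (9 / 400 + 83 / 6000 * r))

/-- coefficients of the extremal polynomial -/
noncomputable def lpC (r : ℝ) : ℕ → ℝ
  | 0 => ((41/327680) + (3/51200) * r)
  | 1 => ((437/1638400) + (1069/9830400) * r)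
  | 2 => ((6713/19660800) + (15683/98304000) * r)
  | 3 => ((527/1228800) + (73/393216) * r)
  | 4 => ((1709/3932160) + (6473/32768000) * r)
  | 5 => ((1351/3276800) + (61/327680) * r)
  | 6 => ((13/38400) + (3827/24576000) * r)
  | 7 => ((1229/4915200) + (557/4915200) * r)
  | 8 => ((1487/9830400) + (3517/49152000) * r)
  | 9 => ((701/9830400) + (121/3276800) * r)
  | 10 => ((257/9830400) + (637/49152000) * r)
  | 11 => ((-89/9830400) + (3/655360) * r)
  | 12 => ((0/1) + (0/1) * r)
  | 13 => ((-73/9830400) + (19/4915200) * r)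
  | 14 => ((51/6553600) + (323/98304000) * r)
  | 15 => ((3/327680) + (11/3276800) * r)
  | 16 => ((19/6553600) + (1/262144) * r)
  | 17 => ((1/131072) + (0/1) * r)
  | _ => 0

lemma lpH_mid (r t : ℝ) (hr : r ^ 2 = 5) :
    (t ^ 2 - (3 - r) / 8) * (t + (1 + r) / 4) * ((1 - t ^ 2) * (53 / 50 - t) + (9 / 400 + 83 / 6000 * r))
    = ((19/300) * t ^ 0 + (-2207/4800) * t ^ 1 + (179/300) * t ^ 2 + (517/400) * t ^ 3 + (-41/25) * t ^ 4 + (-81/100) * t ^ 5 + (1/1) * t ^ 6) + r * ((-1603/24000) * t ^ 0 + (1541/8000) * t ^ 1 + (323/1500) * t ^ 2 + (-2587/6000) * t ^ 3 + (-7/50) * t ^ 4 + (1/4) * t ^ 5 + (0/1) * t ^ 6) := by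
  linear_combination (1 / 32 * ((1 - t ^ 2) * (53 / 50 - t) + 9 / 400) + 83 / 6000 * (1 / 8 * (t + 1 / 4) + 1 / 4 * (t ^ 2 - 3 / 8))
    + 83 / 6000 / 32 * r) * hr

lemma lpH_quart (r t : ℝ) (hr : r ^ 2 = 5) :
    (t - (1 + r) / 4) * (t + (1 + r) / 4) * (t ^ 2 - (3 - r) / 8) = t ^ 4 - 3 / 4 * t ^ 2 + 1 / 16 := by
  linear_combination (-(t^2) / 16 + 1/128 - r/128) * hr

lemma lpF_expand (r t : ℝ) (hr : r ^ 2 = 5) :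
    (t - (1 + r) / 4) * lpH r t = ∑ l ∈ Finset.range 18, lpC r l * chebU l t := by
  have e : (t - (1 + r) / 4) * lpH r t = (t + 1) * t ^ 2 * (t ^ 2 - 1 / 4) ^ 2 *
    ((t - (1 + r) / 4) * (t + (1 + r) / 4) * (t ^ 2 - (3 - r) / 8)) *
    ((t ^ 2 - (3 - r) / 8) * (t + (1 + r) / 4) * ((1 - t ^ 2) * (53 / 50 - t) + (9 / 400 + 83 / 6000 * r))) := by
    unfold lpH; ring
  rw [e, lpH_mid r t hr, lpH_quart r t hr]
  simp only [Finset.sum_range_succ, Finset.sum_range_zero, lpC]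
  rw [cU0, cU1, cU2, cU3, cU4, cU5, cU6, cU7, cU8, cU9, cU10, cU11, cU12, cU13, cU14, cU15, cU16, cU17]
  ring

lemma lpC_nonneg (r : ℝ) (h1 : 2.236067 < r) (h2 : r < 2.236068) : ∀ l, l < 17 + 1 → 0 ≤ lpC r l := by
  intro l hl
  interval_cases l <;> simp only [lpC] <;> linarith

/-- The main linear programming inequality. -/
theorem lp_main {ι : Type*} [Fintype ι] (x : ι → E4) (hx : ∀ i, ‖x i‖ = 1) (r : ℝ) (hr : r ^ 2 = 5)
    (h1 : 2.236067 < r) (h2 : r < 2.236068) :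
    lpC r 0 * (Fintype.card ι : ℝ) ^ 2 ≤ ∑ i, ∑ j, ((⟪x i, x j⟫ - (1 + r) / 4) * lpH r ⟪x i, x j⟫) :=
  lp_general x hx 17 (lpC r) (lpC_nonneg r h1 h2) (fun t => (t - (1 + r) / 4) * lpH r t)
    (fun t => lpF_expand r t hr)

lemma lpF_one (r : ℝ) (hr : r ^ 2 = 5) : (1 - (1 + r) / 4) * lpH r 1 = 120 * lpC r 0 := by
  have := lpH_mid r 1 hr
  have := lpH_quart r 1 hr
  have e : (1 - (1 + r) / 4) * lpH r 1 = (1 + 1) * 1 ^ 2 * (1 ^ 2 - 1 / 4) ^ 2 *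
    ((1 - (1 + r) / 4) * (1 + (1 + r) / 4) * (1 ^ 2 - (3 - r) / 8)) *
    ((1 ^ 2 - (3 - r) / 8) * (1 + (1 + r) / 4) * ((1 - 1 ^ 2) * (53 / 50 - 1) + (9 / 400 + 83 / 6000 * r))) := by
    unfold lpH; ring
  rw [e, lpH_mid r 1 hr, lpH_quart r 1 hr, lpC]
  ring

/-- Second linear programming inequality. -/
theorem lp_second {ι : Type*} [Fintype ι] (x : ι → E4) (hx : ∀ i, ‖x i‖ = 1) :
    (41/800) * (Fintype.card ι : ℝ) ^ 2 ≤ ∑ i, ∑ j, (⟪x i, x j⟫ ^ 2 * (⟪x i, x j⟫ - 1 / 2) * (⟪x i, x j⟫ + 7 / 10) ^ 2) := by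
  have := lp_general x hx 5 (fun l => match l with
    | 0 => (41/800)
    | 1 => (83/800)
    | 2 => (43/400)
    | 3 => (79/800)
    | 4 => (9/160)
    | 5 => (1/32)
    | _ => 0) (by
      intro l hl
      interval_cases l <;> norm_num) (fun t => t ^ 2 * (t - 1 / 2) * (t + 7 / 10) ^ 2) (by
      intro t
      simp only [Finset.sum_range_succ, Finset.sum_range_zero]
      rw [cU0, cU1, cU2, cU3, cU4, cU5]
      ring)
  exact this

end SHC

open scoped RealInnerProductSpace
namespace SHC

lemma lpG_pos (r t : ℝ) (h1 : 2.236067 < r) (ht1 : -1 ≤ t) (ht2 : t ≤ 1) :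
    0.05 ≤ (1 - t ^ 2) * (53 / 50 - t) + (9 / 400 + 83 / 6000 * r) := by
  have : 0 ≤ (1 - t ^ 2) * (53 / 50 - t) := mul_nonneg (by nlinarith) (by linarith)
  linarith

lemma lpH_nonneg (r t : ℝ) (h1 : 2.236067 < r) (ht1 : -1 ≤ t) (ht2 : t ≤ 1) : 0 ≤ lpH r t := by
  have := lpG_pos r t h1 ht1 ht2
  unfold lpH
  refine mul_nonneg ?_ (by linarith)
  have : 0 ≤ t + 1 := by linarith
  positivity

lemma lpH_le (r t : ℝ) (h1 : 2.236067 < r) (h2 : r < 2.236068) (ht1 : -1 ≤ t) (ht2 : t ≤ 1) :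
    lpH r t ≤ 24 := by
  have g := lpG_pos r t h1 ht1 ht2
  have a1 : 0 ≤ t + 1 := by linarith
  have a1' : t + 1 ≤ 2 := by linarith
  have a2 : t ^ 2 ≤ 1 := by nlinarith
  have a3 : (t ^ 2 - 1 / 4) ^ 2 ≤ 1 := by nlinarith [sq_nonneg t]
  have a4 : (t ^ 2 - (3 - r) / 8) ^ 2 ≤ 1 := by
    have : 0 ≤ t ^ 2 := sq_nonneg t
    rw [sq_le_one_iff_abs_le_one, abs_le]; constructor <;> linarith
  have a5 : (t + (1 + r) / 4) ^ 2 ≤ 4 := by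
    have : |t + (1 + r) / 4| ≤ 2 := by rw [abs_le]; constructor <;> linarith
    nlinarith [sq_abs (t + (1 + r) / 4), abs_nonneg (t + (1 + r) / 4)]
  have a6 : (1 - t ^ 2) * (53 / 50 - t) + (9 / 400 + 83 / 6000 * r) ≤ 3 := by
    have : (1 - t ^ 2) * (53 / 50 - t) ≤ 1 * (53/50 + 1) := by
      apply mul_le_mul <;> nlinarith [sq_nonneg t]
    linarith
  have : lpH r t ≤ 2 * 1 * 1 * 1 * 4 * 3 := by
    unfold lpH
    gcongr
  linarith

lemma lpH_near (r t : ℝ) (h1 : 2.236067 < r) (h2 : r < 2.236068) (ht1 : 0.76 ≤ t) (ht2 : t ≤ 1) :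
    0.001 ≤ lpH r t := by
  have g := lpG_pos r t h1 (by linarith) ht2
  have b2 : 0.57 ≤ t ^ 2 := by nlinarith
  have b3 : 0.1 ≤ (t ^ 2 - 1 / 4) ^ 2 := by nlinarith
  have b4 : 0.2 ≤ (t ^ 2 - (3 - r) / 8) ^ 2 := by nlinarith
  have b5 : 2 ≤ (t + (1 + r) / 4) ^ 2 := by nlinarith
  have b1 : 1.7 ≤ t + 1 := by linarith
  have : 1.7 * 0.57 * 0.1 * 0.2 * 2 * 0.05 ≤ lpH r t := by
    unfold lpH
    gcongr
  norm_num at this ⊢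
  linarith

lemma far_aux (u s : ℝ) (h : ¬ |u - s| ≤ 1 / 10 ^ 12) : 1 / 10 ^ 24 ≤ (u - s) ^ 2 := by
  push Not at h
  have := sq_abs (u - s)
  nlinarith [abs_nonneg (u - s)]

lemma lpH_far (r t ε : ℝ) (hr : r ^ 2 = 5) (h1 : 2.236067 < r) (h2 : r < 2.236068) (ht1 : -1 ≤ t) (ht2 : t < 0.76)
    (hε : ε ≤ 1 / 10 ^ 200) (h : ((1 + r) / 4 - t) * lpH r t ≤ 700000 * ε) :
    |t - (-1)| ≤ 1 / 10 ^ 12 ∨ |t - (-(1 + r) / 4)| ≤ 1 / 10 ^ 12 ∨ |t - (-1/2)| ≤ 1 / 10 ^ 12 ∨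
    |t - (-(r - 1) / 4)| ≤ 1 / 10 ^ 12 ∨ |t - 0| ≤ 1 / 10 ^ 12 ∨ |t - (r - 1) / 4| ≤ 1 / 10 ^ 12 ∨
    |t - 1 / 2| ≤ 1 / 10 ^ 12 := by
  by_contra hcon
  simp only [not_or] at hcon
  obtain ⟨c1, c2, c3, c4, c5, c6, c7⟩ := hcon
  have g := lpG_pos r t h1 ht1 (by linarith)
  have d1 : 1 / 10 ^ 12 ≤ t + 1 := by
    push Not at c1
    rw [abs_of_nonneg (by linarith)] at c1
    linarith
  have d2 := far_aux _ _ c2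
  have d3 := far_aux _ _ c3
  have d4 := far_aux _ _ c4
  have d5 := far_aux _ _ c5
  have d6 := far_aux _ _ c6
  have d7 := far_aux _ _ c7
  have e1 : 1 / 10 ^ 24 * (1 / 10 ^ 24) ≤ (t ^ 2 - 1 / 4) ^ 2 := by
    rw [show (t ^ 2 - 1 / 4) ^ 2 = (t - (-1/2)) ^ 2 * (t - 1/2) ^ 2 by ring]
    gcongr
  have e2 : 1 / 10 ^ 24 * (1 / 10 ^ 24) ≤ (t ^ 2 - (3 - r) / 8) ^ 2 := by
    have : (t ^ 2 - (3 - r) / 8) = (t - (-(r-1)/4)) * (t - (r-1)/4) := by linear_combination hr / 16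
    rw [this, mul_pow]
    gcongr
  have e3 : 1 / 10 ^ 24 ≤ t ^ 2 := by simpa using d5
  have e4 : 1 / 10 ^ 24 ≤ (t + (1 + r) / 4) ^ 2 := by
    rw [show t + (1 + r) / 4 = t - (-(1 + r) / 4) by ring]; exact d2
  have H : 1 / 10 ^ 12 * (1 / 10 ^ 24) * (1 / 10 ^ 24 * (1 / 10 ^ 24)) * (1 / 10 ^ 24 * (1 / 10 ^ 24)) * (1 / 10 ^ 24) * 0.05
      ≤ lpH r t := by
    unfold lpH
    gcongr
  have : 0.04 * (1 / 10 ^ 12 * (1 / 10 ^ 24) * (1 / 10 ^ 24 * (1 / 10 ^ 24)) * (1 / 10 ^ 24 * (1 / 10 ^ 24)) * (1 / 10 ^ 24) * 0.05)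
      ≤ ((1 + r) / 4 - t) * lpH r t := by
    exact mul_le_mul (by linarith) H (by positivity) (by linarith)
  have : (0.04:ℝ) * (1 / 10 ^ 12 * (1 / 10 ^ 24) * (1 / 10 ^ 24 * (1 / 10 ^ 24)) * (1 / 10 ^ 24 * (1 / 10 ^ 24)) * (1 / 10 ^ 24) * 0.05)
      ≤ 700000 * (1 / 10 ^ 200) := by linarith
  norm_num at this

lemma inner_unit_bd {u v : E4} (hu : ‖u‖ = 1) (hv : ‖v‖ = 1) : -1 ≤ ⟪u, v⟫ ∧ ⟪u, v⟫ ≤ 1 := by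
  have := abs_real_inner_le_norm u v
  rw [hu, hv, mul_one, abs_le] at this
  exact this

lemma inner_self_unit {u : E4} (hu : ‖u‖ = 1) : ⟪u, u⟫ = 1 := by
  rw [real_inner_self_eq_norm_sq, hu]; norm_num

lemma pair_bound {k : ℕ} (x : Fin k → E4) (hx : ∀ i, ‖x i‖ = 1) (r ε : ℝ) (hr : r ^ 2 = 5)
  (h1 : 2.236067 < r) (h2 : r < 2.236068) (hε0 : 0 ≤ ε)
  (ht : ∀ i j, i ≠ j → ⟪x i, x j⟫ ≤ (1 + r) / 4 + 2 * ε) (i j : Fin k) : (⟪x i, x j⟫ - (1 + r) / 4) * lpH r ⟪x i, x j⟫ ≤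
    (if i = j then 120 * lpC r 0 else 0) + 48 * ε := by
  obtain ⟨b1, b2⟩ := inner_unit_bd (hx i) (hx j)
  split_ifs with hij
  · subst hij
    rw [inner_self_unit (hx i), lpF_one r hr]; linarith
  · have a := lpH_nonneg r _ h1 b1 b2
    have b := lpH_le r _ h1 h2 b1 b2
    rw [zero_add]
    rcases le_or_gt ⟪x i, x j⟫ ((1 + r) / 4) with hc | hc
    · have := mul_nonneg (sub_nonneg.2 hc) a
      linarith
    · have : (⟪x i, x j⟫ - (1 + r) / 4) * lpH r ⟪x i, x j⟫ ≤ (2 * ε) * 24 := by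
        apply mul_le_mul _ b a (by linarith)
        linarith [ht i j hij]
      linarith

lemma sum_bound {k : ℕ} (A B : ℝ) : ∑ i : Fin k, ∑ j : Fin k, ((if i = j then A else 0) + B) = k * A + k ^ 2 * B := by
  simp [Finset.sum_add_distrib]
  ring

lemma lpC0 (r : ℝ) (h1 : 2.236067 < r) (h2 : r < 2.236068) : 0.0002 ≤ lpC r 0 ∧ lpC r 0 ≤ 0.0003 := by
  simp only [lpC]; constructor <;> linarith

lemma card_eq {k : ℕ} (x : Fin k → E4) (hx : ∀ i, ‖x i‖ = 1) (r ε : ℝ) (hr : r ^ 2 = 5)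
  (h1 : 2.236067 < r) (h2 : r < 2.236068) (hε0 : 0 ≤ ε)
  (ht : ∀ i j, i ≠ j → ⟪x i, x j⟫ ≤ (1 + r) / 4 + 2 * ε) (hk : 120 ≤ k) (hε : ε < 1 / 10 ^ 14) : k = 120 := by
  by_contra hne
  have hk' : (121 : ℝ) ≤ k := by exact_mod_cast (show 121 ≤ k by omega)
  have A := lp_main x hx r hr h1 h2
  have B := Finset.sum_le_sum (fun i (_ : i ∈ Finset.univ) =>
    Finset.sum_le_sum (fun j (_ : j ∈ Finset.univ) => pair_bound x hx r ε hr h1 h2 hε0 ht i j))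
  rw [sum_bound] at B
  simp only [Fintype.card_fin] at A
  obtain ⟨c1, c2⟩ := lpC0 r h1 h2
  have C : (k:ℝ) * (lpC r 0 * k) ≤ k * (120 * lpC r 0 + k * (48 * ε)) := by nlinarith
  have D := le_of_mul_le_mul_left C (by linarith)
  norm_num at hε
  nlinarith


lemma pair_lower (x : Fin 120 → E4) (hx : ∀ i, ‖x i‖ = 1) (r ε : ℝ) (hr : r ^ 2 = 5)
    (h1 : 2.236067 < r) (h2 : r < 2.236068) (hε0 : 0 ≤ ε)
    (ht : ∀ i j, i ≠ j → ⟪x i, x j⟫ ≤ (1 + r) / 4 + 2 * ε) (i j : Fin 120) (hij : i ≠ j) :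
    ((1 + r) / 4 - ⟪x i, x j⟫) * lpH r ⟪x i, x j⟫ ≤ 700000 * ε := by
  have A := lp_main x hx r hr h1 h2
  have P := pair_bound x hx r ε hr h1 h2 hε0 ht
  set D : Fin 120 → Fin 120 → ℝ := fun i j => (if i = j then 120 * lpC r 0 else 0) + 48 * ε -
    (⟪x i, x j⟫ - (1 + r) / 4) * lpH r ⟪x i, x j⟫ with hD
  have D0 : ∀ i j, 0 ≤ D i j := fun i j => sub_nonneg.2 (P i j)
  have s1 : D i j ≤ ∑ j, D i j := Finset.single_le_sum (fun j _ => D0 i j) (Finset.mem_univ j)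
  have s2 : ∑ j, D i j ≤ ∑ i, ∑ j, D i j :=
    Finset.single_le_sum (f := fun i => ∑ j, D i j) (fun i _ => Finset.sum_nonneg fun j _ => D0 i j) (Finset.mem_univ i)
  have s3 : ∑ i, ∑ j, D i j = 120 * (120 * lpC r 0) + 120 ^ 2 * (48 * ε) -
      ∑ i, ∑ j, ((⟪x i, x j⟫ - (1 + r) / 4) * lpH r ⟪x i, x j⟫) := by
    simp only [hD, Finset.sum_sub_distrib]
    rw [sum_bound]; norm_num
  have s4 : D i j = 48 * ε - (⟪x i, x j⟫ - (1 + r) / 4) * lpH r ⟪x i, x j⟫ := by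
    simp [hD, hij]
  simp only [Fintype.card_fin] at A
  push_cast at A
  nlinarith

lemma pair_near (x : Fin 120 → E4) (hx : ∀ i, ‖x i‖ = 1) (r ε : ℝ) (hr : r ^ 2 = 5)
    (h1 : 2.236067 < r) (h2 : r < 2.236068) (hε0 : 0 ≤ ε)
    (ht : ∀ i j, i ≠ j → ⟪x i, x j⟫ ≤ (1 + r) / 4 + 2 * ε) (i j : Fin 120) (hij : i ≠ j)
    (hn : 0.76 ≤ ⟪x i, x j⟫) : |⟪x i, x j⟫ - (1 + r) / 4| ≤ 10 ^ 9 * ε := by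
  have A := pair_lower x hx r ε hr h1 h2 hε0 ht i j hij
  obtain ⟨b1, b2⟩ := inner_unit_bd (hx i) (hx j)
  have B := lpH_near r _ h1 h2 hn b2
  have := ht i j hij
  rw [abs_le]
  constructor
  · rcases le_or_gt ⟪x i, x j⟫ ((1 + r) / 4) with hc | hc
    · have := mul_le_mul_of_nonneg_left B (sub_nonneg.2 hc)
      norm_num at this ⊢
      linarith
    · norm_num; linarith
  · norm_num; linarith

/-- Existence of an (approximate) regular tetrahedron. -/
lemma exists_tetra (x : Fin 120 → E4) (hx : ∀ i, ‖x i‖ = 1)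
    (hr : ∀ i j, i ≠ j → ⟪x i, x j⟫ ≤ 0.500001 ∨ (0.809 ≤ ⟪x i, x j⟫ ∧ ⟪x i, x j⟫ ≤ 0.8091))
    (hq : ∀ i j, i ≠ j → ⟪x i, x j⟫ ≤ 0.8 → ⟪x i, x j⟫ ≤ 1 / 2 + 1 / 10 ^ 11) :
    ∃ i j k l : Fin 120, i ≠ j ∧ i ≠ k ∧ i ≠ l ∧ j ≠ k ∧ j ≠ l ∧ k ≠ l ∧
      0.809 ≤ ⟪x i, x j⟫ ∧ 0.809 ≤ ⟪x i, x k⟫ ∧ 0.809 ≤ ⟪x i, x l⟫ ∧ 0.809 ≤ ⟪x j, x k⟫ ∧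
      0.809 ≤ ⟪x j, x l⟫ ∧ 0.809 ≤ ⟪x k, x l⟫ := by
  classical
  set nb : Fin 120 → Finset (Fin 120) := fun i => Finset.univ.filter (fun j => i ≠ j ∧ 0.809 ≤ ⟪x i, x j⟫) with hnb
  have mem_nb : ∀ i j, j ∈ nb i ↔ i ≠ j ∧ 0.809 ≤ ⟪x i, x j⟫ := by intro i j; simp [hnb]
  -- a vertex with many neighbours
  obtain ⟨i, hi⟩ : ∃ i, 8 ≤ (nb i).card := by
    have A := lp_second x hx
    simp only [Fintype.card_fin] at A
    by_contra hcon
    push Not at hcon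
    have B : ∀ i, ∑ j, (⟪x i, x j⟫ ^ 2 * (⟪x i, x j⟫ - 1 / 2) * (⟪x i, x j⟫ + 7 / 10) ^ 2) ≤ 5 := by
      intro i
      have C : ∀ j, ⟪x i, x j⟫ ^ 2 * (⟪x i, x j⟫ - 1 / 2) * (⟪x i, x j⟫ + 7 / 10) ^ 2 ≤
          (if i = j then 1.445 else 0) + (if j ∈ nb i then 0.47 else 0) + 1 / 10 ^ 6 := by
        intro j
        by_cases hij : i = j
        · subst hij
          have : i ∉ nb i := by simp [mem_nb]
          rw [if_pos rfl, if_neg this, inner_self_unit (hx i)]; norm_num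
        · rw [if_neg hij]
          obtain ⟨b1, b2⟩ := inner_unit_bd (hx i) (hx j)
          rcases hr i j hij with h | h
          · have : j ∉ nb i := by simp only [mem_nb, not_and]; intro _; linarith
            rw [if_neg this]
            have h3 := hq i j hij (by linarith)
            set t := ⟪x i, x j⟫
            rcases le_or_gt t (1/2) with h4 | h4
            · have : 0 ≤ t ^ 2 * (1 / 2 - t) * (t + 7 / 10) ^ 2 := by
                have : 0 ≤ 1 / 2 - t := by linarith
                positivity
              norm_num; linarith
            · have : t ^ 2 * (t - 1 / 2) * (t + 7 / 10) ^ 2 ≤ 1 * (1 / 10 ^ 11) * 4 := by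
                have : 0 ≤ t - 1 / 2 := by linarith
                gcongr
                · nlinarith
                · linarith
                · nlinarith
              norm_num at this ⊢; linarith
          · have : j ∈ nb i := by rw [mem_nb]; exact ⟨hij, h.1⟩
            rw [if_pos this]
            set t := ⟪x i, x j⟫
            have : t ^ 2 * (t - 1 / 2) * (t + 7 / 10) ^ 2 ≤ 0.8091 ^ 2 * (0.8091 - 1 / 2) * (0.8091 + 7/10) ^ 2 := by
              have : 0 ≤ t - 1 / 2 := by linarith
              have : 0 ≤ t := by linarith
              gcongr <;> linarith
            norm_num at this ⊢; linarith
      have D := Finset.sum_le_sum (fun j (_ : j ∈ Finset.univ) => C j)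
      rw [Finset.sum_add_distrib, Finset.sum_add_distrib, Finset.sum_ite_eq, if_pos (Finset.mem_univ _),
        Finset.sum_ite_mem, Finset.univ_inter, Finset.sum_const, Finset.sum_const] at D
      have h7 : ((nb i).card : ℝ) ≤ 7 := by exact_mod_cast Nat.le_of_lt_succ (hcon i)
      simp only [nsmul_eq_mul, Finset.card_univ, Fintype.card_fin] at D
      push_cast at D
      norm_num at D
      linarith
    have E := Finset.sum_le_sum (fun i (_ : i ∈ Finset.univ) => B i)
    rw [Finset.sum_const, Finset.card_univ, Fintype.card_fin] at E
    norm_num at A E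
    linarith
  -- a vertex of its link with three neighbours in the link
  obtain ⟨j, hj, hj3⟩ : ∃ j ∈ nb i, 2 < ((nb i).filter (fun k => k ∈ nb j)).card := by
    by_contra hcon
    push Not at hcon
    set m : ℝ := ((nb i).card : ℝ) with hm
    have hm8 : 8 ≤ m := by rw [hm]; exact_mod_cast hi
    set y := ∑ j ∈ nb i, x j with hy
    have A : 0.809 * m ≤ ⟪x i, y⟫ := by
      rw [hy, inner_sum]
      have := Finset.card_nsmul_le_sum (nb i) (fun j => ⟪x i, x j⟫) 0.809 (fun j hj => ((mem_nb i j).1 hj).2)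
      rw [nsmul_eq_mul] at this
      linarith
    have B : ⟪x i, y⟫ ≤ ‖y‖ := by
      have := real_inner_le_norm (x i) y
      rwa [hx i, one_mul] at this
    have C : ‖y‖ ^ 2 ≤ m * (0.500001 * m + 1.1184) := by
      rw [← real_inner_self_eq_norm_sq]
      have : ⟪y, y⟫ = ∑ j ∈ nb i, ∑ k ∈ nb i, ⟪x j, x k⟫ := by
        rw [hy, sum_inner]
        refine Finset.sum_congr rfl fun j _ => ?_
        rw [inner_sum]
      rw [this]
      have rowb : ∀ j ∈ nb i, ∑ k ∈ nb i, ⟪x j, x k⟫ ≤ 0.500001 * m + 1.1184 := by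
        intro j hj
        have P : ∀ k ∈ nb i, ⟪x j, x k⟫ ≤ 0.500001 + (if j = k then 0.5 else 0) + (if k ∈ nb j then 0.3091 else 0) := by
          intro k _
          by_cases hjk : j = k
          · subst hjk
            rw [if_pos rfl, inner_self_unit (hx j)]
            split_ifs <;> norm_num
          · rw [if_neg hjk]
            rcases hr j k hjk with h | h
            · split_ifs <;> norm_num at h ⊢ <;> linarith
            · rw [if_pos ((mem_nb j k).2 ⟨hjk, h.1⟩)]
              norm_num at h ⊢; linarith [h.2]
        have Q := Finset.sum_le_sum P
        rw [Finset.sum_add_distrib, Finset.sum_add_distrib, Finset.sum_ite_eq, if_pos hj, Finset.sum_const,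
          ← Finset.sum_filter, Finset.sum_const, nsmul_eq_mul, nsmul_eq_mul] at Q
        have h2 : (((nb i).filter (fun k => k ∈ nb j)).card : ℝ) ≤ 2 := by exact_mod_cast hcon j hj
        norm_num at Q ⊢
        linarith
      have := Finset.sum_le_card_nsmul (nb i) _ _ rowb
      rwa [nsmul_eq_mul] at this
    have : (0.809 * m) ^ 2 ≤ ‖y‖ ^ 2 := by
      apply pow_le_pow_left₀ (by linarith); linarith
    nlinarith
  obtain ⟨a, ha, b, hb, c, hc, hab, hac, hbc⟩ := Finset.two_lt_card.1 hj3
  rw [Finset.mem_filter, mem_nb, mem_nb] at ha hb hc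
  rw [mem_nb] at hj
  obtain ⟨⟨ia, ia'⟩, ja, ja'⟩ := ha
  obtain ⟨⟨ib, ib'⟩, jb, jb'⟩ := hb
  obtain ⟨⟨ic, ic'⟩, jc, jc'⟩ := hc
  have main : 0.809 ≤ ⟪x a, x b⟫ ∨ 0.809 ≤ ⟪x a, x c⟫ ∨ 0.809 ≤ ⟪x b, x c⟫ := by
    by_contra hcon
    simp only [not_or] at hcon
    obtain ⟨n1, n2, n3⟩ := hcon
    have m1 : ⟪x a, x b⟫ ≤ 0.500001 := (hr a b hab).resolve_right (fun h => n1 h.1)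
    have m2 : ⟪x a, x c⟫ ≤ 0.500001 := (hr a c hac).resolve_right (fun h => n2 h.1)
    have m3 : ⟪x b, x c⟫ ≤ 0.500001 := (hr b c hbc).resolve_right (fun h => n3 h.1)
    have ij : ⟪x i, x j⟫ ≤ 0.8091 := by
      rcases hr i j hj.1 with h | h
      · norm_num at h ⊢; linarith
      · exact h.2
    have A := real_inner_mul_inner_self_le (x i + x j) (x a + x b + x c)
    have e1 : ⟪x i + x j, x a + x b + x c⟫ = ⟪x i, x a⟫ + ⟪x i, x b⟫ + ⟪x i, x c⟫ + ⟪x j, x a⟫ + ⟪x j, x b⟫ + ⟪x j, x c⟫ := by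
      simp only [inner_add_left, inner_add_right]; ring
    have e2 : ⟪x i + x j, x i + x j⟫ = 2 + 2 * ⟪x i, x j⟫ := by
      simp only [inner_add_left, inner_add_right, inner_self_unit (hx _), real_inner_comm (x i) (x j)]; ring
    have e3 : ⟪x a + x b + x c, x a + x b + x c⟫ = 3 + 2 * (⟪x a, x b⟫ + ⟪x a, x c⟫ + ⟪x b, x c⟫) := by
      simp only [inner_add_left, inner_add_right, inner_self_unit (hx _), real_inner_comm (x a) (x b),
        real_inner_comm (x a) (x c), real_inner_comm (x b) (x c)]; ring
    rw [e1, e2, e3] at A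
    have l1 : 4.854 * 4.854 ≤ (⟪x i, x a⟫ + ⟪x i, x b⟫ + ⟪x i, x c⟫ + ⟪x j, x a⟫ + ⟪x j, x b⟫ + ⟪x j, x c⟫) *
       (⟪x i, x a⟫ + ⟪x i, x b⟫ + ⟪x i, x c⟫ + ⟪x j, x a⟫ + ⟪x j, x b⟫ + ⟪x j, x c⟫) := by
      have hs : (4.854 : ℝ) ≤ ⟪x i, x a⟫ + ⟪x i, x b⟫ + ⟪x i, x c⟫ + ⟪x j, x a⟫ + ⟪x j, x b⟫ + ⟪x j, x c⟫ := by
        norm_num at ia' ib' ic' ja' jb' jc' ⊢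
        linarith
      have h0 : (0 : ℝ) ≤ 4.854 := by norm_num
      exact mul_le_mul hs hs h0 (le_trans h0 hs)
    have l2 : (2 + 2 * ⟪x i, x j⟫) * (3 + 2 * (⟪x a, x b⟫ + ⟪x a, x c⟫ + ⟪x b, x c⟫)) ≤ 3.6182 * 6.00001 := by
      have : 0 ≤ 2 + 2 * ⟪x i, x j⟫ := by have := hj.2; norm_num at this ⊢; linarith
      have q1 : 2 + 2 * ⟪x i, x j⟫ ≤ 3.6182 := by norm_num at ij ⊢; linarith
      have q2 : 3 + 2 * (⟪x a, x b⟫ + ⟪x a, x c⟫ + ⟪x b, x c⟫) ≤ 6.00001 := by norm_num at m1 m2 m3 ⊢; linarith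
      exact mul_le_mul q1 q2 (by rw [← e3]; exact real_inner_self_nonneg) (by norm_num)
    norm_num at l1 l2
    linarith
  rcases main with h | h | h
  · exact ⟨i, j, a, b, hj.1, ia, ib, ja, jb, hab, hj.2, ia', ib', ja', jb', h⟩
  · exact ⟨i, j, a, c, hj.1, ia, ic, ja, jc, hac, hj.2, ia', ic', ja', jc', h⟩
  · exact ⟨i, j, b, c, hj.1, ib, ic, jb, jc, hbc, hj.2, ib', ic', jb', jc', h⟩

end SHC

open scoped RealInnerProductSpace
namespace SHC

lemma inner_comb {m : ℕ} (α : ℝ) (b : Fin m → E4) (hb : ∀ l, ‖b l‖ = 1)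
    (hb' : ∀ l l', l ≠ l' → ⟪b l, b l'⟫ = α) (c : Fin m → ℝ) (j : Fin m) :
    ⟪∑ l, c l • b l, b j⟫ = (1 - α) * c j + α * ∑ l, c l := by
  rw [sum_inner]
  have : ∀ l, ⟪c l • b l, b j⟫ = α * c l + (if l = j then (1 - α) * c l else 0) := by
    intro l
    rw [real_inner_smul_left]
    split_ifs with h
    · rw [h, inner_self_unit (hb j)]; ring
    · rw [hb' l j h]; ring
  rw [Finset.sum_congr rfl (fun l _ => this l), Finset.sum_add_distrib, ← Finset.mul_sum]
  simp
  ring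

lemma align_num (s z q p η : ℝ) (hs0 : 0 ≤ s) (hz0 : 0 ≤ z) (hq0 : 0 ≤ q) (hp0 : 0 ≤ p) (hη0 : 0 ≤ η) (hη : η ≤ 1 / 1000)
    (hp : p ^ 2 ≤ 0.81) (hs2 : s ^ 2 = 1 - p ^ 2) (hyn : z ^ 2 + q ^ 2 = 1) (hqp : |q - p| ≤ 32 * η) :
    |s - z| ≤ 160 * η ∧ 0 < z := by
  have hq1 : q ≤ 1 := by nlinarith
  have hp1 : p ≤ 1 := by nlinarith
  have hs4 : 2 / 5 ≤ s := by
    by_contra hcon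
    push Not at hcon
    have : s ^ 2 < 4 / 25 := by nlinarith
    norm_num at hp
    linarith
  have h1 : |s - z| ≤ 160 * η := by
    have e : (s - z) * (s + z) = (q - p) * (q + p) := by linear_combination hs2 - hyn
    have e' : |s - z| * (s + z) ≤ 32 * η * 2 := by
      rw [← abs_of_nonneg (by linarith : 0 ≤ s + z), ← abs_mul, e, abs_mul]
      apply mul_le_mul hqp _ (abs_nonneg _) (by linarith)
      rw [abs_of_nonneg (by linarith)]
      linarith
    have : |s - z| * (2 / 5) ≤ |s - z| * (s + z) :=
      mul_le_mul_of_nonneg_left (by linarith) (abs_nonneg _)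
    linarith
  refine ⟨h1, ?_⟩
  have := (abs_le.1 h1).2
  linarith

/-- one alignment step -/
lemma align_step {m : ℕ} (hm : m ≤ 3) (α : ℝ) (h1 : 0.8 < α) (h2 : α < 0.81) (b : Fin m → E4) (hb : ∀ l, ‖b l‖ = 1)
    (hb' : ∀ l l', l ≠ l' → ⟪b l, b l'⟫ = α) (y : E4) (hy : ‖y‖ = 1) (η : ℝ) (hη0 : 0 ≤ η) (hη : η ≤ 1 / 1000)
    (hyb : ∀ l, |⟪y, b l⟫ - α| ≤ η) :
    ∃ b0 : E4, ‖b0‖ = 1 ∧ (∀ l, ⟪b0, b l⟫ = α) ∧ ‖y - b0‖ ≤ 200 * η := by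
  have hm3 : (m : ℝ) ≤ 3 := by exact_mod_cast hm
  have hm0 : (0 : ℝ) ≤ m := Nat.cast_nonneg m
  have hden : 0 < 1 + (m - 1) * α := by nlinarith
  set κ : ℝ := α / (1 + (m - 1) * α) with hκ
  have hκe : κ * (1 + (m - 1) * α) = α := div_mul_cancel₀ _ hden.ne'
  have hκ0 : 0 ≤ κ := by rw [hκ]; apply div_nonneg <;> linarith
  have hκm : κ * m ≤ 1 := by
    by_contra hcon
    push Not at hcon
    have : κ * (1 + (m - 1) * α) = κ * (1 - α) + κ * m * α := by ring
    nlinarith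
  set p : E4 := ∑ l, κ • b l with hp
  have hpb : ∀ j, ⟪p, b j⟫ = α := by
    intro j
    rw [hp, inner_comb α b hb hb' (fun _ => κ) j]
    simp
    linarith
  set f : Fin m → ℝ := fun l => ⟪y, b l⟫ - α with hf
  set F : ℝ := ∑ l, f l with hF
  set d : Fin m → ℝ := fun l => (f l - κ * F) / (1 - α) with hd
  set D : E4 := ∑ l, d l • b l with hD
  have hsd : (1 - α) * ∑ l, d l = F - m * κ * F := by
    rw [hd, ← Finset.sum_div, Finset.sum_sub_distrib]
    simp only [Finset.sum_const, Finset.card_univ, Fintype.card_fin, nsmul_eq_mul]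
    field_simp [show (1 - α) ≠ 0 by linarith]
    rw [← hF]; ring
  have hDb : ∀ j, ⟪D, b j⟫ = f j := by
    intro j
    rw [hD, inner_comb α b hb hb' d j]
    have e : (1 - α) * d j = f j - κ * F := by
      rw [hd]; field_simp [show (1 - α) ≠ 0 by linarith]
    have e2 : α * ∑ l, d l = κ * F := by
      have h3 : (1 - α) * (α * ∑ l, d l) = (1 - α) * (κ * F) := by
        have : (1 - α) * (α * ∑ l, d l) = α * (F - m * κ * F) := by rw [← hsd]; ring
        rw [this]
        linear_combination (-F) * hκe
      exact mul_left_cancel₀ (by linarith : (1 - α) ≠ 0) h3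
    rw [e, e2]; ring
  have hFb : |F| ≤ m * η := by
    rw [hF]
    refine (Finset.abs_sum_le_sum_abs _ _).trans ?_
    refine (Finset.sum_le_sum (fun l _ => hyb l)).trans ?_
    simp
  have hdb : ∀ l, |d l| ≤ 2 * η / 0.19 := by
    intro l
    rw [hd]
    simp only
    rw [abs_div, abs_of_pos (by linarith : 0 < 1 - α)]
    have : |f l - κ * F| ≤ 2 * η := by
      refine (abs_sub _ _).trans ?_
      rw [abs_mul, abs_of_nonneg hκ0]
      have := hyb l
      have : κ * |F| ≤ κ * (m * η) := mul_le_mul_of_nonneg_left hFb hκ0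
      have : κ * m * η ≤ 1 * η := mul_le_mul_of_nonneg_right hκm hη0
      simp only [hf]
      linarith [hyb l]
    apply div_le_div₀ (by linarith) this (by norm_num) (by norm_num at h2 ⊢; linarith)
  have hDn : ‖D‖ ≤ 32 * η := by
    rw [hD]
    refine (norm_sum_le _ _).trans ?_
    have : ∀ l ∈ Finset.univ, ‖d l • b l‖ ≤ 2 * η / 0.19 := by
      intro l _
      rw [norm_smul, hb l, mul_one]; exact hdb l
    refine (Finset.sum_le_sum this).trans ?_
    simp only [Finset.sum_const, Finset.card_univ, Fintype.card_fin, nsmul_eq_mul]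
    have h5 : 0 ≤ 2 * η / 0.19 := by positivity
    have := mul_le_mul_of_nonneg_right hm3 h5
    norm_num at this ⊢
    linarith
  set q : E4 := p + D with hq
  set z : E4 := y - q with hz
  have hzb : ∀ j, ⟪z, b j⟫ = 0 := by
    intro j
    rw [hz, hq, inner_sub_left, inner_add_left, hpb, hDb]; simp [hf]
  have orth : ∀ c : Fin m → ℝ, ⟪z, ∑ l, c l • b l⟫ = 0 := by
    intro c
    rw [inner_sum]
    apply Finset.sum_eq_zero
    intro l _
    rw [real_inner_smul_right, hzb, mul_zero]
  have hzp : ⟪z, p⟫ = 0 := orth _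
  have hzq : ⟪z, q⟫ = 0 := by rw [hq, inner_add_right, hzp, orth d, add_zero]
  have hpn : ‖p‖ ^ 2 = κ * m * α := by
    rw [← real_inner_self_eq_norm_sq]
    conv_lhs => rw [hp]
    rw [sum_inner]
    have : ∀ l ∈ Finset.univ, ⟪κ • b l, p⟫ = κ * α := by
      intro l _
      rw [real_inner_smul_left, real_inner_comm, hpb]
    rw [Finset.sum_congr rfl this]
    simp; ring
  have hpn' : ‖p‖ ^ 2 ≤ 0.81 := by
    rw [hpn]; nlinarith
  have hyn : ‖z‖ ^ 2 + ‖q‖ ^ 2 = 1 := by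
    have : y = z + q := by rw [hz]; abel
    have h3 : ‖y‖ ^ 2 = ‖z‖ ^ 2 + 2 * ⟪z, q⟫ + ‖q‖ ^ 2 := by rw [this]; exact norm_add_sq_real z q
    rw [hy, hzq] at h3
    linarith
  set s : ℝ := Real.sqrt (1 - ‖p‖ ^ 2) with hs
  have hs2 : s ^ 2 = 1 - ‖p‖ ^ 2 := Real.sq_sqrt (sub_nonneg.2 (hpn'.trans (by norm_num)))
  have hs0 : 0 ≤ s := Real.sqrt_nonneg _
  have hqp : |‖q‖ - ‖p‖| ≤ 32 * η := by
    refine (abs_norm_sub_norm_le q p).trans ?_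
    rw [hq, add_sub_cancel_left]; exact hDn
  have hzn0 : 0 ≤ ‖z‖ := norm_nonneg z
  obtain ⟨hzs, hzpos⟩ := align_num s ‖z‖ ‖q‖ ‖p‖ η hs0 hzn0 (norm_nonneg q) (norm_nonneg p) hη0 hη hpn' hs2 hyn hqp
  refine ⟨p + (s / ‖z‖) • z, ?_, ?_, ?_⟩
  · have h3 := norm_add_sq_real p ((s / ‖z‖) • z)
    rw [real_inner_smul_right, real_inner_comm, hzp, norm_smul, Real.norm_eq_abs,
      abs_of_nonneg (div_nonneg hs0 hzn0), div_mul_cancel₀ _ hzpos.ne', hs2] at h3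
    have h4 : ‖p + (s / ‖z‖) • z‖ ^ 2 = 1 := by linarith
    exact (pow_eq_one_iff_of_nonneg (norm_nonneg _) two_ne_zero).1 h4
  · intro l
    rw [inner_add_left, hpb, real_inner_smul_left, hzb]; ring
  · have e : y - (p + (s / ‖z‖) • z) = D + (1 - s / ‖z‖) • z := by
      have : y = z + (p + D) := by rw [hz, hq]; abel
      rw [this, sub_smul, one_smul]; abel
    rw [e]
    refine (norm_add_le _ _).trans ?_
    rw [norm_smul, Real.norm_eq_abs]
    have : |1 - s / ‖z‖| * ‖z‖ = |s - ‖z‖| := by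
      rw [← abs_of_pos hzpos, ← abs_mul, abs_of_pos hzpos, sub_mul, div_mul_cancel₀ _ hzpos.ne', one_mul, abs_sub_comm]
    rw [this]
    linarith

/-- the vector with prescribed inner products with the tetrahedron -/
noncomputable def vec (φ : ℝ) (b : Fin 4 → E4) (ρ : Fin 4 → ℝ) : E4 :=
  ∑ m, ((1 + φ) * ρ m - (φ - 1) * ∑ l, ρ l) • b m

/-- the associated bilinear form -/
def NR (φ : ℝ) (ρ σ : Fin 4 → ℝ) : ℝ :=
  (1 + φ) * ∑ m, ρ m * σ m - (φ - 1) * ((∑ m, ρ m) * ∑ m, σ m)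

lemma vec_inner (φ : ℝ) (hφ : φ ^ 2 = φ + 1) (b : Fin 4 → E4) (hb : ∀ l, ‖b l‖ = 1)
    (hb' : ∀ l l', l ≠ l' → ⟪b l, b l'⟫ = φ / 2) (ρ : Fin 4 → ℝ) (j : Fin 4) :
    ⟪vec φ b ρ, b j⟫ = ρ j / 2 := by
  rw [vec, inner_comb (φ / 2) b hb hb' (fun m => (1 + φ) * ρ m - (φ - 1) * ∑ l, ρ l) j]
  simp only [Fin.sum_univ_four]
  linear_combination (-(ρ j) / 2  - (ρ 0 + ρ 1 + ρ 2 + ρ 3)) * hφ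

lemma vec_inner_vec (φ : ℝ) (hφ : φ ^ 2 = φ + 1) (b : Fin 4 → E4) (hb : ∀ l, ‖b l‖ = 1)
    (hb' : ∀ l l', l ≠ l' → ⟪b l, b l'⟫ = φ / 2) (ρ σ : Fin 4 → ℝ) :
    ⟪vec φ b ρ, vec φ b σ⟫ = NR φ ρ σ / 2 := by
  conv_lhs => rw [vec.eq_def φ b σ]
  rw [inner_sum]
  simp only [real_inner_smul_right, vec_inner φ hφ b hb hb', NR, Fin.sum_univ_four]
  ring

lemma frame_span (φ : ℝ) (hφ : φ ^ 2 = φ + 1) (h1 : 1.6 < φ) (h2 : φ < 1.62) (b : Fin 4 → E4) (hb : ∀ l, ‖b l‖ = 1)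
    (hb' : ∀ l l', l ≠ l' → ⟪b l, b l'⟫ = φ / 2) (v : E4) :
    v = vec φ b (fun m => 2 * ⟪v, b m⟫) := by
  have key : ∀ c : Fin 4 → ℝ, ∑ l, c l • b l = vec φ b (fun m => 2 * ⟪∑ l, c l • b l, b m⟫) := by
    intro c
    rw [vec]
    refine Finset.sum_congr rfl fun m _ => ?_
    congr 1
    simp only [inner_comb (φ / 2) b hb hb' c]
    simp only [Fin.sum_univ_four]
    linear_combination (c m + 2 * (c 0 + c 1 + c 2 + c 3)) * hφ
  have li : LinearIndependent ℝ b := by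
    rw [Fintype.linearIndependent_iff]
    intro c hc i
    have h : ∀ j, (1 - φ / 2) * c j + φ / 2 * ∑ l, c l = 0 := by
      intro j
      rw [← inner_comb (φ / 2) b hb hb' c j, hc, inner_zero_left]
    have hs : ∑ l, c l = 0 := by
      have h0 := h 0
      have h1' := h 1
      have h2' := h 2
      have h3 := h 3
      simp only [Fin.sum_univ_four] at *
      have : (1 + 3 * (φ / 2)) * (c 0 + c 1 + c 2 + c 3) = 0 := by linarith
      rcases mul_eq_zero.1 this with h | h
      · linarith
      · exact h
    have := h i
    rw [hs] at this
    have h5 : (1 - φ / 2) * c i = 0 := by linarith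
    rcases mul_eq_zero.1 h5 with h | h
    · norm_num at h2; linarith
    · exact h
  have hsp : Submodule.span ℝ (Set.range b) = ⊤ := li.span_eq_top_of_card_eq_finrank (by simp)
  have hv : v ∈ Submodule.span ℝ (Set.range b) := by rw [hsp]; trivial
  obtain ⟨c, hc⟩ := (Submodule.mem_span_range_iff_exists_fun ℝ).1 hv
  rw [← hc]
  exact key c

lemma frame_norm (φ : ℝ) (hφ : φ ^ 2 = φ + 1) (h1 : 1.6 < φ) (h2 : φ < 1.62) (b : Fin 4 → E4) (hb : ∀ l, ‖b l‖ = 1)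
    (hb' : ∀ l l', l ≠ l' → ⟪b l, b l'⟫ = φ / 2) (v : E4) :
    ‖v‖ ^ 2 ≤ 6 * ∑ m, ⟪v, b m⟫ ^ 2 := by
  rw [← real_inner_self_eq_norm_sq]
  conv_lhs => rw [frame_span φ hφ h1 h2 b hb hb' v]
  rw [vec_inner_vec φ hφ b hb hb', NR]
  simp only [Fin.sum_univ_four]
  set p0 := ⟪v, b 0⟫
  set p1 := ⟪v, b 1⟫
  set p2 := ⟪v, b 2⟫
  set p3 := ⟪v, b 3⟫
  have a : 0 ≤ (φ - 1) * (p0 + p1 + p2 + p3) ^ 2 := mul_nonneg (by linarith) (sq_nonneg _)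
  have c : 0 ≤ (1.62 - φ) * (p0 ^ 2 + p1 ^ 2 + p2 ^ 2 + p3 ^ 2) := mul_nonneg (by linarith) (by positivity)
  nlinarith [sq_nonneg p0, sq_nonneg p1, sq_nonneg p2, sq_nonneg p3]

lemma vec_sub (φ : ℝ) (b : Fin 4 → E4) (ρ σ : Fin 4 → ℝ) : vec φ b ρ - vec φ b σ = vec φ b (ρ - σ) := by
  simp only [vec, Fin.sum_univ_four, Pi.sub_apply]
  module

end SHC

open scoped RealInnerProductSpace
namespace SHC

lemma inner_close {y u v : E4} (hy : ‖y‖ = 1) {α η B : ℝ} (h : |⟪y, u⟫ - α| ≤ η) (hB : ‖u - v‖ ≤ B) :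
    |⟪y, v⟫ - α| ≤ η + B := by
  have e : ⟪y, v⟫ - α = (⟪y, u⟫ - α) - ⟪y, u - v⟫ := by rw [inner_sub_right]; ring
  have := abs_real_inner_le_norm y (u - v)
  rw [hy, one_mul] at this
  rw [e]
  refine (abs_sub _ _).trans ?_
  linarith

lemma align_tetra (α : ℝ) (h1 : 0.8 < α) (h2 : α < 0.81) (y0 y1 y2 y3 : E4)
    (n0 : ‖y0‖ = 1) (n1 : ‖y1‖ = 1) (n2 : ‖y2‖ = 1) (n3 : ‖y3‖ = 1) (η : ℝ) (hη0 : 0 ≤ η) (hη : η ≤ 1 / 10 ^ 9)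
    (h10 : |⟪y1, y0⟫ - α| ≤ η) (h20 : |⟪y2, y0⟫ - α| ≤ η) (h21 : |⟪y2, y1⟫ - α| ≤ η)
    (h30 : |⟪y3, y0⟫ - α| ≤ η) (h31 : |⟪y3, y1⟫ - α| ≤ η) (h32 : |⟪y3, y2⟫ - α| ≤ η) :
    ∃ b : Fin 4 → E4, (∀ l, ‖b l‖ = 1) ∧ (∀ l l', l ≠ l' → ⟪b l, b l'⟫ = α) ∧
      ‖y0 - b 0‖ ≤ 10 ^ 8 * η ∧ ‖y1 - b 1‖ ≤ 10 ^ 8 * η ∧ ‖y2 - b 2‖ ≤ 10 ^ 8 * η ∧ ‖y3 - b 3‖ ≤ 10 ^ 8 * η := by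
  obtain ⟨b1, m1, o1, d1⟩ := align_step (m := 1) (by norm_num) α h1 h2 ![y0] (by intro l; fin_cases l; simpa using n0)
    (by intro l l' h; exact absurd (Subsingleton.elim l l') h) y1 n1 η hη0 (by linarith)
    (by intro l; fin_cases l; simpa using h10)
  have o10 : ⟪b1, y0⟫ = α := by simpa using o1 0
  have o01 : ⟪y0, b1⟫ = α := by rw [real_inner_comm]; exact o10
  obtain ⟨b2, m2, o2, d2⟩ := align_step (m := 2) (by norm_num) α h1 h2 ![y0, b1]
    (by intro l; fin_cases l <;> simp [n0, m1])
    (by intro l l' h; fin_cases l <;> fin_cases l' <;> first | exact absurd rfl h | simpa using o10 | simpa using o01)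
    y2 n2 (201 * η) (by linarith) (by linarith)
    (by
      intro l; fin_cases l
      · simp; linarith
      · have := inner_close n2 h21 d1
        simp; linarith)
  have o20 : ⟪b2, y0⟫ = α := by simpa using o2 0
  have o02 : ⟪y0, b2⟫ = α := by rw [real_inner_comm]; exact o20
  have o21 : ⟪b2, b1⟫ = α := by simpa using o2 1
  have o12 : ⟪b1, b2⟫ = α := by rw [real_inner_comm]; exact o21
  obtain ⟨b3, m3, o3, d3⟩ := align_step (m := 3) (by norm_num) α h1 h2 ![y0, b1, b2]
    (by intro l; fin_cases l <;> simp [n0, m1, m2])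
    (by intro l l' h; fin_cases l <;> fin_cases l' <;> first | exact absurd rfl h | simpa using o10 | simpa using o01 | simpa using o20 | simpa using o02 | simpa using o21 | simpa using o12)
    y3 n3 (40201 * η) (by linarith) (by linarith)
    (by
      intro l; fin_cases l
      · simp; linarith
      · have := inner_close n3 h31 d1
        simp; linarith
      · have := inner_close n3 h32 d2
        simp; linarith)
  have o30 : ⟪b3, y0⟫ = α := by simpa using o3 0
  have o03 : ⟪y0, b3⟫ = α := by rw [real_inner_comm]; exact o30
  have o31 : ⟪b3, b1⟫ = α := by simpa using o3 1
  have o13 : ⟪b1, b3⟫ = α := by rw [real_inner_comm]; exact o31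
  have o32 : ⟪b3, b2⟫ = α := by simpa using o3 2
  have o23 : ⟪b2, b3⟫ = α := by rw [real_inner_comm]; exact o32
  refine ⟨![y0, b1, b2, b3], ?_, ?_, ?_, ?_, ?_, ?_⟩
  · intro l; fin_cases l <;> simp [n0, m1, m2, m3]
  · intro l l' h
    fin_cases l <;> fin_cases l' <;> first | exact absurd rfl h | simpa using o10 | simpa using o01 | simpa using o20 | simpa using o02 | simpa using o21 | simpa using o12 | simpa using o30 | simpa using o03 | simpa using o31 | simpa using o13 | simpa using o32 | simpa using o23
  · simp; positivity
  · simp; linarith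
  · simp; linarith
  · simp; linarith

/-- an explicit tetrahedron -/
lemma exists_exact_tetra (φ : ℝ) (hφ : φ ^ 2 = φ + 1) :
    ∃ b : Fin 4 → E4, (∀ l, ‖b l‖ = 1) ∧ (∀ l l', l ≠ l' → ⟪b l, b l'⟫ = φ / 2) := by
  refine ⟨![!₂[1, 0, 0, 0], !₂[φ / 2, 1 / 2, (φ - 1) / 2, 0], !₂[φ / 2, 1 / 2, -(φ - 1) / 2, 0],
    !₂[φ / 2, (φ - 1) / 2, 0, 1 / 2]], ?_, ?_⟩
  · intro l
    rw [← pow_eq_one_iff_of_nonneg (norm_nonneg _) two_ne_zero, ← real_inner_self_eq_norm_sq, inner4]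
    fin_cases l <;> simp
    all_goals linear_combination (1 / 2) * hφ
  · intro l l' h
    rw [inner4]
    fin_cases l <;> fin_cases l' <;> simp at h ⊢
    all_goals ring_nf
    all_goals try linear_combination (1 / 4) * hφ

end SHC

open scoped RealInnerProductSpace
namespace SHC

/-- `a + b φ` with integer `a b` -/
structure Zp where
  a : ℤ
  b : ℤ
  deriving DecidableEq

structure Code where
  c0 : Zp
  c1 : Zp
  c2 : Zp
  c3 : Zp
  deriving DecidableEq

def Zp.mul (x y : Zp) : Zp := ⟨x.a * y.a + x.b * y.b, x.a * y.b + x.b * y.a + x.b * y.b⟩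
def Zp.add (x y : Zp) : Zp := ⟨x.a + y.a, x.b + y.b⟩
/-- combination `(1+φ) P - (φ-1) U` -/
def Zp.comb (p u : Zp) : Zp := ⟨p.a + p.b + u.a - u.b, p.a + 2 * p.b - u.a⟩

def NZ (r s : Code) : Zp :=
  Zp.comb (((r.c0.mul s.c0).add (r.c1.mul s.c1)).add ((r.c2.mul s.c2).add (r.c3.mul s.c3)))
    (((r.c0.add r.c1).add (r.c2.add r.c3)).mul ((s.c0.add s.c1).add (s.c2.add s.c3)))

def z0 : Zp := ⟨-2, 0⟩
def z1 : Zp := ⟨0, -1⟩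
def z2 : Zp := ⟨-1, 0⟩
def z3 : Zp := ⟨1, -1⟩
def z4 : Zp := ⟨0, 0⟩
def z5 : Zp := ⟨-1, 1⟩
def z6 : Zp := ⟨1, 0⟩
def z7 : Zp := ⟨0, 1⟩
def z8 : Zp := ⟨2, 0⟩

def zs : List Zp := [z0, z1, z2, z3, z4, z5, z6, z7, z8]
def zok : List Zp := [z0, z1, z2, z3, z4, z5, z6, z7]

def tab : List Code := [
  ⟨z8, z7, z7, z7⟩, ⟨z7, z8, z7, z7⟩, ⟨z7, z7, z8, z7⟩, ⟨z7, z7, z7, z8⟩, ⟨z6, z7, z7, z7⟩, ⟨z6, z6, z7, z7⟩,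
  ⟨z5, z6, z6, z7⟩, ⟨z4, z5, z6, z6⟩, ⟨z4, z4, z5, z6⟩, ⟨z3, z4, z4, z5⟩, ⟨z2, z3, z4, z4⟩, ⟨z2, z2, z3, z4⟩,
  ⟨z1, z2, z2, z3⟩, ⟨z1, z1, z2, z2⟩, ⟨z1, z1, z1, z2⟩, ⟨z0, z1, z1, z1⟩, ⟨z1, z0, z1, z1⟩, ⟨z1, z1, z0, z1⟩,
  ⟨z1, z1, z1, z0⟩, ⟨z1, z1, z2, z1⟩, ⟨z1, z2, z1, z1⟩, ⟨z1, z2, z1, z2⟩, ⟨z1, z2, z2, z1⟩, ⟨z1, z2, z3, z2⟩,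
  ⟨z1, z3, z2, z2⟩, ⟨z2, z1, z1, z1⟩, ⟨z2, z1, z1, z2⟩, ⟨z2, z1, z2, z1⟩, ⟨z2, z1, z2, z3⟩, ⟨z2, z1, z3, z2⟩,
  ⟨z2, z2, z1, z1⟩, ⟨z2, z2, z1, z3⟩, ⟨z2, z2, z3, z1⟩, ⟨z2, z2, z4, z3⟩, ⟨z2, z3, z1, z2⟩, ⟨z2, z3, z2, z1⟩,
  ⟨z2, z3, z2, z4⟩, ⟨z2, z3, z4, z2⟩, ⟨z2, z4, z2, z3⟩, ⟨z2, z4, z3, z2⟩, ⟨z2, z4, z3, z4⟩, ⟨z2, z4, z4, z3⟩,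
  ⟨z2, z4, z4, z4⟩, ⟨z3, z1, z2, z2⟩, ⟨z3, z2, z1, z2⟩, ⟨z3, z2, z2, z1⟩, ⟨z3, z2, z2, z4⟩, ⟨z3, z2, z4, z2⟩,
  ⟨z3, z2, z4, z4⟩, ⟨z3, z4, z2, z2⟩, ⟨z3, z4, z2, z4⟩, ⟨z3, z4, z4, z2⟩, ⟨z3, z4, z5, z4⟩, ⟨z3, z5, z4, z4⟩,
  ⟨z4, z2, z2, z3⟩, ⟨z4, z2, z3, z2⟩, ⟨z4, z2, z3, z4⟩, ⟨z4, z2, z4, z3⟩, ⟨z4, z2, z4, z4⟩, ⟨z4, z3, z2, z2⟩,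
  ⟨z4, z3, z2, z4⟩, ⟨z4, z3, z4, z2⟩, ⟨z4, z3, z4, z5⟩, ⟨z4, z3, z5, z4⟩, ⟨z4, z4, z2, z3⟩, ⟨z4, z4, z2, z4⟩,
  ⟨z4, z4, z3, z2⟩, ⟨z4, z4, z3, z5⟩, ⟨z4, z4, z4, z2⟩, ⟨z4, z4, z4, z6⟩, ⟨z4, z4, z5, z3⟩, ⟨z4, z4, z6, z4⟩,
  ⟨z4, z4, z6, z5⟩, ⟨z4, z5, z3, z4⟩, ⟨z4, z5, z4, z3⟩, ⟨z4, z5, z4, z6⟩, ⟨z4, z5, z6, z4⟩, ⟨z4, z6, z4, z4⟩,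
  ⟨z4, z6, z4, z5⟩, ⟨z4, z6, z5, z4⟩, ⟨z4, z6, z5, z6⟩, ⟨z4, z6, z6, z5⟩, ⟨z5, z3, z4, z4⟩, ⟨z5, z4, z3, z4⟩,
  ⟨z5, z4, z4, z3⟩, ⟨z5, z4, z4, z6⟩, ⟨z5, z4, z6, z4⟩, ⟨z5, z4, z6, z6⟩, ⟨z5, z6, z4, z4⟩, ⟨z5, z6, z4, z6⟩,
  ⟨z5, z6, z6, z4⟩, ⟨z5, z6, z7, z6⟩, ⟨z5, z7, z6, z6⟩, ⟨z6, z4, z4, z4⟩, ⟨z6, z4, z4, z5⟩, ⟨z6, z4, z5, z4⟩,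
  ⟨z6, z4, z5, z6⟩, ⟨z6, z4, z6, z5⟩, ⟨z6, z5, z4, z4⟩, ⟨z6, z5, z4, z6⟩, ⟨z6, z5, z6, z4⟩, ⟨z6, z5, z6, z7⟩,
  ⟨z6, z5, z7, z6⟩, ⟨z6, z6, z4, z5⟩, ⟨z6, z6, z5, z4⟩, ⟨z6, z6, z5, z7⟩, ⟨z6, z6, z7, z5⟩, ⟨z6, z7, z5, z6⟩,
  ⟨z6, z7, z6, z5⟩, ⟨z6, z7, z6, z7⟩, ⟨z6, z7, z7, z6⟩, ⟨z7, z5, z6, z6⟩, ⟨z7, z6, z5, z6⟩, ⟨z7, z6, z6, z5⟩,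
  ⟨z7, z6, z6, z7⟩, ⟨z7, z6, z7, z6⟩, ⟨z7, z6, z7, z7⟩, ⟨z7, z7, z6, z6⟩, ⟨z7, z7, z6, z7⟩, ⟨z7, z7, z7, z6⟩]

def trip : List (ℕ × ℕ × ℕ) := [
  (0, 0, 0), (0, 0, 0), (0, 0, 0), (0, 0, 0), (1, 2, 3), (2, 3, 4), (3, 4, 5), (4, 5, 6),
  (5, 6, 7), (6, 7, 8), (7, 8, 9), (8, 9, 10), (9, 10, 11), (10, 11, 12), (11, 12, 13), (12, 13, 14),
  (13, 14, 15), (14, 15, 16), (15, 16, 17), (13, 15, 16), (15, 17, 18), (12, 14, 15), (15, 18, 19), (10, 12, 13),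
  (12, 15, 21), (16, 17, 18), (14, 16, 17), (16, 18, 19), (11, 13, 14), (13, 16, 19), (17, 18, 20), (14, 17, 21),
  (18, 19, 22), (10, 13, 23), (17, 20, 21), (18, 20, 22), (9, 11, 12), (19, 22, 23), (20, 21, 24), (20, 22, 24),
  (9, 12, 36), (22, 23, 24), (7, 9, 10), (16, 25, 26), (17, 25, 26), (18, 25, 27), (11, 14, 28), (19, 27, 29),
  (8, 10, 11), (20, 30, 34), (21, 31, 34), (22, 32, 35), (7, 10, 42), (24, 38, 39), (25, 26, 43), (25, 27, 43),
  (26, 28, 43), (27, 29, 43), (28, 29, 43), (25, 30, 44), (26, 31, 44), (27, 32, 45), (8, 11, 48), (29, 33, 47),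
  (30, 34, 44), (31, 34, 44), (30, 35, 45), (31, 36, 46), (32, 35, 45), (6, 8, 9), (32, 37, 47), (33, 37, 47),
  (5, 7, 8), (34, 38, 49), (35, 39, 49), (6, 9, 69), (37, 41, 51), (38, 39, 49), (38, 40, 50), (39, 41, 51),
  (4, 6, 7), (4, 7, 80), (43, 54, 55), (44, 54, 59), (45, 55, 59), (46, 56, 60), (47, 57, 61), (5, 8, 72),
  (49, 64, 66), (50, 65, 67), (51, 68, 70), (2, 4, 5), (4, 80, 81), (54, 55, 59), (54, 56, 60), (55, 57, 61),
  (56, 58, 62), (57, 58, 63), (59, 64, 66), (60, 65, 67), (61, 68, 70), (3, 5, 6), (2, 5, 91), (64, 65, 73),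
  (66, 68, 74), (3, 6, 101), (2, 91, 102), (73, 77, 78), (1, 92, 107), (1, 3, 4), (1, 2, 4), (82, 93, 94),
  (83, 93, 94), (0, 111, 112), (0, 111, 112), (0, 111, 113), (0, 2, 3), (0, 112, 113), (0, 1, 3), (0, 1, 2)]

lemma tab_length : tab.length = 120 := by decide +kernel

def pw : List Code → Bool
  | [] => true
  | c :: cs => cs.all (fun d => decide (NZ c d ∈ zok)) && pw cs

lemma pw_tab : pw tab = true := by decide +kernel

lemma norm_tab : (tab.all (fun c => decide (NZ c c = z8))) = true := by decide +kernel

/-- norm test -/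
def sepTest (c : Code) : Bool :=
  let n := NZ c c
  (decide (n.b.natAbs + 1000 ≤ (100000 * (n.a - 2) + 161803 * n.b).natAbs)) || (decide (c ∈ tab))

lemma sep_all : (zs.all fun a => zs.all fun b => zs.all fun c => zs.all fun d => sepTest ⟨a, b, c, d⟩) = true := by
  decide +kernel

def code (i : Fin 120) : Code := tab.get (i.cast tab_length.symm)

lemma trip_ok : ∀ n : Fin 120, 4 ≤ n.val → ∃ a b c : Fin 120, a < n ∧ b < n ∧ c < n ∧
    NZ (code a) (code b) = z7 ∧ NZ (code a) (code c) = z7 ∧ NZ (code b) (code c) = z7 ∧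
    NZ (code n) (code a) = z7 ∧ NZ (code n) (code b) = z7 ∧ NZ (code n) (code c) = z7 := by
  have h : ∀ n : Fin 120, 4 ≤ n.val →
    let a : Fin 120 := Fin.ofNat 120 (trip.getD n.val (0, 0, 0)).1
    let b : Fin 120 := Fin.ofNat 120 (trip.getD n.val (0, 0, 0)).2.1
    let c : Fin 120 := Fin.ofNat 120 (trip.getD n.val (0, 0, 0)).2.2
    a < n ∧ b < n ∧ c < n ∧
    NZ (code a) (code b) = z7 ∧ NZ (code a) (code c) = z7 ∧ NZ (code b) (code c) = z7 ∧
    NZ (code n) (code a) = z7 ∧ NZ (code n) (code b) = z7 ∧ NZ (code n) (code c) = z7 := by decide +kernel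
  intro n hn
  exact ⟨_, _, _, h n hn⟩

end SHC

open scoped RealInnerProductSpace
namespace SHC

noncomputable def Zp.toR (φ : ℝ) (z : Zp) : ℝ := z.a + z.b * φ

noncomputable def Code.toR (φ : ℝ) (c : Code) : Fin 4 → ℝ := ![c.c0.toR φ, c.c1.toR φ, c.c2.toR φ, c.c3.toR φ]

lemma NR_toR (φ : ℝ) (hφ : φ ^ 2 = φ + 1) (c d : Code) : NR φ (c.toR φ) (d.toR φ) = (NZ c d).toR φ := by
  obtain ⟨⟨a0, b0⟩, ⟨a1, b1⟩, ⟨a2, b2⟩, ⟨a3, b3⟩⟩ := c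
  obtain ⟨⟨c0, d0⟩, ⟨c1, d1⟩, ⟨c2, d2⟩, ⟨c3, d3⟩⟩ := d
  simp only [NR, Fin.sum_univ_four, Code.toR, Zp.toR, NZ, Zp.comb, Zp.mul, Zp.add, Matrix.cons_val]
  push_cast
  have h3 : φ ^ 3 = 2 * φ + 1 := by
    linear_combination (φ + 1) * hφ
  ring_nf
  simp only [h3, hφ]
  ring

noncomputable def vv (φ : ℝ) (b : Fin 4 → E4) (n : Fin 120) : E4 := vec φ b ((code n).toR φ)

lemma code_mem (n : Fin 120) : code n ∈ tab := List.get_mem _ _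

lemma mem_code {c : Code} (h : c ∈ tab) : ∃ n, code n = c := by
  obtain ⟨i, hi⟩ := List.get_of_mem h
  exact ⟨i.cast tab_length, by rw [← hi]; rfl⟩

lemma NZ_self (n : Fin 120) : NZ (code n) (code n) = z8 := by
  have := List.all_eq_true.1 norm_tab _ (code_mem n)
  exact of_decide_eq_true this

lemma pw_pairwise : ∀ l : List Code, pw l = true → l.Pairwise (fun c d => NZ c d ∈ zok)
  | [], _ => List.Pairwise.nil
  | c :: cs, h => by
    rw [pw, Bool.and_eq_true] at h
    refine List.Pairwise.cons ?_ (pw_pairwise cs h.2)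
    intro d hd
    exact of_decide_eq_true (List.all_eq_true.1 h.1 d hd)

lemma NZ_lt (i j : Fin 120) (h : i < j) : NZ (code i) (code j) ∈ zok :=
  List.pairwise_iff_get.1 (pw_pairwise tab pw_tab) (i.cast tab_length.symm) (j.cast tab_length.symm) h

lemma zok_le (φ : ℝ) (h1 : 1.61803 < φ) (h2 : φ < 1.61804) (z : Zp) (hz : z ∈ zok) : z.toR φ ≤ φ := by
  norm_num at h1 h2
  simp only [zok, List.mem_cons, List.not_mem_nil, or_false] at hz
  rcases hz with rfl | rfl | rfl | rfl | rfl | rfl | rfl | rfl <;>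
    simp [Zp.toR, z0, z1, z2, z3, z4, z5, z6, z7] <;> linarith

section
variable (φ : ℝ) (hφ : φ ^ 2 = φ + 1) (h1 : 1.61803 < φ) (h2 : φ < 1.61804) (b : Fin 4 → E4) (hb : ∀ l, ‖b l‖ = 1)
    (hb' : ∀ l l', l ≠ l' → ⟪b l, b l'⟫ = φ / 2)

lemma vv_inner (hφ : φ ^ 2 = φ + 1) (hb : ∀ l, ‖b l‖ = 1) (hb' : ∀ l l', l ≠ l' → ⟪b l, b l'⟫ = φ / 2)
    (i j : Fin 120) : ⟪vv φ b i, vv φ b j⟫ = (NZ (code i) (code j)).toR φ / 2 := by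
  rw [vv, vv, vec_inner_vec φ hφ b hb hb', NR_toR φ hφ]

lemma vv_norm (hφ : φ ^ 2 = φ + 1) (hb : ∀ l, ‖b l‖ = 1) (hb' : ∀ l l', l ≠ l' → ⟪b l, b l'⟫ = φ / 2)
    (i : Fin 120) : ‖vv φ b i‖ = 1 := by
  rw [← pow_eq_one_iff_of_nonneg (norm_nonneg _) two_ne_zero, ← real_inner_self_eq_norm_sq, vv_inner φ b hφ hb hb', NZ_self]
  simp [z8, Zp.toR]

lemma vv_inner_le (hφ : φ ^ 2 = φ + 1) (h1 : 1.61803 < φ) (h2 : φ < 1.61804) (hb : ∀ l, ‖b l‖ = 1)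
    (hb' : ∀ l l', l ≠ l' → ⟪b l, b l'⟫ = φ / 2)
    (i j : Fin 120) (hij : i ≠ j) : ⟪vv φ b i, vv φ b j⟫ ≤ φ / 2 := by
  rcases lt_or_gt_of_ne hij with h | h
  · rw [vv_inner φ b hφ hb hb']
    have := zok_le φ h1 h2 _ (NZ_lt i j h)
    linarith
  · rw [real_inner_comm, vv_inner φ b hφ hb hb']
    have := zok_le φ h1 h2 _ (NZ_lt j i h)
    linarith

lemma vv_inner_z7 (hφ : φ ^ 2 = φ + 1) (hb : ∀ l, ‖b l‖ = 1) (hb' : ∀ l l', l ≠ l' → ⟪b l, b l'⟫ = φ / 2)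
    (i j : Fin 120) (hij : NZ (code i) (code j) = z7) : ⟪vv φ b i, vv φ b j⟫ = φ / 2 := by
  rw [vv_inner φ b hφ hb hb', hij]
  simp [z7, Zp.toR]

lemma code_basis : code 0 = ⟨z8, z7, z7, z7⟩ ∧ code 1 = ⟨z7, z8, z7, z7⟩ ∧ code 2 = ⟨z7, z7, z8, z7⟩ ∧
    code 3 = ⟨z7, z7, z7, z8⟩ := by decide +kernel

lemma vv_basis (hφ : φ ^ 2 = φ + 1) (h1 : 1.61803 < φ) (h2 : φ < 1.61804) (hb : ∀ l, ‖b l‖ = 1)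
    (hb' : ∀ l l', l ≠ l' → ⟪b l, b l'⟫ = φ / 2) :
    vv φ b 0 = b 0 ∧ vv φ b 1 = b 1 ∧ vv φ b 2 = b 2 ∧ vv φ b 3 = b 3 := by
  have F := frame_span φ hφ (by norm_num at h1 ⊢; linarith) (by norm_num at h2 ⊢; linarith) b hb hb'
  have e : ∀ i, (fun m => 2 * ⟪b i, b m⟫) = fun m => if i = m then 2 else φ := by
    intro i
    funext m
    split_ifs with h
    · rw [← h, inner_self_unit (hb i)]; norm_num
    · rw [hb' i m h]; ring
  obtain ⟨c0, c1, c2, c3⟩ := code_basis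
  refine ⟨?_, ?_, ?_, ?_⟩
  · rw [F (b 0), e, vv, c0]
    congr 1
    funext m
    fin_cases m <;> simp [Code.toR, Zp.toR, z8, z7]
  · rw [F (b 1), e, vv, c1]
    congr 1
    funext m
    fin_cases m <;> simp [Code.toR, Zp.toR, z8, z7]
  · rw [F (b 2), e, vv, c2]
    congr 1
    funext m
    fin_cases m <;> simp [Code.toR, Zp.toR, z8, z7]
  · rw [F (b 3), e, vv, c3]
    congr 1
    funext m
    fin_cases m <;> simp [Code.toR, Zp.toR, z8, z7]

lemma sep_code (h1 : 1.61803 < φ) (h2 : φ < 1.61804) (c : Code)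
    (m0 : c.c0 ∈ zs) (m1 : c.c1 ∈ zs) (m2 : c.c2 ∈ zs) (m3 : c.c3 ∈ zs) :
    c ∈ tab ∨ 0.01 ≤ |(NZ c c).toR φ - 2| := by
  have h := sep_all
  simp only [List.all_eq_true] at h
  have h' := h _ m0 _ m1 _ m2 _ m3
  rw [sepTest, Bool.or_eq_true] at h'
  rcases h' with h' | h'
  · right
    have h3 := of_decide_eq_true h'
    generalize NZ c c = z at h3
    have h4 : |z.b| + 1000 ≤ |100000 * (z.a - 2) + 161803 * z.b| := by
      rw [Int.abs_eq_natAbs, Int.abs_eq_natAbs]; exact_mod_cast h3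
    have h5 : |(z.b : ℝ)| + 1000 ≤ |100000 * ((z.a : ℝ) - 2) + 161803 * (z.b : ℝ)| := by exact_mod_cast h4
    have e : 100000 * (z.toR φ - 2) = (100000 * ((z.a : ℝ) - 2) + 161803 * (z.b : ℝ)) + (z.b : ℝ) * (100000 * φ - 161803) := by
      rw [Zp.toR]; ring
    have h6 : |(z.b : ℝ) * (100000 * φ - 161803)| ≤ |(z.b : ℝ)| := by
      rw [abs_mul]
      apply mul_le_of_le_one_right (abs_nonneg _)
      norm_num at h1 h2
      rw [abs_le]; constructor <;> linarith
    have h7 : 1000 ≤ |100000 * (z.toR φ - 2)| := by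
      rw [e]
      have := abs_sub_abs_le_abs_add (100000 * ((z.a : ℝ) - 2) + 161803 * (z.b : ℝ)) ((z.b : ℝ) * (100000 * φ - 161803))
      linarith
    rw [abs_mul, abs_of_pos (by norm_num : (0 : ℝ) < 100000)] at h7
    norm_num
    linarith
  · left; exact of_decide_eq_true h'

lemma round_vv (hφ : φ ^ 2 = φ + 1) (h1 : 1.61803 < φ) (h2 : φ < 1.61804) (hb : ∀ l, ‖b l‖ = 1)
    (hb' : ∀ l l', l ≠ l' → ⟪b l, b l'⟫ = φ / 2) (u : E4) (hu : ‖u‖ = 1)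
    (h : ∀ m, ∃ z ∈ zs, |2 * ⟪u, b m⟫ - z.toR φ| ≤ 1 / 10 ^ 9) : ∃ n, ‖u - vv φ b n‖ ≤ 1 / 10 ^ 8 := by
  choose z hz hd using h
  have F := frame_norm φ hφ (by norm_num at h1 ⊢; linarith) (by norm_num at h2 ⊢; linarith) b hb hb'
  set c : Code := ⟨z 0, z 1, z 2, z 3⟩ with hc
  have hcm : ∀ m, c.toR φ m = (z m).toR φ := by
    intro m; fin_cases m <;> simp [Code.toR, hc]
  have hclose : ‖u - vec φ b (c.toR φ)‖ ≤ 1 / 10 ^ 8 := by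
    have a := F (u - vec φ b (c.toR φ))
    have hm : ∀ m ∈ Finset.univ, ⟪u - vec φ b (c.toR φ), b m⟫ ^ 2 ≤ 1 / 10 ^ 18 := by
      intro m _
      rw [inner_sub_left, vec_inner φ hφ b hb hb', hcm]
      have := hd m
      rw [abs_le] at this
      nlinarith
    have := Finset.sum_le_sum hm
    simp only [Finset.sum_const, Finset.card_univ, Fintype.card_fin, nsmul_eq_mul] at this
    refine abs_le_of_sq_le_sq' ?_ (by positivity) |>.2
    norm_num at this ⊢
    linarith
  have hn : |‖vec φ b (c.toR φ)‖ - 1| ≤ 1 / 10 ^ 8 := by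
    have h9 := (abs_norm_sub_norm_le _ _).trans hclose
    rwa [hu, abs_sub_comm] at h9
  have hn2 : ‖vec φ b (c.toR φ)‖ ^ 2 = (NZ c c).toR φ / 2 := by
    rw [← real_inner_self_eq_norm_sq, vec_inner_vec φ hφ b hb hb', NR_toR φ hφ]
  rcases sep_code φ h1 h2 c (hz 0) (hz 1) (hz 2) (hz 3) with h | h
  · obtain ⟨n, hn⟩ := mem_code h
    exact ⟨n, by rw [vv, hn]; exact hclose⟩
  · exfalso
    have e : (NZ c c).toR φ - 2 = 2 * (‖vec φ b (c.toR φ)‖ - 1) * (‖vec φ b (c.toR φ)‖ + 1) := by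
      linear_combination (-2) * hn2
    rw [e] at h
    generalize ‖vec φ b (c.toR φ)‖ = t at h hn
    rw [abs_mul, abs_mul] at h
    have h8 : |t + 1| ≤ 3 := by
      rw [abs_le] at hn ⊢
      constructor <;> linarith
    have h9 : |t - 1| * |t + 1| ≤ 1 / 10 ^ 8 * 3 := mul_le_mul hn h8 (abs_nonneg _) (by positivity)
    rw [abs_two] at h
    norm_num at h h9
    linarith

end

end SHC

open scoped RealInnerProductSpace
namespace SHC

lemma far_of_inner {u v : E4} (hu : ‖u‖ = 1) (hv : ‖v‖ = 1) (h : ⟪u, v⟫ ≤ 0.81) : 0.5 < ‖u - v‖ := by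
  have := norm_sub_sq_real u v
  rw [hu, hv] at this
  by_contra hcon
  push Not at hcon
  have h3 : ‖u - v‖ ^ 2 ≤ 0.5 ^ 2 := pow_le_pow_left₀ (norm_nonneg _) hcon 2
  norm_num at h h3
  linarith

lemma prop_step (φ : ℝ) (hφ : φ ^ 2 = φ + 1) (h1 : 1.61803 < φ) (h2 : φ < 1.61804)
    (va vb vc vd xa xb xc xd : E4) (η B : ℝ) (hη : 0 ≤ η) (hηB : η ≤ B)
    (na : ‖va‖ = 1) (nb : ‖vb‖ = 1) (nc : ‖vc‖ = 1) (nd : ‖vd‖ = 1)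
    (hab : ⟪va, vb⟫ = φ / 2) (hac : ⟪va, vc⟫ = φ / 2) (had : ⟪va, vd⟫ = φ / 2)
    (hbc : ⟪vb, vc⟫ = φ / 2) (hbd : ⟪vb, vd⟫ = φ / 2) (hcd : ⟪vc, vd⟫ = φ / 2)
    (nxa : ‖xa‖ = 1) (ca : ‖xa - va‖ ≤ 1 / 10 ^ 8)
    (hb : |⟪xa, xb⟫ - φ / 2| ≤ η) (hc : |⟪xa, xc⟫ - φ / 2| ≤ η) (hd : |⟪xa, xd⟫ - φ / 2| ≤ η)
    (cb : ‖xb - vb‖ ≤ B) (cc : ‖xc - vc‖ ≤ B) (cd : ‖xd - vd‖ ≤ B) : ‖xa - va‖ ≤ 9 * B := by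
  have F := frame_norm φ hφ (by norm_num at h1 ⊢; linarith) (by norm_num at h2 ⊢; linarith) ![va, vb, vc, vd]
    (by intro l; fin_cases l <;> simp [na, nb, nc, nd])
    (by
      have hba : ⟪vb, va⟫ = φ / 2 := by rw [real_inner_comm]; exact hab
      have hca : ⟪vc, va⟫ = φ / 2 := by rw [real_inner_comm]; exact hac
      have hda : ⟪vd, va⟫ = φ / 2 := by rw [real_inner_comm]; exact had
      have hcb : ⟪vc, vb⟫ = φ / 2 := by rw [real_inner_comm]; exact hbc
      have hdb : ⟪vd, vb⟫ = φ / 2 := by rw [real_inner_comm]; exact hbd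
      have hdc : ⟪vd, vc⟫ = φ / 2 := by rw [real_inner_comm]; exact hcd
      intro l l' h
      fin_cases l <;> fin_cases l' <;> first | exact absurd rfl h | simpa using hab | simpa using hac | simpa using had | simpa using hbc | simpa using hbd | simpa using hcd | simpa using hba | simpa using hca | simpa using hda | simpa using hcb | simpa using hdb | simpa using hdc) (xa - va)
  simp only [Fin.sum_univ_four, Matrix.cons_val] at F
  have key : ∀ xv v : E4, |⟪xa, xv⟫ - φ / 2| ≤ η → ‖xv - v‖ ≤ B → ⟪va, v⟫ = φ / 2 →
      ⟪xa - va, v⟫ ^ 2 ≤ (2 * B) ^ 2 := by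
    intro xv v q1 q2 q3
    have := inner_close nxa q1 q2
    rw [inner_sub_left, q3]
    apply sq_le_sq'
    · rw [abs_le] at this; linarith
    · rw [abs_le] at this; linarith
  have kb := key xb vb hb cb hab
  have kc := key xc vc hc cc hac
  have kd := key xd vd hd cd had
  have ka : ⟪xa - va, va⟫ = - ‖xa - va‖ ^ 2 / 2 := by
    rw [norm_sub_sq_real, inner_sub_left, nxa, na, inner_self_unit na]; ring
  rw [ka] at F
  generalize ‖xa - va‖ = t at *
  have ht : 0 ≤ t ^ 2 := sq_nonneg t
  have hB : 0 ≤ B := hη.trans hηB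
  by_cases htn : t ≤ 0
  · linarith
  push Not at htn
  have h4 : t ^ 2 ≤ 1 / 10 ^ 8 := by
    have : t ^ 2 ≤ (1 / 10 ^ 8) ^ 2 := pow_le_pow_left₀ htn.le ca 2
    norm_num at this ⊢
    linarith
  have h5 : (-t ^ 2 / 2) ^ 2 ≤ 1 / 10 ^ 8 * t ^ 2 := by
    have : t ^ 2 * t ^ 2 ≤ 1 / 10 ^ 8 * t ^ 2 := mul_le_mul_of_nonneg_right h4 ht
    have e : (-t ^ 2 / 2) ^ 2 = t ^ 2 * t ^ 2 / 4 := by ring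
    rw [e]; linarith
  refine (abs_le_of_sq_le_sq' ?_ (by linarith)).2
  have : (9 * B) ^ 2 = 81 * B ^ 2 := by ring
  have : (2 * B) ^ 2 = 4 * B ^ 2 := by ring
  have := sq_nonneg B
  norm_num at h5
  linarith

lemma propagate (φ : ℝ) (hφ : φ ^ 2 = φ + 1) (h1 : 1.61803 < φ) (h2 : φ < 1.61804) (b : Fin 4 → E4) (hb : ∀ l, ‖b l‖ = 1)
    (hb' : ∀ l l', l ≠ l' → ⟪b l, b l'⟫ = φ / 2) (x : Fin 120 → E4) (hx : ∀ i, ‖x i‖ = 1)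
    (η B : ℝ) (hη : 0 ≤ η) (hηB : η ≤ B)
    (hc : ∀ n, ‖x n - vv φ b n‖ ≤ 1 / 10 ^ 8)
    (hn : ∀ i j, i ≠ j → 0.76 ≤ ⟪x i, x j⟫ → |⟪x i, x j⟫ - φ / 2| ≤ η)
    (h4 : ∀ n : Fin 120, n.val < 4 → ‖x n - vv φ b n‖ ≤ B) (N : ℕ) :
    ∀ n : Fin 120, n.val ≤ N → ‖x n - vv φ b n‖ ≤ B * 9 ^ N := by
  have hB : 0 ≤ B := hη.trans hηB
  have near : ∀ i j, i ≠ j → NZ (code i) (code j) = z7 → |⟪x i, x j⟫ - φ / 2| ≤ η := by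
    intro i j hij h
    apply hn i j hij
    have e := vv_inner_z7 φ b hφ hb hb' i j h
    have e1 : |⟪vv φ b i, x j⟫ - φ / 2| ≤ 0 + 1 / 10 ^ 8 :=
      inner_close (vv_norm φ b hφ hb hb' i) (u := vv φ b j) (by rw [e]; simp) (by rw [norm_sub_rev]; exact hc j)
    rw [real_inner_comm] at e1
    have e2 := inner_close (hx j) (v := x i) (B := 1 / 10 ^ 8) e1 (by rw [norm_sub_rev]; exact hc i)
    rw [real_inner_comm, abs_le] at e2
    norm_num at e2 h1 ⊢
    linarith [e2.1]
  induction N with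
  | zero =>
    intro n hn
    rw [pow_zero, mul_one]
    exact h4 n (by omega)
  | succ N ih =>
    intro n hnN
    have hp : (1 : ℝ) ≤ 9 ^ N := one_le_pow₀ (by norm_num)
    by_cases hn4 : n.val < 4
    · refine (h4 n hn4).trans ?_
      exact le_mul_of_one_le_right hB (one_le_pow₀ (by norm_num))
    · obtain ⟨p, q, s, lp, lq, ls, hpq, hps, hqs, hnp, hnq, hns⟩ := trip_ok n (by omega)
      have hp' : p.val < n.val := lp
      have hq' : q.val < n.val := lq
      have hs' : s.val < n.val := ls
      have := prop_step φ hφ h1 h2 (vv φ b n) (vv φ b p) (vv φ b q) (vv φ b s) (x n) (x p) (x q) (x s) η (B * 9 ^ N)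
        hη (hηB.trans (le_mul_of_one_le_right hB hp)) (vv_norm φ b hφ hb hb' n) (vv_norm φ b hφ hb hb' p)
        (vv_norm φ b hφ hb hb' q) (vv_norm φ b hφ hb hb' s) (vv_inner_z7 φ b hφ hb hb' _ _ hnp)
        (vv_inner_z7 φ b hφ hb hb' _ _ hnq) (vv_inner_z7 φ b hφ hb hb' _ _ hns) (vv_inner_z7 φ b hφ hb hb' _ _ hpq)
        (vv_inner_z7 φ b hφ hb hb' _ _ hps) (vv_inner_z7 φ b hφ hb hb' _ _ hqs) (hx n) (hc n)
        (near n p lp.ne' hnp) (near n q lq.ne' hnq) (near n s ls.ne' hns)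
        (ih p (by omega)) (ih q (by omega)) (ih s (by omega))
      rw [pow_succ]
      linarith

lemma round_pair (x : Fin 120 → E4) (hx : ∀ i, ‖x i‖ = 1) (φ ε : ℝ) (hφ : φ ^ 2 = φ + 1)
    (h1' : 1.6180335 < φ) (h2 : φ < 1.618034) (hε0 : 0 ≤ ε) (hε : ε ≤ 1 / 10 ^ 200)
    (ht : ∀ i j, i ≠ j → ⟪x i, x j⟫ ≤ φ / 2 + 2 * ε) (i j : Fin 120) (hij : i ≠ j) :
    ∃ z ∈ zok, |2 * ⟪x i, x j⟫ - z.toR φ| ≤ 1 / 10 ^ 11 := by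
  have hr : (2 * φ - 1) ^ 2 = 5 := by linear_combination 4 * hφ
  have r1 : 2.236067 < 2 * φ - 1 := by norm_num at h1' ⊢; linarith
  have r2 : 2 * φ - 1 < 2.236068 := by norm_num at h2 ⊢; linarith
  have ht' : ∀ i j, i ≠ j → ⟪x i, x j⟫ ≤ (1 + (2 * φ - 1)) / 4 + 2 * ε := by
    intro i j h; have := ht i j h; linarith
  by_cases hn : 0.76 ≤ ⟪x i, x j⟫
  · have a := pair_near x hx _ ε hr r1 r2 hε0 ht' i j hij hn
    refine ⟨z7, by simp [zok], ?_⟩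
    simp only [z7, Zp.toR]
    rw [abs_le] at a ⊢
    push_cast
    norm_num at a hε ⊢
    constructor <;> linarith [a.1, a.2]
  · push Not at hn
    have a := pair_lower x hx _ ε hr r1 r2 hε0 ht' i j hij
    have c := lpH_far _ _ ε hr r1 r2 (inner_unit_bd (hx i) (hx j)).1 hn hε a
    generalize ⟪x i, x j⟫ = t at c
    have aux : ∀ s z : ℝ, |t - s| ≤ 1 / 10 ^ 12 → z = 2 * s → |2 * t - z| ≤ 1 / 10 ^ 11 := by
      intro s z q1 q2
      rw [abs_le] at q1 ⊢
      norm_num at q1 ⊢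
      constructor <;> linarith [q1.1, q1.2]
    rcases c with c | c | c | c | c | c | c
    · exact ⟨z0, by simp [zok], aux _ _ c (by simp [z0, Zp.toR])⟩
    · exact ⟨z1, by simp [zok], aux _ _ c (by simp [z1, Zp.toR]; ring)⟩
    · exact ⟨z2, by simp [zok], aux _ _ c (by simp [z2, Zp.toR]; try norm_num)⟩
    · exact ⟨z3, by simp [zok], aux _ _ c (by simp [z3, Zp.toR]; ring)⟩
    · exact ⟨z4, by simp [zok], aux _ _ c (by simp [z4, Zp.toR])⟩
    · exact ⟨z5, by simp [zok], aux _ _ c (by simp [z5, Zp.toR]; ring)⟩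
    · exact ⟨z6, by simp [zok], aux _ _ c (by simp [z6, Zp.toR])⟩

end SHC

open scoped RealInnerProductSpace
namespace SHC

lemma main_case (x : Fin 120 → E4) (hx : ∀ i, ‖x i‖ = 1) (φ ε : ℝ) (hφ : φ ^ 2 = φ + 1)
    (h1' : 1.6180335 < φ) (h2' : φ < 1.618034) (hε0 : 0 ≤ ε) (hε : ε ≤ 1 / 10 ^ 200)
    (ht : ∀ i j, i ≠ j → ⟪x i, x j⟫ ≤ φ / 2 + 2 * ε) :
    ∃ w : Fin 120 → E4, (∀ i, ‖w i‖ = 1) ∧ (∀ i j, i ≠ j → ⟪w i, w j⟫ ≤ φ / 2) ∧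
      ∀ i, ‖x i - w i‖ ≤ 10 ^ 17 * 9 ^ 119 * ε := by
  have h1 : 1.61803 < φ := by norm_num at h1' ⊢; linarith
  have h2 : φ < 1.61804 := by norm_num at h2' ⊢; linarith
  have hr : (2 * φ - 1) ^ 2 = 5 := by linear_combination 4 * hφ
  have r1 : 2.236067 < 2 * φ - 1 := by norm_num at h1' ⊢; linarith
  have r2 : 2 * φ - 1 < 2.236068 := by norm_num at h2' ⊢; linarith
  have ht' : ∀ i j, i ≠ j → ⟪x i, x j⟫ ≤ (1 + (2 * φ - 1)) / 4 + 2 * ε := by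
    intro i j h; have := ht i j h; linarith
  have hεs : ε ≤ 1 / 10 ^ 40 := hε.trans (by norm_num)
  have near : ∀ i j, i ≠ j → 0.76 ≤ ⟪x i, x j⟫ → |⟪x i, x j⟫ - φ / 2| ≤ 10 ^ 9 * ε := by
    intro i j hij hn
    have := pair_near x hx _ ε hr r1 r2 hε0 ht' i j hij hn
    rwa [show (1 + (2 * φ - 1)) / 4 = φ / 2 by ring] at this
  have rnd := round_pair x hx φ ε hφ h1' h2' hε0 hε ht
  have split : ∀ i j, i ≠ j → ⟪x i, x j⟫ ≤ 1 / 2 + 1 / 10 ^ 11 ∨ (0.809 ≤ ⟪x i, x j⟫ ∧ ⟪x i, x j⟫ ≤ 0.8091) := by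
    intro i j hij
    obtain ⟨z, hz, hd⟩ := rnd i j hij
    simp only [zok, List.mem_cons, List.not_mem_nil, or_false] at hz
    rw [abs_le] at hd
    obtain ⟨d1, d2⟩ := hd
    norm_num at h1' h2'
    rcases hz with rfl | rfl | rfl | rfl | rfl | rfl | rfl | rfl <;>
      simp [Zp.toR, z0, z1, z2, z3, z4, z5, z6, z7] at d1 d2 <;>
      first
      | (left; norm_num at d1 d2 ⊢; linarith)
      | (right; norm_num at d1 d2 ⊢; constructor <;> linarith)
  have far : ∀ i j, i ≠ j → 0.5 < ‖x i - x j‖ := by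
    intro i j hij
    apply far_of_inner (hx i) (hx j)
    rcases split i j hij with h | h
    · norm_num at h ⊢; linarith
    · have := h.2
      norm_num at this ⊢; linarith
  obtain ⟨i0, i1, i2, i3, n01, n02, n03, n12, n13, n23, q01, q02, q03, q12, q13, q23⟩ := exists_tetra x hx
    (by
      intro i j hij
      rcases split i j hij with h | h
      · left; norm_num at h ⊢; linarith
      · right; exact h)
    (by
      intro i j hij h8
      rcases split i j hij with h | h
      · exact h
      · have := h.1
        norm_num at this h8
        linarith)
  have nr : ∀ i j, i ≠ j → 0.809 ≤ ⟪x i, x j⟫ → |⟪x j, x i⟫ - φ / 2| ≤ 10 ^ 9 * ε := by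
    intro i j hij h
    rw [real_inner_comm]
    exact near i j hij (by norm_num at h ⊢; linarith)
  obtain ⟨b, hb, hb', a0, a1, a2, a3⟩ := align_tetra (φ / 2) (by norm_num at h1 ⊢; linarith) (by norm_num at h2 ⊢; linarith)
    (x i0) (x i1) (x i2) (x i3) (hx _) (hx _) (hx _) (hx _) (10 ^ 9 * ε) (by positivity)
    (by norm_num at hεs ⊢; linarith)
    (nr _ _ n01 q01) (nr _ _ n02 q02) (nr _ _ n12 q12) (nr _ _ n03 q03) (nr _ _ n13 q13) (nr _ _ n23 q23)
  set B : ℝ := 10 ^ 8 * (10 ^ 9 * ε) with hB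
  have hB0 : 0 ≤ B := by positivity
  have hBs : B ≤ 1 / 10 ^ 11 := by rw [hB]; norm_num at hεs ⊢; linarith
  have ap : ∀ i, ∀ u : E4, ‖x i - u‖ ≤ B → ∀ j, ∃ z ∈ zs, |2 * ⟪x j, u⟫ - z.toR φ| ≤ 1 / 10 ^ 9 := by
    intro i u hu j
    by_cases hij : j = i
    · subst hij
      refine ⟨z8, by simp [zs], ?_⟩
      have := inner_close (hx j) (u := x j) (v := u) (α := 1) (η := 0) (B := B) (by rw [inner_self_unit (hx j)]; simp) hu
      simp only [z8, Zp.toR]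
      rw [abs_le] at this ⊢
      push_cast
      norm_num at this hBs ⊢
      constructor <;> linarith [this.1, this.2]
    · obtain ⟨z, hz, hd⟩ := rnd j i hij
      refine ⟨z, ?_, ?_⟩
      · simp only [zok, zs, List.mem_cons, List.not_mem_nil, or_false] at hz ⊢
        tauto
      · have e : |⟪x j, x i⟫ - z.toR φ / 2| ≤ 1 / 10 ^ 11 := by
          rw [abs_le] at hd ⊢
          norm_num at hd ⊢
          constructor <;> linarith [hd.1, hd.2]
        have := inner_close (hx j) e hu
        rw [abs_le] at this ⊢
        norm_num at this hBs ⊢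
        constructor <;> linarith [this.1, this.2]
  have rd : ∀ j, ∃ n, ‖x j - vv φ b n‖ ≤ 1 / 10 ^ 8 := by
    intro j
    apply round_vv φ b hφ h1 h2 hb hb' (x j) (hx j)
    intro m
    fin_cases m
    · exact ap i0 _ a0 j
    · exact ap i1 _ a1 j
    · exact ap i2 _ a2 j
    · exact ap i3 _ a3 j
  choose σ hσ using rd
  have uniq : ∀ i j, ∀ v : E4, ‖x i - v‖ ≤ 1 / 10 ^ 8 → ‖x j - v‖ ≤ 1 / 10 ^ 8 → i = j := by
    intro i j v hi hj
    by_contra hij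
    have h5 := far i j hij
    have h6 : ‖x i - x j‖ ≤ ‖x i - v‖ + ‖x j - v‖ := by
      rw [show x i - x j = (x i - v) - (x j - v) by abel]
      exact norm_sub_le _ _
    norm_num at h5 hi hj
    linarith
  have inj : Function.Injective σ := by
    intro i j hij
    exact uniq i j (vv φ b (σ i)) (hσ i) (by rw [hij]; exact hσ j)
  have bij : Function.Bijective σ := Finite.injective_iff_bijective.1 inj
  set e : Fin 120 ≃ Fin 120 := Equiv.ofBijective σ bij with he
  have hes : ∀ n, ‖x (e.symm n) - vv φ b n‖ ≤ 1 / 10 ^ 8 := by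
    intro n
    have := hσ (e.symm n)
    have h3 : σ (e.symm n) = n := e.apply_symm_apply n
    rwa [h3] at this
  obtain ⟨w0, w1, w2, w3⟩ := vv_basis φ b hφ h1 h2 hb hb'
  have first : ∀ i, ∀ n, ‖x i - vv φ b n‖ ≤ B → ‖x (e.symm n) - vv φ b n‖ ≤ B := by
    intro i n h
    have : i = e.symm n := uniq i (e.symm n) (vv φ b n) (h.trans (hBs.trans (by norm_num))) (hes n)
    rwa [← this]
  have P := propagate φ hφ h1 h2 b hb hb' (fun n => x (e.symm n)) (fun n => hx _) (10 ^ 9 * ε) B (by positivity)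
    (by rw [hB]; nlinarith) hes
    (fun i j hij h => near _ _ (fun h' => hij (e.symm.injective h')) h)
    (by
      intro n hn
      have : n = 0 ∨ n = 1 ∨ n = 2 ∨ n = 3 := by
        rcases n with ⟨n, hn'⟩
        simp only [Fin.ext_iff] at hn ⊢
        have : n < 4 := hn
        interval_cases n <;> simp
      rcases this with rfl | rfl | rfl | rfl
      · exact first i0 _ (by rw [w0]; exact a0)
      · exact first i1 _ (by rw [w1]; exact a1)
      · exact first i2 _ (by rw [w2]; exact a2)
      · exact first i3 _ (by rw [w3]; exact a3)) 119
  refine ⟨fun i => vv φ b (σ i), fun i => vv_norm φ b hφ hb hb' _, ?_, ?_⟩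
  · intro i j hij
    exact vv_inner_le φ b hφ h1 h2 hb hb' _ _ (fun h => hij (inj h))
  · intro i
    have := P (σ i) (by have := (σ i).isLt; omega)
    have h3 : e.symm (σ i) = i := e.symm_apply_apply i
    simp only [h3] at this
    refine this.trans (le_of_eq ?_)
    rw [hB]; ring

lemma arccos_le_norm {u v : E4} (hu : ‖u‖ = 1) (hv : ‖v‖ = 1) : Real.arccos ⟪u, v⟫ ≤ 2 * ‖u - v‖ := by
  set θ := Real.arccos ⟪u, v⟫ with hθ
  have h0 : 0 ≤ θ := Real.arccos_nonneg _
  have hpi : θ ≤ Real.pi := Real.arccos_le_pi _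
  obtain ⟨b1, b2⟩ := inner_unit_bd hu hv
  have hc : Real.cos θ = ⟪u, v⟫ := Real.cos_arccos b1 b2
  have q := Real.cos_le_one_sub_mul_cos_sq (x := θ) (by rw [abs_of_nonneg h0]; exact hpi)
  have n := norm_sub_sq_real u v
  rw [hu, hv, ← hc] at n
  have hp4 : Real.pi ^ 2 < 16 := by nlinarith [Real.pi_pos, Real.pi_lt_four]
  have hp0 : 0 < Real.pi ^ 2 := by positivity
  have h3 : 2 / 16 * θ ^ 2 ≤ 2 / Real.pi ^ 2 * θ ^ 2 := by
    apply mul_le_mul_of_nonneg_right _ (sq_nonneg _)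
    apply div_le_div_of_nonneg_left <;> linarith
  refine (abs_le_of_sq_le_sq' ?_ (by positivity)).2
  nlinarith

end SHC

/-- Stability of the 600-cell: if `k ≥ 120` unit vectors in `ℝ⁴` have pairwise
spherical distances at least `π/5 - 2ε` with `0 ≤ ε < 10⁻¹⁴`, then `k = 120` and the
vectors are within spherical distance `90¹¹⁶·10⁴·10¹²·ε` of the vertices of a regular
600-cell inscribed in the unit sphere (120 unit vectors with pairwise spherical
distances at least `π/5`). -/
theorem sixhundred_cell_stability (k : ℕ) (hk : 120 ≤ k) (ε : ℝ)
    (hε0 : 0 ≤ ε) (hε1 : ε < 1 / 10 ^ 14)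
    (x : Fin k → EuclideanSpace ℝ (Fin 4))
    (hx : ∀ i, ‖x i‖ = 1)
    (hdist : ∀ i j : Fin k, i ≠ j →
      Real.pi / 5 - 2 * ε ≤ Real.arccos ⟪x i, x j⟫) :
    k = 120 ∧
    ∃ w : Fin k → EuclideanSpace ℝ (Fin 4),
      (∀ i, ‖w i‖ = 1) ∧
      (∀ i j : Fin k, i ≠ j → Real.pi / 5 ≤ Real.arccos ⟪w i, w j⟫) ∧
      (∀ i, Real.arccos ⟪x i, w i⟫ ≤ (90 : ℝ) ^ 116 * 10 ^ 4 * 10 ^ 12 * ε) := by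
  have s5 : Real.sqrt 5 ^ 2 = 5 := Real.sq_sqrt (by norm_num)
  have r1 : 2.236067 < Real.sqrt 5 := by
    rw [Real.lt_sqrt (by norm_num)]; norm_num
  have r2 : Real.sqrt 5 < 2.236068 := by
    rw [Real.sqrt_lt' (by norm_num)]; norm_num
  have hcos : Real.cos (Real.pi / 5) = (1 + Real.sqrt 5) / 4 := Real.cos_pi_div_five
  have ht : ∀ i j, i ≠ j → ⟪x i, x j⟫ ≤ (1 + Real.sqrt 5) / 4 + 2 * ε := by
    intro i j hij
    obtain ⟨b1, b2⟩ := SHC.inner_unit_bd (hx i) (hx j)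
    have h1 : Real.cos (Real.arccos ⟪x i, x j⟫) ≤ Real.cos (Real.pi / 5 - 2 * ε) := by
      have hpi := Real.pi_gt_three
      apply Real.cos_le_cos_of_nonneg_of_le_pi _ (Real.arccos_le_pi _) (hdist i j hij)
      norm_num at hε1
      linarith
    rw [Real.cos_arccos b1 b2] at h1
    have h2 : |Real.cos (Real.pi / 5 - 2 * ε) - Real.cos (Real.pi / 5)| ≤ |(Real.pi / 5 - 2 * ε) - Real.pi / 5| :=
      Real.abs_cos_sub_cos_le _ _
    rw [show (Real.pi / 5 - 2 * ε) - Real.pi / 5 = -(2 * ε) by ring, abs_neg, abs_of_nonneg (by linarith : 0 ≤ 2 * ε), hcos] at h2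
    have := (abs_le.1 h2).2
    linarith
  have hk' : k = 120 := SHC.card_eq x hx _ ε s5 r1 r2 hε0 ht hk hε1
  subst hk'
  refine ⟨rfl, ?_⟩
  set φ : ℝ := (1 + Real.sqrt 5) / 2 with hφd
  have hφ : φ ^ 2 = φ + 1 := by rw [hφd]; linear_combination (1 / 4) * s5
  have p1 : 1.6180335 < φ := by rw [hφd]; norm_num at r1 ⊢; linarith
  have p2 : φ < 1.618034 := by rw [hφd]; norm_num at r2 ⊢; linarith
  have hα : (1 + Real.sqrt 5) / 4 = φ / 2 := by rw [hφd]; ring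
  have pair : ∀ t : ℝ, t ≤ φ / 2 → Real.pi / 5 ≤ Real.arccos t := by
    intro t h
    have h2 : Real.arccos (Real.cos (Real.pi / 5)) = Real.pi / 5 :=
      Real.arccos_cos (by positivity) (by linarith [Real.pi_pos])
    rw [← h2]
    apply Real.arccos_le_arccos
    rw [hcos, hα]; exact h
  by_cases hbig : Real.pi ≤ (90 : ℝ) ^ 116 * 10 ^ 4 * 10 ^ 12 * ε
  · obtain ⟨b, hb, hb'⟩ := SHC.exists_exact_tetra φ hφ
    refine ⟨SHC.vv φ b, SHC.vv_norm φ b hφ hb hb', ?_, ?_⟩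
    · intro i j hij
      apply pair
      exact SHC.vv_inner_le φ b hφ (by norm_num at p1 ⊢; linarith) (by norm_num at p2 ⊢; linarith) hb hb' i j hij
    · intro i
      exact (Real.arccos_le_pi _).trans hbig
  · push Not at hbig
    have hε2 : ε ≤ 1 / 10 ^ 200 := by
      have h4 := hbig.trans Real.pi_lt_four
      rw [le_div_iff₀ (by positivity)]
      have h5 : (4 : ℝ) * 10 ^ 200 ≤ 90 ^ 116 * 10 ^ 4 * 10 ^ 12 := by norm_num
      have h6 := mul_le_mul_of_nonneg_right h5 hε0
      linarith
    obtain ⟨w, hw, hww, hxw⟩ := SHC.main_case x hx φ ε hφ p1 p2 hε0 hε2 (by rw [← hα]; exact ht)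
    refine ⟨w, hw, fun i j hij => pair _ (hww i j hij), fun i => ?_⟩
    refine (SHC.arccos_le_norm (hx i) (hw i)).trans ?_
    have h5 : (2 : ℝ) * (10 ^ 17 * 9 ^ 119) ≤ 90 ^ 116 * 10 ^ 4 * 10 ^ 12 := by norm_num
    have h6 := mul_le_mul_of_nonneg_right h5 hε0
    have := hxw i
    linarith
end

section
/- Let n ≥ 2 and 0 ≤ η < 1/(n−1). If u_1, …, u_n are unit vectors in ℝⁿ satisfying |⟨u_i, u_j⟩| ≤ η for all i ≠ j, then there exists an orthonormal basis v_1, …, v_n of ℝⁿ such that span{u_i, …, u_n} = span{v_i, …, v_n} and ⟨u_i, v_i⟩ > 0 for i = 1, …, n, and |⟨u_i, v_j⟩| ≤ η/(1 − (n−2)η) for all i ≠ j. Moreover, if in addition η < 1/(2n), then the spherical distance satisfies δ(u_i, v_i) ≤ 2nη for i = 1, …, n. -/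
open scoped RealInnerProductSpace

section helpers

variable {V ι : Type*} [NormedAddCommGroup V] [InnerProductSpace ℝ V]

lemma ao_coeff (s : Finset ι) (u : ι → V) (c : ι → ℝ) (x : V) (η : ℝ)
    (hη0 : 0 ≤ η) (hD : 0 < 1 - ((s.card : ℝ) - 1) * η)
    (hu : ∀ i, ‖u i‖ = 1) (hin : ∀ i j, i ≠ j → |⟪u i, u j⟫| ≤ η)
    (hx : ∀ k ∈ s, |⟪u k, x⟫| ≤ η)
    (ho : ∀ k ∈ s, ⟪u k, x - ∑ l ∈ s, c l • u l⟫ = 0) :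
    ∀ k ∈ s, |c k| * (1 - ((s.card : ℝ) - 1) * η) ≤ η := by
  classical
  intro k hk
  obtain ⟨m, hm, hmax⟩ := s.exists_max_image (fun k => |c k|) ⟨k, hk⟩
  refine (mul_le_mul_of_nonneg_right (hmax k hk) hD.le).trans ?_
  have h1 := ho m hm
  rw [inner_sub_right, inner_sum, ← Finset.add_sum_erase s _ hm] at h1
  simp only [inner_smul_right, real_inner_self_eq_norm_sq, hu] at h1
  have h2 : |∑ l ∈ s.erase m, c l * ⟪u m, u l⟫| ≤ ((s.card : ℝ) - 1) * (|c m| * η) := by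
    refine (Finset.abs_sum_le_sum_abs _ _).trans ?_
    have : ∀ l ∈ s.erase m, |c l * ⟪u m, u l⟫| ≤ |c m| * η := by
      intro l hl
      rw [Finset.mem_erase] at hl
      rw [abs_mul]
      exact mul_le_mul (hmax l hl.2) (hin _ _ hl.1.symm) (abs_nonneg _) (abs_nonneg _)
    refine (Finset.sum_le_card_nsmul _ _ _ this).trans ?_
    rw [nsmul_eq_mul, Finset.card_erase_of_mem hm, Nat.cast_sub (Finset.card_pos.2 ⟨m, hm⟩)]
    simp
  have h3 : c m = ⟪u m, x⟫ - ∑ l ∈ s.erase m, c l * ⟪u m, u l⟫ := by linarith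
  have h4 : |c m| ≤ η + ((s.card : ℝ) - 1) * (|c m| * η) := by
    calc |c m| = |⟪u m, x⟫ - ∑ l ∈ s.erase m, c l * ⟪u m, u l⟫| := by rw [← h3]
      _ ≤ _ := abs_sub _ _
      _ ≤ _ := add_le_add (hx m hm) h2
  linarith

lemma ao_inner (s : Finset ι) (u : ι → V) (c : ι → ℝ) (x y : V) (η : ℝ)
    (hη0 : 0 ≤ η) (hD : 0 < 1 - ((s.card : ℝ) - 1) * η)
    (hu : ∀ i, ‖u i‖ = 1) (hin : ∀ i j, i ≠ j → |⟪u i, u j⟫| ≤ η)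
    (hx : ∀ k ∈ s, |⟪u k, x⟫| ≤ η)
    (ho : ∀ k ∈ s, ⟪u k, x - ∑ l ∈ s, c l • u l⟫ = 0)
    (hy : ∀ k ∈ s, |⟪y, u k⟫| ≤ η) :
    |⟪y, ∑ l ∈ s, c l • u l⟫| * (1 - ((s.card : ℝ) - 1) * η) ≤ s.card * η ^ 2 := by
  have hc := ao_coeff s u c x η hη0 hD hu hin hx ho
  rw [inner_sum]
  refine (mul_le_mul_of_nonneg_right (Finset.abs_sum_le_sum_abs _ _) hD.le).trans ?_
  rw [Finset.sum_mul, ← nsmul_eq_mul]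
  refine Finset.sum_le_card_nsmul _ _ _ ?_
  intro l hl
  rw [inner_smul_right, abs_mul]
  have := mul_le_mul (hc l hl) (hy l hl) (abs_nonneg _) hη0
  nlinarith

lemma ao_ratio (N d m η : ℝ) (hη0 : 0 ≤ η) (hd : 0 < d) (hm0 : 0 ≤ m) (hm : m * η < 1)
    (hN : |N| * (1 - (m - 1) * η) ≤ η * (1 + η))
    (hd2 : (1 + η) * (1 - m * η) ≤ d ^ 2 * (1 - (m - 1) * η)) :
    |d⁻¹ * N| ≤ η / (1 - m * η) := by
  have hE : 0 < 1 - m * η := by linarith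
  have hD : 0 < 1 - (m - 1) * η := by nlinarith
  have hED : (1 + η) * (1 - m * η) ≤ 1 - (m - 1) * η := by nlinarith [mul_nonneg hm0 (sq_nonneg η)]
  rw [abs_mul, abs_of_pos (inv_pos.2 hd), inv_mul_eq_div, div_le_div_iff₀ hd hE]
  refine le_of_mul_le_mul_right ?_ hD
  refine abs_le_of_sq_le_sq' ?_ (by positivity) |>.2
  have a1 : (|N| * (1 - (m - 1) * η)) ^ 2 ≤ (η * (1 + η)) ^ 2 := 
    pow_le_pow_left₀ (by positivity) hN 2
  generalize 1 - (m - 1) * η = D at *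
  generalize 1 - m * η = E at *
  calc (|N| * E * D) ^ 2 = (|N| * D) ^ 2 * E ^ 2 := by ring
    _ ≤ (η * (1 + η)) ^ 2 * E ^ 2 := by gcongr
    _ = η ^ 2 * (((1 + η) * E) * ((1 + η) * E)) := by ring
    _ ≤ η ^ 2 * ((d ^ 2 * D) * D) := by gcongr
    _ = (η * d * D) ^ 2 := by ring

lemma ao_arccos (n : ℕ) (hn : 2 ≤ n) (d m η : ℝ) (hη0 : 0 ≤ η) (hd : 0 < d) (hm0 : 0 ≤ m)
    (hm : m ≤ n) (hη : η < 1 / (2 * (n : ℝ)))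
    (hd2 : (1 + η) * (1 - m * η) ≤ d ^ 2 * (1 - (m - 1) * η)) :
    Real.arccos d ≤ 2 * n * η := by
  have hn' : (2 : ℝ) ≤ n := by exact_mod_cast hn
  rw [lt_div_iff₀ (by positivity)] at hη
  have hpi := Real.pi_gt_three
  have hpi4 := Real.pi_le_four
  set t := 2 * n * η with ht
  have ht0 : 0 ≤ t := by positivity
  have ht1 : t < 1 := by rw [ht]; linarith
  have hs : t / 2 ≤ Real.sin t := by
    refine le_trans ?_ (Real.mul_le_sin ht0 (by linarith))
    have : (1 / 2 : ℝ) ≤ 2 / Real.pi := by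
      rw [div_le_div_iff₀ (by norm_num) (by positivity)]; linarith
    nlinarith
  have hcos : 0 ≤ Real.cos t := Real.cos_nonneg_of_mem_Icc ⟨by linarith, by linarith⟩
  have hmn : m * η ≤ n * η := by gcongr
  have hD : 1 / 2 ≤ 1 - (m - 1) * η := by nlinarith
  have hd3 : 1 - t ^ 2 / 4 ≤ d ^ 2 := by
    have e : (1 + η) * (1 - m * η) = (1 - (m - 1) * η) - m * η ^ 2 := by ring
    rw [e] at hd2
    have h1 : (1 - d ^ 2) * (1 - (m - 1) * η) ≤ n * η ^ 2 := by nlinarith [sq_nonneg η]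
    have h2 : 2 * n * η ^ 2 ≤ t ^ 2 / 4 := by rw [ht]; nlinarith [sq_nonneg η, mul_nonneg (mul_nonneg (by linarith : (0:ℝ) ≤ n) (by linarith : (0:ℝ) ≤ n - 2)) (sq_nonneg η)]
    by_contra hcon
    push Not at hcon
    nlinarith [sq_nonneg t]
  have hct : Real.cos t ≤ d := by
    refine abs_le_of_sq_le_sq' ?_ hd.le |>.2
    nlinarith [Real.sin_sq_add_cos_sq t]
  calc Real.arccos d ≤ Real.arccos (Real.cos t) := Real.arccos_le_arccos hct
    _ = t := Real.arccos_cos ht0 (by linarith)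

end helpers

theorem almost_orthogonal (n : ℕ) (hn : 2 ≤ n) (η : ℝ)
    (hη0 : 0 ≤ η) (hη1 : η < 1 / ((n : ℝ) - 1))
    (u : Fin n → EuclideanSpace ℝ (Fin n))
    (hu : ∀ i, ‖u i‖ = 1)
    (hinner : ∀ i j : Fin n, i ≠ j → |⟪u i, u j⟫| ≤ η) :
    ∃ v : Fin n → EuclideanSpace ℝ (Fin n),
      Orthonormal ℝ v ∧
      (∀ i : Fin n,
        Submodule.span ℝ (u '' Set.Ici i) = Submodule.span ℝ (v '' Set.Ici i)) ∧
      (∀ i, 0 < ⟪u i, v i⟫) ∧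
      (∀ i j : Fin n, i ≠ j → |⟪u i, v j⟫| ≤ η / (1 - ((n : ℝ) - 2) * η)) ∧
      (η < 1 / (2 * (n : ℝ)) → ∀ i, Real.arccos ⟪u i, v i⟫ ≤ 2 * n * η) := by
  have hn' : (2 : ℝ) ≤ n := by exact_mod_cast hn
  have hη2 : ((n : ℝ) - 1) * η < 1 := by
    rw [lt_div_iff₀ (by linarith)] at hη1; linarith
  have key : ∀ j : Fin n, ∃ c : Fin n → ℝ, ∀ k ∈ Finset.Ioi j,
      ⟪u k, u j - ∑ l ∈ Finset.Ioi j, c l • u l⟫ = 0 := by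
    intro j
    set W := Submodule.span ℝ (u '' (Finset.Ioi j : Finset (Fin n))) with hW
    have hp : W.starProjection (u j) ∈ W := Submodule.starProjection_apply_mem _ _
    obtain ⟨c, hc⟩ := (Submodule.mem_span_image_finset_iff_exists_fun ℝ).1 hp
    refine ⟨fun k => if h : k ∈ Finset.Ioi j then c ⟨k, h⟩ else 0, fun k hk => ?_⟩
    have hc' : ∑ l ∈ Finset.Ioi j,
        (if h : l ∈ Finset.Ioi j then c ⟨l, h⟩ else 0) • u l = W.starProjection (u j) := by
      rw [← hc, ← Finset.sum_coe_sort]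
      refine Finset.sum_congr rfl fun l _ => ?_
      rw [dif_pos l.2]
    rw [hc']
    have hkW : u k ∈ W := Submodule.subset_span ⟨k, hk, rfl⟩
    exact Submodule.inner_right_of_mem_orthogonal hkW
      (Submodule.sub_starProjection_mem_orthogonal _)
  choose c hc using key
  set p : Fin n → EuclideanSpace ℝ (Fin n) := fun j => ∑ l ∈ Finset.Ioi j, c j l • u l with hp
  set w : Fin n → EuclideanSpace ℝ (Fin n) := fun j => u j - p j with hw
  have hwo : ∀ j k, j < k → ⟪u k, w j⟫ = 0 := fun j k h => hc j k (Finset.mem_Ioi.2 h)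
  have hcard : ∀ j : Fin n, ((Finset.Ioi j).card : ℝ) = n - 1 - (j : ℕ) := by
    intro j
    have h : (Finset.Ioi j).card + 1 + j = n := by rw [Fin.card_Ioi]; omega
    have : (((Finset.Ioi j).card + 1 + (j : ℕ) : ℕ) : ℝ) = n := by rw [h]
    push_cast at this; linarith
  have hmη : ∀ j : Fin n, ((Finset.Ioi j).card : ℝ) * η < 1 := by
    intro j
    rw [hcard]
    have : 0 ≤ ((j : ℕ) : ℝ) * η := by positivity
    linarith
  have hD : ∀ j : Fin n, 0 < 1 - (((Finset.Ioi j).card : ℝ) - 1) * η := by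
    intro j; linarith [hmη j]
  have hyp : ∀ i j : Fin n, i ≤ j →
      |⟪u i, p j⟫| * (1 - (((Finset.Ioi j).card : ℝ) - 1) * η)
        ≤ ((Finset.Ioi j).card : ℝ) * η ^ 2 := by
    intro i j hij
    refine ao_inner (Finset.Ioi j) u (c j) (u j) (u i) η hη0 (hD j) hu hinner ?_ (hc j) ?_
    · intro k hk; exact hinner _ _ (Finset.mem_Ioi.1 hk).ne'
    · intro k hk; exact hinner _ _ (hij.trans_lt (Finset.mem_Ioi.1 hk)).ne
  have hpw : ∀ j, ⟪p j, w j⟫ = 0 := by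
    intro j
    simp only [hp, sum_inner]
    refine Finset.sum_eq_zero fun k hk => ?_
    rw [real_inner_smul_left, hwo j k (Finset.mem_Ioi.1 hk), mul_zero]
  have hup : ∀ j, u j = w j + p j := fun j => by simp [hw]
  have huw : ∀ j, ⟪u j, w j⟫ = ‖w j‖ ^ 2 := by
    intro j
    conv_lhs => rw [hup j]
    rw [inner_add_left, hpw, add_zero, real_inner_self_eq_norm_sq]
  have hd2 : ∀ j, (1 + η) * (1 - (Finset.Ioi j).card * η)
      ≤ ‖w j‖ ^ 2 * (1 - (((Finset.Ioi j).card : ℝ) - 1) * η) := by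
    intro j
    have h1 : ‖w j‖ ^ 2 = 1 - ⟪u j, p j⟫ := by
      rw [← huw j]
      simp only [hw, inner_sub_right, real_inner_self_eq_norm_sq, hu]
      norm_num
    rw [h1]
    have h2 := hyp j j le_rfl
    have h3 := mul_le_mul_of_nonneg_right (le_abs_self ⟪u j, p j⟫) (hD j).le
    linarith
  have hpos : ∀ j, 0 < ‖w j‖ := by
    intro j
    rcases (norm_nonneg (w j)).eq_or_lt with h | h
    · have h2 := hd2 j
      rw [← h] at h2
      have : 0 < (1 + η) * (1 - (Finset.Ioi j).card * η) :=
        mul_pos (by linarith) (by linarith [hmη j])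
      rw [zero_pow two_ne_zero, zero_mul] at h2
      linarith
    · exact h
  have hpspan : ∀ j, p j ∈ Submodule.span ℝ (u '' Set.Ioi j) := by
    intro j
    refine Submodule.sum_mem _ fun k hk => Submodule.smul_mem _ _ ?_
    exact Submodule.subset_span ⟨k, Finset.mem_Ioi.1 hk, rfl⟩
  have hwspan : ∀ j, w j ∈ Submodule.span ℝ (u '' Set.Ici j) := by
    intro j
    refine Submodule.sub_mem _ (Submodule.subset_span ⟨j, Set.self_mem_Ici, rfl⟩) ?_
    exact Submodule.span_mono (Set.image_mono Set.Ioi_subset_Ici_self) (hpspan j)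
  have hww : ∀ i j, i < j → ⟪w j, w i⟫ = 0 := by
    intro i j hij
    have : ∀ x ∈ Submodule.span ℝ (u '' Set.Ici j), ⟪x, w i⟫ = 0 := by
      intro x hx
      induction hx using Submodule.span_induction with
      | mem x hx =>
        obtain ⟨k, hk, rfl⟩ := hx
        exact hwo i k (hij.trans_le hk)
      | zero => simp
      | add x y _ _ h1 h2 => rw [inner_add_left, h1, h2, add_zero]
      | smul a x _ h => rw [real_inner_smul_left, h, mul_zero]
    exact this _ (hwspan j)
  have huv : ∀ i, ⟪u i, ‖w i‖⁻¹ • w i⟫ = ‖w i‖ := by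
    intro i
    rw [real_inner_smul_right, huw]
    have := (hpos i).ne'
    field_simp
  refine ⟨fun j => ‖w j‖⁻¹ • w j, ⟨?_, ?_⟩, ?_, ?_, ?_, ?_⟩
  · intro i
    rw [norm_smul, norm_inv, norm_norm, inv_mul_cancel₀ (hpos i).ne']
  · intro i j hij
    simp only [real_inner_smul_left, real_inner_smul_right]
    rcases lt_or_gt_of_ne hij with h | h
    · rw [real_inner_comm, hww i j h]; simp
    · rw [hww j i h]; simp
  · intro i
    apply le_antisymm
    · have main : ∀ k, u k ∈ Submodule.span ℝ ((fun j => ‖w j‖⁻¹ • w j) '' Set.Ici k) := by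
        intro k
        induction k using WellFoundedGT.induction with
        | _ k ih =>
          rw [hup k]
          refine Submodule.add_mem _ ?_ ?_
          · have : w k = ‖w k‖ • (‖w k‖⁻¹ • w k) := by
              rw [smul_smul, mul_inv_cancel₀ (hpos k).ne', one_smul]
            rw [this]
            exact Submodule.smul_mem _ _ (Submodule.subset_span ⟨k, Set.self_mem_Ici, rfl⟩)
          · refine (Submodule.span_le.2 ?_) (hpspan k)
            rintro _ ⟨l, hl, rfl⟩
            exact Submodule.span_mono (Set.image_mono (Set.Ici_subset_Ici.2 (le_of_lt hl)))
              (ih l hl)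
      rw [Submodule.span_le]
      rintro _ ⟨k, hk, rfl⟩
      exact Submodule.span_mono (Set.image_mono (Set.Ici_subset_Ici.2 hk)) (main k)
    · rw [Submodule.span_le]
      rintro _ ⟨k, hk, rfl⟩
      exact Submodule.smul_mem _ _
        (Submodule.span_mono (Set.image_mono (Set.Ici_subset_Ici.2 hk)) (hwspan k))
  · intro i
    rw [huv]; exact hpos i
  · intro i j hij
    have hE : 0 < 1 - ((n : ℝ) - 2) * η := by linarith
    rcases lt_or_gt_of_ne hij with h | h
    · rw [real_inner_smul_right]
      have hN : |⟪u i, w j⟫| * (1 - (((Finset.Ioi j).card : ℝ) - 1) * η) ≤ η * (1 + η) := by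
        have h1 : |⟪u i, w j⟫| ≤ η + |⟪u i, p j⟫| := by
          simp only [hw, inner_sub_right]
          exact (abs_sub _ _).trans (add_le_add (hinner i j hij) le_rfl)
        have h2 := mul_le_mul_of_nonneg_right h1 (hD j).le
        have h3 := hyp i j h.le
        linarith
      refine (ao_ratio _ _ _ η hη0 (hpos j) (Nat.cast_nonneg _) (hmη j) hN (hd2 j)).trans ?_
      have hj : (1 : ℝ) ≤ ((j : ℕ) : ℝ) := by
        have : 1 ≤ (j : ℕ) := by have : (i : ℕ) < j := h; omega
        exact_mod_cast this
      refine div_le_div_of_nonneg_left hη0 hE ?_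
      rw [hcard]
      nlinarith
    · rw [real_inner_smul_right, hwo j i h, mul_zero, abs_zero]
      positivity
  · intro hη i
    simp only [huv]
    refine ao_arccos n hn _ _ η hη0 (hpos i) (Nat.cast_nonneg _) ?_ hη (hd2 i)
    rw [hcard]
    have : (0 : ℝ) ≤ ((i : ℕ) : ℝ) := Nat.cast_nonneg _
    linarith
end

section
/- Let d ≥ 2 and let Q_i (i ∈ ℕ) be the real polynomials defined by Q_0(t) = 1, Q_1(t) = t, Q_2(t) = (d·t² − 1)/(d − 1), and (i + d − 2)·Q_{i+1}(t) = (2i + d − 2)·t·Q_i(t) − i·Q_{i−1}(t) for i ≥ 2. Suppose f = f_0·Q_0 + f_1·Q_1 + … + f_k·Q_k for some k ≥ 1 with f_0 > 0 and f_1, …, f_k ≥ 0. Then for every finite set X of unit vectors in ℝ^d one has |X|·f(1) + Σ_{x,y ∈ X, x ≠ y} f(⟨x,y⟩) ≥ |X|²·f_0. -/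
noncomputable section
namespace LPB
open MvPolynomial
abbrev R (d : ℕ) := MvPolynomial (Fin d ⊕ Fin d) ℝ
def NX (d : ℕ) : R d := ∑ j, X (Sum.inl j) ^ 2
def NY (d : ℕ) : R d := ∑ j, X (Sum.inr j) ^ 2
def T (d : ℕ) : R d := ∑ j, X (Sum.inl j) * X (Sum.inr j)
def S (d : ℕ) : R d := NX d * NY d
def Z (d : ℕ) : ℕ → R d
  | 0 => 1
  | 1 => T d
  | (n+2) => C (1 / ((n:ℝ) + d - 1)) * ((2 * (n : R d) + (d : R d)) * T d * Z d (n+1) - ((n : R d)+1) * S d * Z d n)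

lemma ne0 (d : ℕ) (hd : 2 ≤ d) (n : ℕ) : (n : R d) + d - 1 ≠ 0 := by
  have : (n : R d) + d - 1 = ((n + d - 1 : ℕ) : R d) := by
    rw [Nat.cast_sub (by omega)]; push_cast; ring
  rw [this]
  exact_mod_cast (by omega : n + d - 1 ≠ 0)

lemma Zrec (d : ℕ) (hd : 2 ≤ d) (n : ℕ) :
    ((n : R d) + (d : R d) - 1) * Z d (n+2) = (2 * (n : R d) + (d : R d)) * T d * Z d (n+1) - ((n : R d)+1) * S d * Z d n := by
  have h : ((n : R d) + (d : R d) - 1) = C ((n:ℝ) + d - 1) := by simp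
  have h0 : (n:ℝ) + d - 1 ≠ 0 := by
    have : (2:ℝ) ≤ d := by exact_mod_cast hd
    have : (0:ℝ) ≤ n := by positivity
    linarith
  rw [Z, h, ← mul_assoc, ← C_mul, mul_one_div_cancel h0, C_1, one_mul]

lemma D_lower (d : ℕ) (hd : 2 ≤ d) (D : Derivation ℝ (R d) (R d)) (U : R d)
    (hT : D (T d) = U) (hS : D (S d) = 2 * T d * U) (n : ℕ) :
    D (Z d (n+1)) = (n+1) * U * Z d n := by
  have h2 : D 2 = 0 := by simpa using D.map_natCast 2
  have key : ∀ n, D (Z d (n+1)) = (n+1) * U * Z d n ∧ D (Z d (n+2)) = (n+2) * U * Z d (n+1) := by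
    intro n
    induction n with
    | zero =>
      have h1 : D (Z d 1) = U := by simp [Z, hT]
      refine ⟨by simpa [Z] using h1, ?_⟩
      have h := congrArg D (Zrec d hd 0)
      apply mul_left_cancel₀ (ne0 d hd 0)
      simp [Derivation.leibniz, hT, hS, h1] at h
      simp only [show Z d 0 = 1 from rfl, show Z d 1 = T d from rfl] at h ⊢
      push_cast
      rw [Derivation.map_one_eq_zero] at h
      linear_combination h
    | succ n ih =>
      refine ⟨by have := ih.2; push_cast; rw [this]; ring, ?_⟩
      have h := congrArg D (Zrec d hd (n+1))
      apply mul_left_cancel₀ (ne0 d hd (n+1))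
      have r := Zrec d hd n
      simp [Derivation.leibniz, hT, hS, ih.1, ih.2, h2] at h
      push_cast
      simp only [show n + 1 + 2 = n + 3 by ring, show n + 1 + 1 = n + 2 by ring] at h ⊢
      linear_combination h - (n + 2) * U * r
  exact (key n).1

lemma D_euler (d : ℕ) (hd : 2 ≤ d) (D : Derivation ℝ (R d) (R d))
    (hT : D (T d) = T d) (hS : D (S d) = 2 * S d) (n : ℕ) :
    D (Z d n) = n * Z d n := by
  have h2 : D 2 = 0 := by simpa using D.map_natCast 2
  have key : ∀ n, D (Z d n) = n * Z d n ∧ D (Z d (n+1)) = (n+1) * Z d (n+1) := by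
    intro n
    induction n with
    | zero => simp [Z, hT]
    | succ n ih =>
      refine ⟨by push_cast; exact ih.2, ?_⟩
      have h := congrArg D (Zrec d hd n)
      apply mul_left_cancel₀ (ne0 d hd n)
      simp [Derivation.leibniz, hT, hS, ih.1, ih.2, h2] at h
      push_cast
      linear_combination h - (n + 2) * Zrec d hd n
  exact (key n).1

lemma dxT (d : ℕ) (j : Fin d) : pderiv (Sum.inl j) (T d) = X (Sum.inr j) := by
  simp [T, Derivation.leibniz, pderiv_X, Pi.single_apply]
lemma dyT (d : ℕ) (j : Fin d) : pderiv (Sum.inr j) (T d) = X (Sum.inl j) := by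
  simp [T, Derivation.leibniz, pderiv_X, Pi.single_apply]
lemma dxNX (d : ℕ) (j : Fin d) : pderiv (Sum.inl j) (NX d) = 2 * X (Sum.inl j) := by
  simp [NX, Derivation.leibniz, Derivation.leibniz_pow, pderiv_X, Pi.single_apply]
lemma dyNX (d : ℕ) (j : Fin d) : pderiv (Sum.inr j) (NX d) = 0 := by
  simp [NX, Derivation.leibniz, Derivation.leibniz_pow, pderiv_X, Pi.single_apply]
lemma dxNY (d : ℕ) (j : Fin d) : pderiv (Sum.inl j) (NY d) = 0 := by
  simp [NY, Derivation.leibniz, Derivation.leibniz_pow, pderiv_X, Pi.single_apply]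
lemma dyNY (d : ℕ) (j : Fin d) : pderiv (Sum.inr j) (NY d) = 2 * X (Sum.inr j) := by
  simp [NY, Derivation.leibniz, Derivation.leibniz_pow, pderiv_X, Pi.single_apply]
lemma dxS (d : ℕ) (j : Fin d) : pderiv (Sum.inl j) (S d) = 2 * X (Sum.inl j) * NY d := by
  simp [S, Derivation.leibniz, dxNX, dxNY]; ring
lemma dyS (d : ℕ) (j : Fin d) : pderiv (Sum.inr j) (S d) = 2 * X (Sum.inr j) * NX d := by
  simp [S, Derivation.leibniz, dyNX, dyNY]; ring

/-- weighted directional derivation -/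
def W (d : ℕ) (v w : Fin d → Fin d ⊕ Fin d) : Derivation ℝ (R d) (R d) :=
  ∑ j, (X (v j) : R d) • pderiv (w j)
lemma W_apply (d : ℕ) (v w : Fin d → Fin d ⊕ Fin d) (p : R d) :
    W d v w p = ∑ j, X (v j) * pderiv (w j) p := by
  unfold W
  have h := map_sum (Derivation.coeFnAddMonoidHom (R := ℝ) (A := R d) (M := R d))
    (fun j => (X (v j) : R d) • pderiv (w j)) Finset.univ
  have h := congrFun h p
  rw [Finset.sum_apply] at h
  exact h
lemma ydx (d : ℕ) (hd : 2 ≤ d) (n : ℕ) :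
    ∑ j, X (Sum.inr j) * pderiv (Sum.inl j) (Z d (n+1)) = (n+1) * NY d * Z d n := by
  rw [← W_apply d Sum.inr Sum.inl]
  apply D_lower d hd
  · rw [W_apply]; simp [dxT, NY, sq]
  · rw [W_apply]; simp only [dxS, T, Finset.mul_sum, Finset.sum_mul]
    exact Finset.sum_congr rfl fun _ _ => by ring
lemma xdy (d : ℕ) (hd : 2 ≤ d) (n : ℕ) :
    ∑ j, X (Sum.inl j) * pderiv (Sum.inr j) (Z d (n+1)) = (n+1) * NX d * Z d n := by
  rw [← W_apply d Sum.inl Sum.inr]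
  apply D_lower d hd
  · rw [W_apply]; simp [dyT, NX, sq]
  · rw [W_apply]; simp only [dyS, T, Finset.mul_sum, Finset.sum_mul]
    exact Finset.sum_congr rfl fun _ _ => by ring
lemma xdx (d : ℕ) (hd : 2 ≤ d) (n : ℕ) :
    ∑ j, X (Sum.inl j) * pderiv (Sum.inl j) (Z d n) = n * Z d n := by
  rw [← W_apply d Sum.inl Sum.inl]
  apply D_euler d hd
  · rw [W_apply]; simp only [dxT]; rfl
  · rw [W_apply]; simp only [dxS]; simp only [S, NX, Finset.mul_sum, Finset.sum_mul]
    exact Finset.sum_congr rfl fun _ _ => by ring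
lemma ydy (d : ℕ) (hd : 2 ≤ d) (n : ℕ) :
    ∑ j, X (Sum.inr j) * pderiv (Sum.inr j) (Z d n) = n * Z d n := by
  rw [← W_apply d Sum.inr Sum.inr]
  apply D_euler d hd
  · rw [W_apply]; simp only [dyT]; simp only [T, mul_comm]
  · rw [W_apply]; simp only [dyS]; rw [S]; rw [NY]
    simp only [Finset.mul_sum, Finset.sum_mul]
    exact Finset.sum_congr rfl fun _ _ => by ring

def L (d : ℕ) : R d →ₗ[ℝ] R d :=
  ∑ j, (pderiv (Sum.inl j) : Derivation ℝ (R d) (R d)).toLinearMap ∘ₗ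
    (pderiv (Sum.inr j) : Derivation ℝ (R d) (R d)).toLinearMap
lemma L_apply (d : ℕ) (p : R d) :
    L d p = ∑ j, pderiv (Sum.inl j) (pderiv (Sum.inr j) p) := by
  simp [L]
lemma L_T (d : ℕ) (p : R d) : L d (T d * p) = d * p
    + ∑ j, X (Sum.inl j) * pderiv (Sum.inl j) p
    + ∑ j, X (Sum.inr j) * pderiv (Sum.inr j) p + T d * L d p := by
  simp only [L_apply, Derivation.leibniz, dxT, dyT, map_add, smul_eq_mul, pderiv_X_self]
  have hd : (d : R d) * p = ∑ j : Fin d, p := by simp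
  rw [hd]
  simp only [Finset.mul_sum, ← Finset.sum_add_distrib]
  exact Finset.sum_congr rfl fun _ _ => by ring
lemma L_S (d : ℕ) (p : R d) : L d (S d * p) = 4 * T d * p
    + 2 * NY d * ∑ j, X (Sum.inl j) * pderiv (Sum.inr j) p
    + 2 * NX d * ∑ j, X (Sum.inr j) * pderiv (Sum.inl j) p + S d * L d p := by
  have h (j : Fin d) : pderiv (Sum.inl j) (X (Sum.inr j) : R d) = 0 := by
    simp [pderiv_X]
  have h2 (j : Fin d) : pderiv (Sum.inl j) (2 : R d) = 0 := by
    simpa using (pderiv (R := ℝ) (Sum.inl j : Fin d ⊕ Fin d)).map_natCast 2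
  simp only [L_apply, Derivation.leibniz, dxS, dyS, map_add, smul_eq_mul, h, h2, dxNX]
  rw [T]
  simp only [Finset.mul_sum, Finset.sum_mul, ← Finset.sum_add_distrib]
  exact Finset.sum_congr rfl fun _ _ => by ring

lemma L_cast (d m : ℕ) (p : R d) : L d (m * p) = m * L d p := by
  rw [← nsmul_eq_mul, map_nsmul, nsmul_eq_mul]

lemma L_Z (d : ℕ) (hd : 2 ≤ d) (n : ℕ) :
    L d (Z d (n+1)) = (n+1) * (d + 2 * n) * Z d n := by
  have hL0 : L d 1 = 0 := by simp [L_apply]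
  have hL1 : L d (Z d 1) = d := by
    have := L_T d 1
    simpa [hL0, Z] using this
  have rec' : ∀ n : ℕ, ((n : R d) + d - 1) * L d (Z d (n+2)) =
      (2 * n + d) * L d (T d * Z d (n+1)) - (n+1) * L d (S d * Z d n) := by
    intro n
    have h := Zrec d hd n
    have e1 : ((n : R d) + d - 1) = ((n + d - 1 : ℕ) : R d) := by
      rw [Nat.cast_sub (by omega)]; push_cast; ring
    have e2 : (2 * n + d : R d) = ((2 * n + d : ℕ) : R d) := by push_cast; ring
    have e3 : (n + 1 : R d) = ((n + 1 : ℕ) : R d) := by push_cast; ring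
    rw [e1, e2, e3, mul_assoc, mul_assoc] at h
    have h := congrArg (L d) h
    rw [map_sub, L_cast, L_cast, L_cast] at h
    rw [e1, e2, e3, h]
  have key : ∀ n, L d (Z d (n+1)) = (n+1) * (d + 2 * n) * Z d n ∧
      L d (Z d (n+2)) = (n+2) * (d + 2 * n + 2) * Z d (n+1) := by
    intro n
    induction n with
    | zero =>
      refine ⟨by simpa [Z] using hL1, ?_⟩
      apply mul_left_cancel₀ (ne0 d hd 0)
      rw [rec', L_T, L_S, xdx d hd, ydy d hd, zero_add, hL1]
      simp [Z, hL0]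
      ring
    | succ n ih =>
      refine ⟨by have := ih.2; push_cast; rw [this]; ring, ?_⟩
      apply mul_left_cancel₀ (ne0 d hd (n+1))
      rw [rec', L_T, L_S, xdx d hd, ydy d hd, xdy d hd, ydx d hd, ih.1, ih.2]
      have r := Zrec d hd n
      push_cast
      simp only [show n + 1 + 1 = n + 2 by ring] at r ⊢
      have hs : S d = NX d * NY d := rfl
      rw [hs] at r ⊢
      linear_combination (-((n:R d) + 2) * (2 * n + d + 4)) * r
  exact (key n).1


lemma dx_inr (d : ℕ) (j : Fin d) (p : MvPolynomial (Fin d) ℝ) :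
    pderiv (Sum.inl j : Fin d ⊕ Fin d) (rename Sum.inr p) = 0 := by
  induction p using MvPolynomial.induction_on with
  | C a => simp
  | add p q hp hq => simp [hp, hq]
  | mul_X p i hp => simp [hp, Derivation.leibniz, pderiv_X]
lemma dy_inl (d : ℕ) (j : Fin d) (p : MvPolynomial (Fin d) ℝ) :
    pderiv (Sum.inr j : Fin d ⊕ Fin d) (rename Sum.inl p) = 0 := by
  induction p using MvPolynomial.induction_on with
  | C a => simp
  | add p q hp hq => simp [hp, hq]
  | mul_X p i hp => simp [hp, Derivation.leibniz, pderiv_X]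

lemma feat (d : ℕ) (hd : 2 ≤ d) (n : ℕ) :
    ∃ (ι : Type) (_ : Fintype ι) (φ : ι → MvPolynomial (Fin d) ℝ),
      Z d n = ∑ a, rename Sum.inl (φ a) * rename Sum.inr (φ a) := by
  induction n with
  | zero => exact ⟨Unit, inferInstance, fun _ => 1, by simp [Z]⟩
  | succ n ih =>
  cases n with
  | zero => exact ⟨Fin d, inferInstance, fun j => X j, by simp [Z, T]⟩
  | succ n =>
    obtain ⟨ι, _, φ, h⟩ := ih
    have hd' : (2:ℝ) ≤ d := by exact_mod_cast hd
    have hn' : (0:ℝ) ≤ n := by positivity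
    have hw : 0 ≤ ((d:ℝ) + 2 * n) / (n + d - 1) := by
      apply div_nonneg <;> linarith
    set w : ℝ := ((d:ℝ) + 2 * n) / (n + d - 1) with hwdef
    set κ : ℝ := 1 / ((d:ℝ) + 2 * n) with hκ
    refine ⟨Fin d × ι, inferInstance, fun p =>
      C (Real.sqrt w) * (X p.1 * φ p.2 - C κ * (∑ i, X i ^ 2) * pderiv p.1 (φ p.2)), ?_⟩
    have hy (j : Fin d) : pderiv (Sum.inr j) (Z d (n+1)) =
        ∑ a, rename Sum.inl (φ a) * rename Sum.inr (pderiv j (φ a)) := by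
      rw [h, map_sum]
      refine Finset.sum_congr rfl fun a _ => ?_
      rw [Derivation.leibniz, dy_inl, pderiv_rename Sum.inr_injective]
      simp
    have hx (j : Fin d) : pderiv (Sum.inl j) (Z d (n+1)) =
        ∑ a, rename Sum.inl (pderiv j (φ a)) * rename Sum.inr (φ a) := by
      rw [h, map_sum]
      refine Finset.sum_congr rfl fun a _ => ?_
      rw [Derivation.leibniz, dx_inr, pderiv_rename Sum.inl_injective]
      simp [mul_comm]
    have hxy (j : Fin d) : pderiv (Sum.inl j) (pderiv (Sum.inr j) (Z d (n+1))) =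
        ∑ a, rename Sum.inl (pderiv j (φ a)) * rename Sum.inr (pderiv j (φ a)) := by
      rw [hy, map_sum]
      refine Finset.sum_congr rfl fun a _ => ?_
      rw [Derivation.leibniz, dx_inr, pderiv_rename Sum.inl_injective]
      simp [mul_comm]
    have hws : (C (Real.sqrt w) : R d) * C (Real.sqrt w) = C w := by
      rw [← C_mul, Real.mul_self_sqrt hw]
    have hNX : rename (R := ℝ) Sum.inl (∑ i : Fin d, X i ^ 2) = NX d := by simp [NX]
    have hNY : rename (R := ℝ) Sum.inr (∑ i : Fin d, X i ^ 2) = NY d := by simp [NY]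
    have main : ∑ p : Fin d × ι,
        rename Sum.inl (C (Real.sqrt w) * (X p.1 * φ p.2 - C κ * (∑ i, X i ^ 2) * pderiv p.1 (φ p.2)))
        * rename Sum.inr (C (Real.sqrt w) * (X p.1 * φ p.2 - C κ * (∑ i, X i ^ 2) * pderiv p.1 (φ p.2)))
        = C w * (T d * Z d (n+1)
          - C κ * NY d * ∑ j, X (Sum.inl j) * pderiv (Sum.inr j) (Z d (n+1))
          - C κ * NX d * ∑ j, X (Sum.inr j) * pderiv (Sum.inl j) (Z d (n+1))
          + C κ ^ 2 * S d * L d (Z d (n+1))) := by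
      rw [Fintype.sum_prod_type, L_apply, T]
      simp only [map_mul, map_sub, hNX, hNY, rename_C, rename_X, S]
      simp only [Finset.sum_mul, Finset.mul_sum, ← Finset.sum_add_distrib, ← Finset.sum_sub_distrib]
      simp only [hxy]
      simp only [hx, hy]
      rw [h]
      simp only [Finset.mul_sum, ← Finset.sum_add_distrib, ← Finset.sum_sub_distrib]
      refine Finset.sum_congr rfl fun j _ => Finset.sum_congr rfl fun a _ => ?_
      rw [← hws]
      ring
    rw [main, xdy d hd, ydx d hd, L_Z d hd]
    apply mul_left_cancel₀ (ne0 d hd n)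
    have hk : (C κ : R d) * ((d : R d) + 2 * (n : R d)) = 1 := by
      have : ((d : R d) + 2 * (n : R d)) = C ((d:ℝ) + 2 * n) := by
        rw [C_add, C_mul, map_natCast, map_natCast, map_ofNat C 2]
      rw [this, ← C_mul, hκ, one_div_mul_cancel (by linarith), C_1]
    have hww : ((n : R d) + (d : R d) - 1) * C w = (d : R d) + 2 * (n : R d) := by
      have e1 : ((d : R d) + 2 * (n : R d)) = C ((d:ℝ) + 2 * n) := by
        rw [C_add, C_mul, map_natCast, map_natCast, map_ofNat C 2]
      have e2 : ((n : R d) + (d : R d) - 1) = C ((n:ℝ) + d - 1) := by simp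
      rw [e1, e2, ← C_mul, hwdef, mul_div_cancel₀ _ (by linarith)]
    rw [Zrec d hd, ← mul_assoc, hww, S]
    linear_combination ((n : R d) + 1) * NX d * NY d * Z d n * (1 - C κ * ((d : R d) + 2 * (n : R d))) * hk

theorem Z_eval (d : ℕ) (hd : 2 ≤ d) (Q : ℕ → ℝ → ℝ)
    (hQ0 : ∀ t, Q 0 t = 1)
    (hQ1 : ∀ t, Q 1 t = t)
    (hQ2 : ∀ t, Q 2 t = ((d : ℝ) * t ^ 2 - 1) / ((d : ℝ) - 1))
    (hQrec : ∀ i : ℕ, 2 ≤ i → ∀ t,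
      ((i : ℝ) + (d : ℝ) - 2) * Q (i + 1) t
        = (2 * (i : ℝ) + (d : ℝ) - 2) * t * Q i t - (i : ℝ) * Q (i - 1) t)
    (x y : EuclideanSpace ℝ (Fin d)) (hx : ‖x‖ = 1) (hy : ‖y‖ = 1) (n : ℕ) :
    eval (Sum.elim x y) (Z d n) = Q n (inner ℝ x y) := by
  have hd' : (2:ℝ) ≤ d := by exact_mod_cast hd
  have hT : eval (Sum.elim x y) (T d) = inner ℝ x y := by
    simp [T, PiLp.inner_apply, mul_comm]
  have hS : eval (Sum.elim x y) (S d) = 1 := by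
    have h1 := EuclideanSpace.real_norm_sq_eq x
    have h2 := EuclideanSpace.real_norm_sq_eq y
    simp [S, NX, NY, ← h1, ← h2, hx, hy]
  have hrec (n : ℕ) (t : ℝ) : ((n:ℝ) + d - 1) * Q (n+2) t
      = (2 * n + d) * t * Q (n+1) t - (n + 1) * Q n t := by
    cases n with
    | zero =>
      rw [zero_add, hQ2, zero_add, hQ1, hQ0]
      have : (d:ℝ) - 1 ≠ 0 := by linarith
      push_cast
      field_simp
      ring
    | succ n =>
      have := hQrec (n+2) (by omega) t
      simp only [show n + 2 - 1 = n + 1 by omega, show n + 2 + 1 = n + 3 by omega] at this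
      push_cast at this ⊢
      linear_combination this
  have key : ∀ n, eval (Sum.elim x y) (Z d n) = Q n (inner ℝ x y) ∧
      eval (Sum.elim x y) (Z d (n+1)) = Q (n+1) (inner ℝ x y) := by
    intro n
    induction n with
    | zero => simp [Z, hT, hQ0, hQ1]
    | succ n ih =>
      refine ⟨ih.2, ?_⟩
      have h := congrArg (eval (Sum.elim x y)) (Zrec d hd n)
      simp [ih.1, ih.2, hT, hS] at h
      have h0 : (n:ℝ) + d - 1 ≠ 0 := by
        have : (0:ℝ) ≤ n := by positivity
        linarith
      apply mul_left_cancel₀ h0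
      rw [hrec]
      exact h
  exact (key n).1

theorem Q_nonneg (d : ℕ) (hd : 2 ≤ d) (Q : ℕ → ℝ → ℝ)
    (hQ0 : ∀ t, Q 0 t = 1)
    (hQ1 : ∀ t, Q 1 t = t)
    (hQ2 : ∀ t, Q 2 t = ((d : ℝ) * t ^ 2 - 1) / ((d : ℝ) - 1))
    (hQrec : ∀ i : ℕ, 2 ≤ i → ∀ t,
      ((i : ℝ) + (d : ℝ) - 2) * Q (i + 1) t
        = (2 * (i : ℝ) + (d : ℝ) - 2) * t * Q i t - (i : ℝ) * Q (i - 1) t)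
    (A : Finset (EuclideanSpace ℝ (Fin d))) (hA : ∀ x ∈ A, ‖x‖ = 1) (n : ℕ) :
    0 ≤ ∑ x ∈ A, ∑ y ∈ A, Q n (inner ℝ x y) := by
  obtain ⟨ι, _, φ, h⟩ := feat d hd n
  have : ∑ x ∈ A, ∑ y ∈ A, Q n (inner ℝ x y) = ∑ a, (∑ x ∈ A, eval x (φ a)) ^ 2 := by
    simp only [sq, Finset.sum_mul_sum]
    rw [Finset.sum_comm]
    rw [Finset.sum_comm (s := Finset.univ)]
    rw [Finset.sum_comm]
    refine Finset.sum_congr rfl fun x hx => ?_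
    rw [Finset.sum_comm]
    refine Finset.sum_congr rfl fun y hy => ?_
    rw [← Z_eval d hd Q hQ0 hQ1 hQ2 hQrec x y (hA x hx) (hA y hy), h, map_sum]
    refine Finset.sum_congr rfl fun a _ => ?_
    rw [map_mul, eval_rename, eval_rename]
    rfl
  rw [this]
  exact Finset.sum_nonneg fun _ _ => sq_nonneg _
end LPB
end

open scoped RealInnerProductSpace Classical

/-- The linear programming bound (basic inequality): if `f = f_0 Q_0 + … + f_k Q_k` is a
nonnegative combination of the Gegenbauer polynomials for dimension `d` with `f_0 > 0`,
then every finite set `X` of unit vectors in `ℝ^d` satisfies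
`|X| f(1) + ∑_{x ≠ y ∈ X} f(⟨x,y⟩) ≥ |X|² f_0`. -/
theorem linear_programming_inequality (d : ℕ) (hd : 2 ≤ d)
    (Q : ℕ → ℝ → ℝ)
    (hQ0 : ∀ t, Q 0 t = 1)
    (hQ1 : ∀ t, Q 1 t = t)
    (hQ2 : ∀ t, Q 2 t = ((d : ℝ) * t ^ 2 - 1) / ((d : ℝ) - 1))
    (hQrec : ∀ i : ℕ, 2 ≤ i → ∀ t,
      ((i : ℝ) + (d : ℝ) - 2) * Q (i + 1) t
        = (2 * (i : ℝ) + (d : ℝ) - 2) * t * Q i t - (i : ℝ) * Q (i - 1) t)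
    (k : ℕ) (hk : 1 ≤ k)
    (c : ℕ → ℝ) (hc0 : 0 < c 0) (hc : ∀ i, 1 ≤ i → i ≤ k → 0 ≤ c i)
    (f : ℝ → ℝ) (hf : ∀ t, f t = ∑ i ∈ Finset.range (k + 1), c i * Q i t)
    (X : Finset (EuclideanSpace ℝ (Fin d)))
    (hX : ∀ x ∈ X, ‖x‖ = 1) :
    (X.card : ℝ) ^ 2 * c 0 ≤
      (X.card : ℝ) * f 1 + ∑ p ∈ X.offDiag, f ⟪p.1, p.2⟫ := by
  have hf0 : ∑ p ∈ X.offDiag, f ⟪p.1, p.2⟫ + (X.card : ℝ) * f 1 = ∑ x ∈ X, ∑ y ∈ X, f ⟪x, y⟫ := by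
    rw [← Finset.sum_product', ← Finset.diag_union_offDiag,
      Finset.sum_union (Finset.disjoint_diag_offDiag X), Finset.sum_diag, add_comm]
    congr 1
    rw [← nsmul_eq_mul, ← Finset.sum_const]
    refine Finset.sum_congr rfl fun x hx => ?_
    rw [real_inner_self_eq_norm_sq, hX x hx]
    norm_num
  rw [add_comm, hf0]
  have h1 : ∑ x ∈ X, ∑ y ∈ X, f ⟪x, y⟫ =
      ∑ i ∈ Finset.range (k + 1), c i * ∑ x ∈ X, ∑ y ∈ X, Q i ⟪x, y⟫ := by
    simp only [hf, Finset.mul_sum]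
    rw [Finset.sum_comm (s := Finset.range (k + 1))]
    refine Finset.sum_congr rfl fun x _ => ?_
    rw [Finset.sum_comm]
  rw [h1, Finset.sum_range_succ']
  have h2 : 0 ≤ ∑ i ∈ Finset.range k, c (i + 1) * ∑ x ∈ X, ∑ y ∈ X, Q (i + 1) ⟪x, y⟫ := by
    refine Finset.sum_nonneg fun i hi => mul_nonneg (hc _ (by omega) ?_)
      (LPB.Q_nonneg d hd Q hQ0 hQ1 hQ2 hQrec X hX _)
    have := Finset.mem_range.mp hi
    omega
  have h3 : ∑ x ∈ X, ∑ y ∈ X, Q 0 ⟪x, y⟫ = (X.card : ℝ) ^ 2 := by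
    simp [hQ0, sq]
  rw [h3]
  linarith
end

section
/- Let n ≥ 2. If Y is a finite set of unit vectors in ℝⁿ such that ⟨x, y⟩ < 1/(2n² − n) for all distinct x, y ∈ Y, then |Y| ≤ 2n. -/
open scoped RealInnerProductSpace

lemma sum_sq_lower (n : ℕ) (Y : Finset (EuclideanSpace ℝ (Fin n)))
    (hY : ∀ y ∈ Y, ‖y‖ = 1) :
    (Y.card : ℝ) ^ 2 ≤ n * ∑ x ∈ Y, ∑ y ∈ Y, ⟪x, y⟫ ^ 2 := by
  have h1 : ∑ x ∈ Y, ∑ y ∈ Y, ⟪x, y⟫ ^ 2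
      = ∑ i : Fin n, ∑ j : Fin n, (∑ x ∈ Y, x i * x j) ^ 2 := by
    have e1 : ∀ x y : EuclideanSpace ℝ (Fin n),
        ⟪x, y⟫ ^ 2 = ∑ i : Fin n, ∑ j : Fin n, (x i * x j) * (y i * y j) := by
      intro x y
      rw [PiLp.inner_apply, sq, Finset.sum_mul_sum]
      refine Finset.sum_congr rfl fun i _ => Finset.sum_congr rfl fun j _ => ?_
      simp
      ring
    simp_rw [e1, sq, Finset.sum_mul_sum]
    calc _ = ∑ x ∈ Y, ∑ i : Fin n, ∑ y ∈ Y, ∑ j : Fin n, (x i * x j) * (y i * y j) :=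
          Finset.sum_congr rfl fun x _ => Finset.sum_comm
      _ = ∑ i : Fin n, ∑ x ∈ Y, ∑ y ∈ Y, ∑ j : Fin n, (x i * x j) * (y i * y j) :=
          Finset.sum_comm
      _ = ∑ i : Fin n, ∑ x ∈ Y, ∑ j : Fin n, ∑ y ∈ Y, (x i * x j) * (y i * y j) :=
          Finset.sum_congr rfl fun i _ => Finset.sum_congr rfl fun x _ => Finset.sum_comm
      _ = _ := Finset.sum_congr rfl fun i _ => Finset.sum_comm
  have h2 : ∑ i : Fin n, (∑ x ∈ Y, x i * x i) ^ 2
      ≤ ∑ i : Fin n, ∑ j : Fin n, (∑ x ∈ Y, x i * x j) ^ 2 := by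
    refine Finset.sum_le_sum fun i _ => ?_
    exact Finset.single_le_sum (f := fun j => (∑ x ∈ Y, x i * x j) ^ 2)
      (fun j _ => sq_nonneg _) (Finset.mem_univ i)
  have h3 : ∑ i : Fin n, ∑ x ∈ Y, x i * x i = Y.card := by
    rw [Finset.sum_comm]
    have : ∀ x ∈ Y, ∑ i : Fin n, x i * x i = 1 := by
      intro x hx
      have h := EuclideanSpace.norm_sq_eq x
      rw [hY x hx] at h
      simp only [Real.norm_eq_abs, sq_abs] at h
      simp only [← sq]
      linarith
    rw [Finset.sum_congr rfl this]
    simp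
  have h4 := sq_sum_le_card_mul_sum_sq (s := (Finset.univ : Finset (Fin n)))
    (f := fun i => ∑ x ∈ Y, x i * x i)
  rw [h3] at h4
  simp only [Finset.card_univ, Fintype.card_fin] at h4
  rw [h1]
  exact h4.trans (mul_le_mul_of_nonneg_left h2 (Nat.cast_nonneg n))

/-- If all pairwise inner products of a finite set of unit vectors in `ℝⁿ` are less
than `1/(2n² - n)`, then the set has at most `2n` elements. -/
theorem almost_cross (n : ℕ) (hn : 2 ≤ n)
    (Y : Finset (EuclideanSpace ℝ (Fin n)))
    (hY : ∀ y ∈ Y, ‖y‖ = 1)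
    (hinner : ∀ x ∈ Y, ∀ y ∈ Y, x ≠ y → ⟪x, y⟫ < 1 / (2 * (n : ℝ) ^ 2 - n)) :
    Y.card ≤ 2 * n := by
  classical
  by_contra hcon
  have hn' : (2 : ℝ) ≤ n := by exact_mod_cast hn
  have hN : (2 * n + 1 : ℝ) ≤ Y.card := by
    have : 2 * n + 1 ≤ Y.card := by omega
    exact_mod_cast this
  have hD : 0 < 2 * (n : ℝ) ^ 2 - n := by nlinarith
  -- a uniform bound
  obtain ⟨a, ha0, ha1, ha⟩ : ∃ a : ℝ, 0 ≤ a ∧ a < 1 / (2 * (n : ℝ) ^ 2 - n) ∧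
      ∀ x ∈ Y, ∀ y ∈ Y, x ≠ y → ⟪x, y⟫ ≤ a := by
    let S : Finset ℝ := insert 0 (Y.offDiag.image fun p => ⟪p.1, p.2⟫)
    have hS : S.Nonempty := Finset.insert_nonempty _ _
    refine ⟨S.max' hS, S.le_max' _ (Finset.mem_insert_self _ _), ?_, ?_⟩
    · rw [Finset.max'_lt_iff]
      intro b hb
      rcases Finset.mem_insert.1 hb with rfl | hb
      · positivity
      · obtain ⟨p, hp, rfl⟩ := Finset.mem_image.1 hb
        obtain ⟨p1, p2, p3⟩ := Finset.mem_offDiag.1 hp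
        exact hinner _ p1 _ p2 p3
    · intro x hx y hy hxy
      exact S.le_max' _ (Finset.mem_insert_of_mem (Finset.mem_image.2
        ⟨(x, y), Finset.mem_offDiag.2 ⟨hx, hy, hxy⟩, rfl⟩))
  rw [lt_div_iff₀ hD] at ha1
  have hsq := sum_sq_lower n Y hY
  have hlin : 0 ≤ ∑ x ∈ Y, ∑ y ∈ Y, ⟪x, y⟫ := by
    have : ∑ x ∈ Y, ∑ y ∈ Y, ⟪x, y⟫ = ⟪∑ x ∈ Y, x, ∑ y ∈ Y, y⟫ := by
      simp_rw [sum_inner, inner_sum]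
    rw [this]
    exact real_inner_self_nonneg
  have hub : ∑ x ∈ Y, ∑ y ∈ Y, (⟪x, y⟫ + 1) * (⟪x, y⟫ - a) ≤ Y.card * (2 * (1 - a)) := by
    have : ∀ x ∈ Y, ∑ y ∈ Y, (⟪x, y⟫ + 1) * (⟪x, y⟫ - a) ≤ 2 * (1 - a) := by
      intro x hx
      have h : ∀ y ∈ Y, (⟪x, y⟫ + 1) * (⟪x, y⟫ - a) ≤ if x = y then 2 * (1 - a) else 0 := by
        intro y hy
        split_ifs with hxy
        · subst hxy
          rw [real_inner_self_eq_norm_sq, hY x hx]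
          linarith
        · have h1 := ha x hx y hy hxy
          have h2 := abs_real_inner_le_norm x y
          rw [hY x hx, hY y hy] at h2
          have h3 := (abs_le.1 h2).1
          exact mul_nonpos_of_nonneg_of_nonpos (by linarith) (by linarith)
      refine (Finset.sum_le_sum h).trans ?_
      simp [hx]
    refine (Finset.sum_le_sum this).trans ?_
    simp
  have hexp : ∑ x ∈ Y, ∑ y ∈ Y, (⟪x, y⟫ + 1) * (⟪x, y⟫ - a)
      = ∑ x ∈ Y, ∑ y ∈ Y, ⟪x, y⟫ ^ 2 + (1 - a) * ∑ x ∈ Y, ∑ y ∈ Y, ⟪x, y⟫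
        - a * (Y.card : ℝ) ^ 2 := by
    have : ∀ x y : EuclideanSpace ℝ (Fin n), (⟪x, y⟫ + 1) * (⟪x, y⟫ - a)
      = ⟪x, y⟫ ^ 2 + (1 - a) * ⟪x, y⟫ - a := fun x y => by ring
    simp_rw [this, Finset.sum_sub_distrib, Finset.sum_add_distrib, ← Finset.mul_sum]
    simp
    ring
  rw [hexp] at hub
  generalize ∑ x ∈ Y, ∑ y ∈ Y, ⟪x, y⟫ ^ 2 = A at *
  generalize ∑ x ∈ Y, ∑ y ∈ Y, ⟪x, y⟫ = B at *
  generalize (Y.card : ℝ) = N at *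
  generalize (n : ℝ) = m at *
  have hma : m * a < 1 := by nlinarith
  have ha2 : a ≤ 1 := by nlinarith
  have hB : 0 ≤ (1 - a) * B := mul_nonneg (by linarith) hlin
  have h5 : m * A ≤ m * (N * (2 * (1 - a)) + a * N ^ 2) :=
    mul_le_mul_of_nonneg_left (by linarith) (by linarith)
  have h6 : N * (N * (1 - m * a)) ≤ N * (2 * m * (1 - a)) := by nlinarith
  have h7 := le_of_mul_le_mul_left h6 (by linarith)
  have h8 : (2 * m + 1) * (1 - m * a) ≤ N * (1 - m * a) :=
    mul_le_mul_of_nonneg_right hN (by linarith)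
  nlinarith
end

section
/- Let d ≥ 3, let t ∈ (0,1), and let X ⊂ S^{d−1} be a spherically convex set (the intersection of S^{d−1} with a convex cone containing a half-line) such that for some v ∈ X one has ⟨u, v⟩ ≥ t for all u ∈ X. Let X' = {t·u/⟨u,v⟩ : u ∈ X} be the radial projection of X into the hyperplane {y ∈ ℝ^d : ⟨y, v⟩ = t}. Then the (d−1)-dimensional Hausdorff measures satisfy H^{d−1}(X) ≥ H^{d−1}(X'). -/
open scoped RealInnerProductSpace
open MeasureTheory

/-- Radial projection of a spherically convex set to a hyperplane decreases
`(d-1)`-dimensional Hausdorff measure: if `X = C ∩ S^{d-1}` for a closed convex cone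
`C` containing a half-line, `v ∈ X`, and `⟨u,v⟩ ≥ t` for all `u ∈ X`, then the radial
projection `X'` of `X` to the hyperplane `{y : ⟨y,v⟩ = t}` satisfies
`H^{d-1}(X) ≥ H^{d-1}(X')`. -/
theorem radial_projection_measure (d : ℕ) (hd : 3 ≤ d)
    (t : ℝ) (ht : t ∈ Set.Ioo (0 : ℝ) 1)
    (C : Set (EuclideanSpace ℝ (Fin d)))
    (hCclosed : IsClosed C)
    (hCcone : ∀ x ∈ C, ∀ y ∈ C, ∀ α β : ℝ, 0 ≤ α → 0 ≤ β → α • x + β • y ∈ C)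
    (hChalf : ∃ u : EuclideanSpace ℝ (Fin d), u ≠ 0 ∧ ∀ s : ℝ, 0 ≤ s → s • u ∈ C)
    (X : Set (EuclideanSpace ℝ (Fin d)))
    (hX : X = C ∩ Metric.sphere (0 : EuclideanSpace ℝ (Fin d)) 1)
    (v : EuclideanSpace ℝ (Fin d)) (hv : v ∈ X)
    (hvt : ∀ u ∈ X, t ≤ ⟪u, v⟫) :
    μH[(d : ℝ) - 1] ((fun u => (t / ⟪u, v⟫) • u) '' X) ≤ μH[(d : ℝ) - 1] X := by
  subst hX
  obtain ⟨ht0, ht1⟩ := ht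
  have hv1 : ‖v‖ = 1 := by simpa using hv.2
  have hvv : ⟪v, v⟫ = 1 := by rw [real_inner_self_eq_norm_sq, hv1]; norm_num
  -- orthogonal projection onto the hyperplane
  let f : EuclideanSpace ℝ (Fin d) → EuclideanSpace ℝ (Fin d) :=
    fun w => w - ⟪w, v⟫ • v + t • v
  have hf : LipschitzWith 1 f := by
    refine LipschitzWith.of_dist_le_mul fun x y => ?_
    have h1 : f x - f y = (x - y) - ⟪x - y, v⟫ • v := by
      simp only [f, inner_sub_left, sub_smul]
      abel
    rw [dist_eq_norm, dist_eq_norm, h1, NNReal.coe_one, one_mul]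
    refine le_of_sq_le_sq ?_ (norm_nonneg _)
    rw [norm_sub_sq_real, inner_smul_right, norm_smul, hv1, mul_one, Real.norm_eq_abs, sq_abs]
    nlinarith [sq_nonneg ⟪x - y, v⟫]
  have hsub : (fun u => (t / ⟪u, v⟫) • u) '' (C ∩ Metric.sphere 0 1)
      ⊆ f '' (C ∩ Metric.sphere 0 1) := by
    rintro _ ⟨u, hu, rfl⟩
    have hu1 : ‖u‖ = 1 := by simpa using hu.2
    have hct := hvt u hu
    have hc1 : ⟪u, v⟫ ≤ 1 := by
      have := real_inner_le_norm u v
      rwa [hu1, hv1, one_mul] at this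
    simp only
    generalize hc : ⟪u, v⟫ = c at *
    have hc0 : 0 < c := lt_of_lt_of_le ht0 hct
    obtain ⟨r, hr⟩ : ∃ r, r = t / c := ⟨_, rfl⟩
    have hrc : r * c = t := by rw [hr]; field_simp
    have hr0 : 0 ≤ r := by rw [hr]; positivity
    have hr1 : r ≤ 1 := by rw [hr]; exact (div_le_one hc0).2 hct
    rw [← hr]
    have hq : t ^ 2 ≤ 1 - r ^ 2 * (1 - c ^ 2) := by
      have : r ^ 2 ≤ 1 := by nlinarith
      have h2 : r ^ 2 * c ^ 2 = t ^ 2 := by rw [← hrc]; ring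
      nlinarith
    obtain ⟨s, hs⟩ : ∃ s, s = Real.sqrt (1 - r ^ 2 * (1 - c ^ 2)) := ⟨_, rfl⟩
    have hst : t ≤ s := by rw [hs]; exact Real.le_sqrt_of_sq_le hq
    have hs2 : s ^ 2 = 1 - r ^ 2 * (1 - c ^ 2) := by
      rw [hs]; exact Real.sq_sqrt ((sq_nonneg t).trans hq)
    refine ⟨r • u + (s - t) • v, ⟨hCcone u hu.1 v hv.1 _ _ hr0 (sub_nonneg.2 hst), ?_⟩, ?_⟩
    · have h3 : ‖r • u + (s - t) • v‖ ^ 2 = 1 := by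
        rw [norm_add_sq_real, inner_smul_left, inner_smul_right, norm_smul, norm_smul, hu1, hv1,
          hc, mul_one, mul_one, Real.norm_eq_abs, Real.norm_eq_abs, sq_abs, sq_abs]
        simp only [conj_trivial]
        rw [← hrc] at *
        nlinarith
      have h4 : ‖r • u + (s - t) • v‖ = 1 := by
        exact (pow_eq_one_iff_of_nonneg (norm_nonneg _) two_ne_zero).1 h3
      simpa using h4
    · have h5 : ⟪r • u + (s - t) • v, v⟫ = s := by
        rw [inner_add_left, inner_smul_left, inner_smul_left, hc, hvv]
        simp only [conj_trivial]
        linarith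
      simp only [f, h5]
      rw [sub_smul]
      abel
  have hd' : (0 : ℝ) ≤ (d : ℝ) - 1 := by
    have : (3 : ℝ) ≤ d := by exact_mod_cast hd
    linarith
  refine (measure_mono hsub).trans ?_
  have h := hf.hausdorffMeasure_image_le hd' (C ∩ Metric.sphere 0 1)
  simpa using h
end
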